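/- arXiv:1201.1073 — 4 statements merged into one kernel-verified Lean document; each statement's English description precedes it below -/
import Mathlib

section
/- Let Ω be a non-empty closed discrete subset of ℂ which is stable under addition (ω₁, ω₂ ∈ Ω implies ω₁ + ω₂ ∈ Ω). Then for any two Ω-continuable germs φ̂, ψ̂ ∈ R̂_Ω, the convolution product φ̂ * ψ̂ is again Ω-continuable, i.e. φ̂ * ψ̂ ∈ R̂_Ω. -/
open Set Metric Filter Topology intervalIntegral

noncomputable section

/-- A path `γ : [a,b] → ℂ` which is piecewise `C¹`. -/
def PiecewiseC1On (γ : ℝ → ℂ) (a b : ℝ) : Prop :=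
  ContinuousOn γ (Set.Icc a b) ∧
  ∃ (n : ℕ) (u : ℕ → ℝ), u 0 = a ∧ u n = b ∧ (∀ i < n, u i ≤ u (i + 1)) ∧
    ∀ i < n, ContDiffOn ℝ 1 γ (Set.Icc (u i) (u (i + 1)))

/-- The germ at `γ a` of the function `f` admits analytic continuation along
`γ` restricted to `[a,b]`, resulting in the germ of `g` at `γ b`.  This is the
usual definition via a family of analytic elements `(F t, r t)` along the path
which are locally compatible. -/
def ContAlong (f : ℂ → ℂ) (γ : ℝ → ℂ) (a b : ℝ) (g : ℂ → ℂ) : Prop :=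
  ∃ (F : ℝ → ℂ → ℂ) (r : ℝ → ℝ),
    (∀ t ∈ Set.Icc a b, 0 < r t ∧ AnalyticOnNhd ℂ (F t) (Metric.ball (γ t) (r t))) ∧
    (∀ t ∈ Set.Icc a b, ∃ ε > 0, ∀ t' ∈ Set.Icc a b, |t' - t| < ε →
      Set.EqOn (F t) (F t') (Metric.ball (γ t) (r t) ∩ Metric.ball (γ t') (r t'))) ∧
    (∀ᶠ z in 𝓝 (γ a), F a z = f z) ∧
    (∀ᶠ z in 𝓝 (γ b), F b z = g z)

/-- The germ of `f` at `γ a` admits analytic continuation along `γ|[a,b]`. -/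
def ContinuableAlong (f : ℂ → ℂ) (γ : ℝ → ℂ) (a b : ℝ) : Prop :=
  ∃ g, ContAlong f γ a b g

/-- `f` is an `Ω`-continuable holomorphic germ at `0`: it is holomorphic on some
disc `D_R` with `D_R∖{0}` disjoint from `Ω`, and admits analytic continuation
along every (piecewise `C¹`) path of `ℂ∖Ω` originating from any point of `D_R∖{0}`. -/
def OmegaCont (Ω : Set ℂ) (f : ℂ → ℂ) : Prop :=
  ∃ R > 0, AnalyticOnNhd ℂ f (Metric.ball 0 R) ∧
    (∀ ζ ∈ Metric.ball (0:ℂ) R, ζ ≠ 0 → ζ ∉ Ω) ∧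
    ∀ γ : ℝ → ℂ, PiecewiseC1On γ 0 1 → γ 0 ∈ Metric.ball (0:ℂ) R → γ 0 ≠ 0 →
      (∀ t ∈ Set.Icc (0:ℝ) 1, γ t ∉ Ω) → ContinuableAlong f γ 0 1

/-- Convolution of two germs: `(f ⋆ g)(ζ) = ∫₀^ζ f(ξ) g(ζ-ξ) dξ`, the integral
being taken over the line segment from `0` to `ζ`. -/
def conv (f g : ℂ → ℂ) (ζ : ℂ) : ℂ :=
  ζ * ∫ t in (0:ℝ)..1, f ((t : ℂ) * ζ) * g ((1 - (t : ℂ)) * ζ)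

/-- Straight segment integral. -/
def seg (h : ℂ → ℂ) (z w : ℂ) : ℂ :=
  (w - z) * ∫ t in (0:ℝ)..1, h (z + (t : ℂ) * (w - z))

lemma seg_point_mem {s : Set ℂ} (hs : Convex ℝ s) {z w : ℂ} (hz : z ∈ s) (hw : w ∈ s)
    {t : ℝ} (ht : t ∈ Icc (0:ℝ) 1) : z + (t : ℂ) * (w - z) ∈ s := by
  have := hs.add_smul_sub_mem hz hw ht
  simpa [Complex.real_smul] using this

lemma seg_congr {s : Set ℂ} (hs : Convex ℝ s) {h h' : ℂ → ℂ} (heq : EqOn h h' s)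
    {z w : ℂ} (hz : z ∈ s) (hw : w ∈ s) : seg h z w = seg h' z w := by
  unfold seg
  congr 1
  apply intervalIntegral.integral_congr
  intro t ht
  rw [uIcc_of_le zero_le_one] at ht
  exact heq (seg_point_mem hs hz hw ht)

lemma seg_primitive {x : ℂ} {ρ : ℝ} {h : ℂ → ℂ} (hd : AnalyticOnNhd ℂ h (ball x ρ)) :
    ∃ P : ℂ → ℂ, ∀ z ∈ ball x ρ, ∀ w ∈ ball x ρ, seg h z w = P w - P z := by
  obtain ⟨P, hP⟩ := hd.differentiableOn.isExactOn_ball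
  refine ⟨P, fun z hz w hw => ?_⟩
  have key : ∀ t ∈ uIcc (0:ℝ) 1, HasDerivAt (fun t : ℝ => P (z + (t : ℂ) * (w - z)))
      (h (z + (t : ℂ) * (w - z)) * (w - z)) t := by
    intro t ht
    rw [uIcc_of_le zero_le_one] at ht
    have h1 := hP _ (seg_point_mem (convex_ball x ρ) hz hw ht)
    have h2 : HasDerivAt (fun t : ℝ => z + (t : ℂ) * (w - z)) (1 * (w - z)) t :=
      ((Complex.ofRealCLM.hasDerivAt (x := t)).mul_const (w - z)).const_add z
    rw [one_mul] at h2
    exact h1.comp t h2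
  have hc : ContinuousOn (fun t : ℝ => h (z + (t : ℂ) * (w - z))) (uIcc (0:ℝ) 1) := by
    rw [uIcc_of_le zero_le_one]
    refine hd.continuousOn.comp (by fun_prop) ?_
    intro t ht
    exact seg_point_mem (convex_ball x ρ) hz hw ht
  have := integral_eq_sub_of_hasDerivAt key (hc.mul continuousOn_const).intervalIntegrable
  rw [intervalIntegral.integral_mul_const] at this
  unfold seg
  rw [mul_comm, this]
  simp

/-- Analyticity of parametric integrals of products. -/
lemma analytic_param {F G : ℂ → ℂ} {U V W : Set ℂ} (hU : AnalyticOnNhd ℂ F U)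
    (hV : AnalyticOnNhd ℂ G V) (hW : IsOpen W) (α β α' β' : ℝ → ℂ)
    (hα : Continuous α) (hβ : Continuous β) (hα' : Continuous α') (hβ' : Continuous β')
    (h1 : ∀ t ∈ Icc (0:ℝ) 1, ∀ ζ ∈ W, α t + β t * ζ ∈ U)
    (h2 : ∀ t ∈ Icc (0:ℝ) 1, ∀ ζ ∈ W, α' t + β' t * ζ ∈ V) :
    AnalyticOnNhd ℂ (fun ζ => ∫ t in (0:ℝ)..1, F (α t + β t * ζ) * G (α' t + β' t * ζ)) W := by
  apply DifferentiableOn.analyticOnNhd _ hW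
  intro ζ₀ hζ₀
  obtain ⟨ε, hε, hball⟩ := Metric.nhds_basis_closedBall.mem_iff.1 (hW.mem_nhds hζ₀)
  let D : ℂ → ℝ → ℂ := fun ζ t => (deriv F (α t + β t * ζ) * β t) * G (α' t + β' t * ζ) +
    F (α t + β t * ζ) * (deriv G (α' t + β' t * ζ) * β' t)
  have hm1 : MapsTo (fun p : ℝ × ℂ => α p.1 + β p.1 * p.2) (Icc (0:ℝ) 1 ×ˢ closedBall ζ₀ ε) U :=
    fun p hp => h1 _ hp.1 _ (hball hp.2)
  have hm2 : MapsTo (fun p : ℝ × ℂ => α' p.1 + β' p.1 * p.2) (Icc (0:ℝ) 1 ×ˢ closedBall ζ₀ ε) V :=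
    fun p hp => h2 _ hp.1 _ (hball hp.2)
  have c1 : ContinuousOn (fun p : ℝ × ℂ => α p.1 + β p.1 * p.2) (Icc (0:ℝ) 1 ×ˢ closedBall ζ₀ ε) :=
    by fun_prop
  have c2 : ContinuousOn (fun p : ℝ × ℂ => α' p.1 + β' p.1 * p.2) (Icc (0:ℝ) 1 ×ˢ closedBall ζ₀ ε) :=
    by fun_prop
  have cF := hU.continuousOn.comp c1 hm1
  have cG := hV.continuousOn.comp c2 hm2
  have cF' := hU.deriv.continuousOn.comp c1 hm1
  have cG' := hV.deriv.continuousOn.comp c2 hm2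
  have cb : ContinuousOn (fun p : ℝ × ℂ => β p.1) (Icc (0:ℝ) 1 ×ˢ closedBall ζ₀ ε) := by fun_prop
  have cb' : ContinuousOn (fun p : ℝ × ℂ => β' p.1) (Icc (0:ℝ) 1 ×ˢ closedBall ζ₀ ε) := by fun_prop
  have cQ : ContinuousOn (fun p : ℝ × ℂ => F (α p.1 + β p.1 * p.2) * G (α' p.1 + β' p.1 * p.2))
      (Icc (0:ℝ) 1 ×ˢ closedBall ζ₀ ε) := cF.mul cG
  have cD : ContinuousOn (fun p : ℝ × ℂ => D p.2 p.1) (Icc (0:ℝ) 1 ×ˢ closedBall ζ₀ ε) :=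
    ((cF'.mul cb).mul cG).add (cF.mul (cG'.mul cb'))
  obtain ⟨C, hC⟩ := (isCompact_Icc.prod (isCompact_closedBall ζ₀ ε)).exists_bound_of_continuousOn cD
  have slice : ∀ {q : ℝ × ℂ → ℂ}, ContinuousOn q (Icc (0:ℝ) 1 ×ˢ closedBall ζ₀ ε) →
      ∀ ζ ∈ closedBall ζ₀ ε, ContinuousOn (fun t => q (t, ζ)) (uIcc (0:ℝ) 1) := by
    intro q hq ζ hζ
    rw [uIcc_of_le zero_le_one]
    exact hq.comp (by fun_prop) (fun t ht => ⟨ht, hζ⟩)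
  have hsub : uIoc (0:ℝ) 1 ⊆ Icc 0 1 := by
    rw [uIoc_of_le zero_le_one]; exact Ioc_subset_Icc_self
  have := hasDerivAt_integral_of_dominated_loc_of_deriv_le (a := 0) (b := 1)
    (μ := MeasureTheory.volume) (bound := fun _ => C)
    (F := fun ζ t => F (α t + β t * ζ) * G (α' t + β' t * ζ)) (F' := D) (x₀ := ζ₀)
    (closedBall_mem_nhds ζ₀ hε) ?_ ?_ ?_ ?_ ?_ ?_
  · exact this.2.differentiableAt.differentiableWithinAt
  · filter_upwards [closedBall_mem_nhds ζ₀ hε] with ζ hζ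
    exact (intervalIntegrable_iff.1 (slice cQ ζ hζ).intervalIntegrable).aestronglyMeasurable
  · exact (slice cQ ζ₀ (mem_closedBall_self hε.le)).intervalIntegrable
  · exact (intervalIntegrable_iff.1
      (slice cD ζ₀ (mem_closedBall_self hε.le)).intervalIntegrable).aestronglyMeasurable
  · refine Eventually.of_forall fun t ht ζ hζ => hC (t, ζ) ⟨hsub ht, hζ⟩
  · exact intervalIntegrable_const
  · refine Eventually.of_forall fun t ht ζ hζ => ?_
    have a1 : HasDerivAt (fun ζ => α t + β t * ζ) (β t) ζ := by
      simpa using ((hasDerivAt_id ζ).const_mul (β t)).const_add (α t)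
    have a2 : HasDerivAt (fun ζ => α' t + β' t * ζ) (β' t) ζ := by
      simpa using ((hasDerivAt_id ζ).const_mul (β' t)).const_add (α' t)
    have b1 := (hU _ (h1 t (hsub ht) ζ (hball hζ))).differentiableAt.hasDerivAt
    have b2 := (hV _ (h2 t (hsub ht) ζ (hball hζ))).differentiableAt.hasDerivAt
    exact (b1.comp ζ a1).mul (b2.comp ζ a2)

/-- Identity theorem for two balls. -/
lemma eqOn_inter {x y p : ℂ} {r s : ℝ} {F G : ℂ → ℂ} (hF : AnalyticOnNhd ℂ F (ball x r))
    (hG : AnalyticOnNhd ℂ G (ball y s)) (hx : p ∈ ball x r) (hy : p ∈ ball y s)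
    (h : F =ᶠ[𝓝 p] G) : EqOn F G (ball x r ∩ ball y s) :=
  (hF.mono inter_subset_left).eqOn_of_preconnected_of_eventuallyEq (hG.mono inter_subset_right)
    ((convex_ball x r).inter (convex_ball y s)).isPreconnected ⟨hx, hy⟩ h

lemma eventuallyEq_of_inter {x y p : ℂ} {r s : ℝ} {F G : ℂ → ℂ}
    (h : EqOn F G (ball x r ∩ ball y s)) (hx : p ∈ ball x r) (hy : p ∈ ball y s) :
    F =ᶠ[𝓝 p] G :=
  h.eventuallyEq_of_mem ((isOpen_ball.inter isOpen_ball).mem_nhds ⟨hx, hy⟩)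

/-- Forward induction on a compact interval. -/
lemma forward_induction {a b : ℝ} (hab : a ≤ b) (P : ℝ → Prop) (ha : P a)
    (h : ∀ t ∈ Icc a b, ∃ ε > 0, ∀ s ∈ Icc a b, ∀ u ∈ Icc a b, |s - t| < ε → |u - t| < ε →
      s ≤ u → P s → P u) : P b := by
  let S := {t | t ∈ Icc a b ∧ P t}
  have hSa : a ∈ S := ⟨left_mem_Icc.2 hab, ha⟩
  have hbdd : BddAbove S := ⟨b, fun t ht => ht.1.2⟩
  set σ := sSup S
  have hσ : σ ∈ Icc a b := ⟨le_csSup hbdd hSa, csSup_le ⟨a, hSa⟩ fun t ht => ht.1.2⟩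
  obtain ⟨ε, hε, hstep⟩ := h σ hσ
  obtain ⟨s, hs, hs'⟩ := exists_lt_of_lt_csSup ⟨a, hSa⟩ (show σ - ε < σ by linarith)
  have hsσ : s ≤ σ := le_csSup hbdd hs
  have hu : min b (σ + ε / 2) ∈ Icc a b := ⟨le_min hab (by linarith [hσ.1]), min_le_left _ _⟩
  have hge : σ ≤ min b (σ + ε / 2) := le_min hσ.2 (by linarith)
  have hPu := hstep s hs.1 _ hu (by rw [abs_lt]; constructor <;> linarith)
    (by rw [abs_lt]; constructor <;> linarith [min_le_right b (σ + ε / 2)]) (hsσ.trans hge) hs.2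
  have := le_csSup hbdd (show min b (σ + ε / 2) ∈ S from ⟨hu, hPu⟩)
  have h3 : min b (σ + ε / 2) ≤ σ := this
  have : b ≤ σ + ε / 2 := by
    by_contra hcon
    push Not at hcon
    rw [min_eq_right hcon.le] at h3
    linarith
  rwa [min_eq_left this] at hPu

/-- The family part of `ContAlong`. -/
def Fam (F : ℝ → ℂ → ℂ) (r : ℝ → ℝ) (γ : ℝ → ℂ) (a b : ℝ) : Prop :=
  (∀ t ∈ Set.Icc a b, 0 < r t ∧ AnalyticOnNhd ℂ (F t) (Metric.ball (γ t) (r t))) ∧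
    (∀ t ∈ Set.Icc a b, ∃ ε > 0, ∀ t' ∈ Set.Icc a b, |t' - t| < ε →
      Set.EqOn (F t) (F t') (Metric.ball (γ t) (r t) ∩ Metric.ball (γ t') (r t')))

lemma Fam.mono {F r γ a b a' b'} (h : Fam F r γ a b) (ha : a ≤ a') (hb : b' ≤ b) :
    Fam F r γ a' b' := by
  have hs : Icc a' b' ⊆ Icc a b := Icc_subset_Icc ha hb
  refine ⟨fun t ht => h.1 t (hs ht), fun t ht => ?_⟩
  obtain ⟨ε, hε, h2⟩ := h.2 t (hs ht)
  exact ⟨ε, hε, fun t' ht' => h2 t' (hs ht')⟩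

lemma cont_close {γ : ℝ → ℂ} {a b t : ℝ} (hγ : ContinuousOn γ (Icc a b)) (ht : t ∈ Icc a b)
    {ρ : ℝ} (hρ : 0 < ρ) : ∃ ε > 0, ∀ s ∈ Icc a b, |s - t| < ε → γ s ∈ ball (γ t) ρ := by
  obtain ⟨ε, hε, h⟩ := Metric.continuousOn_iff.1 hγ t ht ρ hρ
  exact ⟨ε, hε, fun s hs hst => h s hs (by rwa [Real.dist_eq])⟩

/-- Inside a domain where `F₀` is analytic the continuation of the germ of `F₀` is `F₀`. -/
lemma Fam.const {F r γ a b} (hab : a ≤ b) (h : Fam F r γ a b) (hγ : ContinuousOn γ (Icc a b))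
    {U : Set ℂ} (hU : IsOpen U) {F₀ : ℂ → ℂ} (hF₀ : AnalyticOnNhd ℂ F₀ U)
    (hm : ∀ t ∈ Icc a b, γ t ∈ U) (h0 : F a =ᶠ[𝓝 (γ a)] F₀) : F b =ᶠ[𝓝 (γ b)] F₀ := by
  apply forward_induction hab (fun t => F t =ᶠ[𝓝 (γ t)] F₀) h0
  intro t ht
  obtain ⟨ρ, hρ, hball⟩ := Metric.isOpen_iff.1 hU _ (hm t ht)
  obtain ⟨hr, hFt⟩ := h.1 t ht
  obtain ⟨ε₁, hε₁, hc⟩ := h.2 t ht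
  obtain ⟨ε₂, hε₂, hcl⟩ := cont_close hγ ht (lt_min hρ hr)
  refine ⟨min ε₁ ε₂, lt_min hε₁ hε₂, fun s hs u hu hst hut _ hPs => ?_⟩
  have key : ∀ s ∈ Icc a b, |s - t| < min ε₁ ε₂ → F t =ᶠ[𝓝 (γ s)] F s := by
    intro s hs hst
    have := hcl s hs (hst.trans_le (min_le_right _ _))
    exact eventuallyEq_of_inter (hc s hs (hst.trans_le (min_le_left _ _)))
      (ball_subset_ball (min_le_right _ _) this) (mem_ball_self (h.1 s hs).1)
  have hsb := hcl s hs (hst.trans_le (min_le_right _ _))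
  have hub := hcl u hu (hut.trans_le (min_le_right _ _))
  have e1 : EqOn (F t) F₀ (ball (γ t) (r t) ∩ ball (γ t) ρ) :=
    eqOn_inter hFt (hF₀.mono hball) (ball_subset_ball (min_le_right _ _) hsb)
      (ball_subset_ball (min_le_left _ _) hsb) ((key s hs hst).trans hPs)
  exact (key u hu hut).symm.trans (eventuallyEq_of_inter e1
    (ball_subset_ball (min_le_right _ _) hub) (ball_subset_ball (min_le_left _ _) hub))

/-- Uniqueness and stability of continuation under perturbation of the path. -/
lemma Fam.stable {F r γ a b} (hab : a ≤ b) (h : Fam F r γ a b) (hγ : ContinuousOn γ (Icc a b)) :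
    ∃ ε > 0, ∀ (γ' : ℝ → ℂ) (F' : ℝ → ℂ → ℂ) (r' : ℝ → ℝ), ContinuousOn γ' (Icc a b) →
      (∀ t ∈ Icc a b, dist (γ' t) (γ t) < ε) → Fam F' r' γ' a b → F' a =ᶠ[𝓝 (γ' a)] F a →
      F' b =ᶠ[𝓝 (γ' b)] F b := by
  suffices H : ∃ ε > 0, ∀ (γ' : ℝ → ℂ) (F' : ℝ → ℂ → ℂ) (r' : ℝ → ℝ), ContinuousOn γ' (Icc a b) →
      (∀ t ∈ Icc a b, dist (γ' t) (γ t) < ε) → Fam F' r' γ' a b → F' a =ᶠ[𝓝 (γ' a)] F a →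
      F' b =ᶠ[𝓝 (γ' b)] F b by exact H
  apply forward_induction hab (fun t => ∃ ε > 0, ∀ (γ' : ℝ → ℂ) (F' : ℝ → ℂ → ℂ) (r' : ℝ → ℝ),
      ContinuousOn γ' (Icc a b) →
      (∀ t ∈ Icc a b, dist (γ' t) (γ t) < ε) → Fam F' r' γ' a b → F' a =ᶠ[𝓝 (γ' a)] F a →
      F' t =ᶠ[𝓝 (γ' t)] F t)
  · exact ⟨1, one_pos, fun γ' F' r' _ _ _ h => h⟩
  intro t ht
  obtain ⟨hr, hFt⟩ := h.1 t ht
  obtain ⟨ε₁, hε₁, hc⟩ := h.2 t ht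
  obtain ⟨ε₂, hε₂, hcl⟩ := cont_close hγ ht (half_pos hr)
  refine ⟨min ε₁ ε₂, lt_min hε₁ hε₂, fun s hs u hu hst hut hsu hPs => ?_⟩
  obtain ⟨ε₃, hε₃, hs3⟩ := hPs
  refine ⟨min (min ε₃ (r t / 2)) (min (r s) (r u)), lt_min (lt_min hε₃ (half_pos hr))
    (lt_min (h.1 s hs).1 (h.1 u hu).1), fun γ' F' r' hγ' hd hfam h0 => ?_⟩
  have hd3 : ∀ t ∈ Icc a b, dist (γ' t) (γ t) < ε₃ := fun t ht =>
    (hd t ht).trans_le ((min_le_left _ _).trans (min_le_left _ _))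
  have hdr : ∀ t' ∈ Icc a b, dist (γ' t') (γ t') < r t / 2 := fun t ht =>
    (hd t ht).trans_le ((min_le_left _ _).trans (min_le_right _ _))
  have hds : γ' s ∈ ball (γ s) (r s) :=
    (hd s hs).trans_le ((min_le_right _ _).trans (min_le_left _ _))
  have hdu : γ' u ∈ ball (γ u) (r u) :=
    (hd u hu).trans_le ((min_le_right _ _).trans (min_le_right _ _))
  have hin : ∀ v ∈ Icc a b, |v - t| < min ε₁ ε₂ → γ' v ∈ ball (γ t) (r t) := by
    intro v hv hvt
    have h1 : dist (γ v) (γ t) < r t / 2 := hcl v hv (hvt.trans_le (min_le_right _ _))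
    have h2 := hdr v hv
    rw [mem_ball]
    linarith [dist_triangle (γ' v) (γ v) (γ t)]
  have es : F t =ᶠ[𝓝 (γ' s)] F s := eventuallyEq_of_inter
    (hc s hs (hst.trans_le (min_le_left _ _))) (hin s hs hst) hds
  have eu : F t =ᶠ[𝓝 (γ' u)] F u := eventuallyEq_of_inter
    (hc u hu (hut.trans_le (min_le_left _ _))) (hin u hu hut) hdu
  refine EventuallyEq.trans ?_ eu
  refine (hfam.mono hs.1 hu.2).const hsu (hγ'.mono (Icc_subset_Icc hs.1 hu.2)) isOpen_ball hFt ?_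
    ((hs3 γ' F' r' hγ' hd3 hfam h0).trans es.symm)
  intro v hv
  refine hin v ⟨hs.1.trans hv.1, hv.2.trans hu.2⟩ ?_
  rw [abs_lt] at *
  constructor <;> linarith [hv.1, hv.2]

/-- Concatenation with a segment. -/
def cat (γ : ℝ → ℂ) (u : ℂ) (t : ℝ) : ℂ :=
  if t ≤ 1 / 2 then γ (2 * t) else γ 1 + ((2 * t - 1 : ℝ) : ℂ) * (u - γ 1)

lemma cat_left {γ u t} (ht : t ≤ 1 / 2) : cat γ u t = γ (2 * t) := if_pos ht

lemma cat_right {γ u t} (ht : 1 / 2 ≤ t) :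
    cat γ u t = γ 1 + ((2 * t - 1 : ℝ) : ℂ) * (u - γ 1) := by
  rcases ht.eq_or_lt with rfl | h
  · rw [cat_left le_rfl]; norm_num
  · exact if_neg (not_le.2 h)

lemma mono_of_steps {n : ℕ} {u : ℕ → ℝ} (h : ∀ i < n, u i ≤ u (i + 1)) :
    ∀ j ≤ n, ∀ i ≤ j, u i ≤ u j := by
  intro j
  induction j with
  | zero => intro _ i hi; rw [Nat.le_zero.1 hi]
  | succ j ih =>
    intro hj i hi
    rcases Nat.of_le_succ hi with h1 | h1
    · exact (ih (by omega) i h1).trans (h j (by omega))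
    · rw [h1]

lemma cat_piecewise {γ : ℝ → ℂ} {v : ℂ} (h : PiecewiseC1On γ 0 1) :
    PiecewiseC1On (cat γ v) 0 1 := by
  obtain ⟨hc, n, u, hu0, hun, hmono, hC⟩ := h
  have hcl : ContinuousOn (cat γ v) (Icc 0 (1/2)) := by
    refine ContinuousOn.congr (f := fun t => γ (2 * t)) ?_ fun t ht => cat_left ht.2
    refine hc.comp (by fun_prop) fun t ht => ⟨by linarith [ht.1], by linarith [ht.2]⟩
  have hcr : ContinuousOn (cat γ v) (Icc (1/2) 1) := by
    refine ContinuousOn.congr (f := fun t => γ 1 + ((2 * t - 1 : ℝ) : ℂ) * (v - γ 1)) ?_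
      fun t ht => cat_right ht.1
    fun_prop
  refine ⟨?_, n + 1, fun i => if i ≤ n then u i / 2 else 1, ?_, ?_, ?_, ?_⟩
  · have := hcl.union_of_isClosed hcr isClosed_Icc isClosed_Icc
    rwa [Icc_union_Icc_eq_Icc (by norm_num) (by norm_num)] at this
  · simp [hu0]
  · simp
  · intro i hi
    rcases Nat.lt_succ_iff_lt_or_eq.1 hi with h1 | rfl
    · simp only [h1.le, Nat.succ_le_of_lt h1, if_true]
      linarith [hmono i h1]
    · simp [hun]; norm_num
  · intro i hi
    rcases Nat.lt_succ_iff_lt_or_eq.1 hi with h1 | rfl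
    · simp only [h1.le, Nat.succ_le_of_lt h1, if_true]
      have hle : u (i+1) ≤ 1 := by
        rw [← hun]; exact mono_of_steps hmono n le_rfl _ h1
      refine ContDiffOn.congr (f := fun t => γ (2 * t)) ?_ fun t ht =>
        cat_left (by linarith [ht.2])
      refine (hC i h1).comp (by fun_prop) fun t ht => ⟨by linarith [ht.1], by linarith [ht.2]⟩
    · simp only [le_refl, if_true, hun, Nat.not_succ_le_self, if_false]
      refine ContDiffOn.congr (f := fun t => γ 1 + ((2 * t - 1 : ℝ) : ℂ) * (v - γ 1)) ?_
        fun t ht => cat_right ht.1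
      have : ContDiff ℝ 1 (fun t : ℝ => ((2 * t - 1 : ℝ) : ℂ)) :=
        Complex.ofRealCLM.contDiff.comp
          (show ContDiff ℝ 1 (fun t : ℝ => 2 * t - 1) by fun_prop)
      exact (contDiff_const.add (this.mul contDiff_const)).contDiffOn

/-- `φ` is a germ at `z` obtained from `f` by continuation in `ℂ ∖ Ω`. -/
def Reach (Ω : Set ℂ) (R : ℝ) (f : ℂ → ℂ) (z : ℂ) (φ : ℂ → ℂ) : Prop :=
  ∃ γ : ℝ → ℂ, PiecewiseC1On γ 0 1 ∧ γ 0 ∈ ball (0:ℂ) R ∧ γ 0 ≠ 0 ∧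
    (∀ t ∈ Icc (0:ℝ) 1, γ t ∉ Ω) ∧ γ 1 = z ∧ ContAlong f γ 0 1 φ

/-- The continuation property. -/
def CP (Ω : Set ℂ) (R : ℝ) (f : ℂ → ℂ) : Prop :=
  ∀ γ : ℝ → ℂ, PiecewiseC1On γ 0 1 → γ 0 ∈ Metric.ball (0:ℂ) R → γ 0 ≠ 0 →
      (∀ t ∈ Set.Icc (0:ℝ) 1, γ t ∉ Ω) → ContinuableAlong f γ 0 1

/-- Continuation of a reached germ along a segment. -/
lemma reach_seg {Ω R f} (hf : CP Ω R f) {γ : ℝ → ℂ} {φ : ℂ → ℂ} (hγ : PiecewiseC1On γ 0 1)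
    (h0 : γ 0 ∈ ball (0:ℂ) R) (h0' : γ 0 ≠ 0) (hav : ∀ t ∈ Icc (0:ℝ) 1, γ t ∉ Ω)
    (hφ : ContAlong f γ 0 1 φ) {u : ℂ} (hu : u ∈ ball (γ 1) (infDist (γ 1) Ω)) :
    (∀ t ∈ Icc (0:ℝ) 1, cat γ u t ∉ Ω) ∧
    ∃ F r, Fam F r (cat γ u) 0 1 ∧ F (1/2) =ᶠ[𝓝 (γ 1)] φ ∧ F 0 =ᶠ[𝓝 (γ 0)] f := by
  have hav' : ∀ t ∈ Icc (0:ℝ) 1, cat γ u t ∉ Ω := by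
    intro t ht
    rcases le_total t (1/2) with h | h
    · rw [cat_left h]; exact hav _ ⟨by linarith [ht.1], by linarith⟩
    · rw [cat_right h]
      exact ball_infDist_subset_compl (seg_point_mem (convex_ball _ _)
        (mem_ball_self (pos_of_mem_ball hu)) hu ⟨by linarith, by linarith [ht.2]⟩)
  have hc0 : cat γ u 0 = γ 0 := by rw [cat_left (by norm_num)]; norm_num
  have hch : cat γ u (1/2) = γ 1 := by rw [cat_left (by norm_num)]; norm_num
  refine ⟨hav', ?_⟩
  obtain ⟨g, F, r, hF1, hF2, hF3, hF4⟩ := hf (cat γ u) (cat_piecewise hγ) (by rwa [hc0])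
    (by rwa [hc0]) hav'
  obtain ⟨F', r', hF1', hF2', hF3', hF4'⟩ := hφ
  refine ⟨F, r, ⟨hF1, hF2⟩, ?_, ?_⟩
  · have hfam : Fam (fun t => F (t / 2)) (fun t => r (t / 2)) γ 0 1 := by
      have e : ∀ t ∈ Icc (0:ℝ) 1, cat γ u (t / 2) = γ t := by
        intro t ht
        rw [cat_left (by linarith [ht.2])]; congr 1; ring
      have m : ∀ t ∈ Icc (0:ℝ) 1, t / 2 ∈ Icc (0:ℝ) 1 := fun t ht =>
        ⟨by linarith [ht.1], by linarith [ht.2]⟩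
      refine ⟨fun t ht => ?_, fun t ht => ?_⟩
      · have := hF1 (t/2) (m t ht)
        rwa [e t ht] at this
      · obtain ⟨ε, hε, h⟩ := hF2 (t/2) (m t ht)
        refine ⟨ε, hε, fun t' ht' htt => ?_⟩
        have := h (t'/2) (m t' ht') (by
          have : t' / 2 - t / 2 = (t' - t) / 2 := by ring
          rw [this, abs_div, abs_two]; linarith [abs_nonneg (t' - t)])
        rwa [e t ht, e t' ht'] at this
    obtain ⟨ε, hε, hst⟩ := Fam.stable zero_le_one ⟨hF1', hF2'⟩ hγ.1
    have := hst γ _ _ hγ.1 (fun t _ => by simpa using hε) hfam (by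
      rw [hc0] at hF3
      filter_upwards [hF3, hF3'] with z h1 h2
      simp [h1, h2])
    exact EventuallyEq.trans this hF4'
  · rw [hc0] at hF3; exact hF3

/-- Reached germs extend within discs: reaching other points. -/
lemma reach_move {Ω R f} (hf : CP Ω R f) {z φ} (h : Reach Ω R f z φ)
    (hφ : AnalyticOnNhd ℂ φ (ball z (infDist z Ω))) {w : ℂ} (hw : w ∈ ball z (infDist z Ω)) :
    Reach Ω R f w φ := by
  obtain ⟨γ, hγ, h0, h0', hav, rfl, hc⟩ := h
  obtain ⟨hav', F, r, hfam, hh, h00⟩ := reach_seg hf hγ h0 h0' hav hc hw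
  have hc0 : cat γ w 0 = γ 0 := by rw [cat_left (by norm_num)]; norm_num
  have hch : cat γ w (1/2) = γ 1 := by rw [cat_left (by norm_num)]; norm_num
  have hc1 : cat γ w 1 = w := by rw [cat_right (by norm_num)]; norm_num
  refine ⟨cat γ w, cat_piecewise hγ, by rwa [hc0], by rwa [hc0], hav', hc1, F, r, hfam.1, hfam.2,
    by rw [hc0]; exact h00, ?_⟩
  refine (hfam.mono (by norm_num : (0:ℝ) ≤ 1/2) le_rfl).const (by norm_num)
    ((cat_piecewise hγ).1.mono (Icc_subset_Icc (by norm_num) le_rfl)) isOpen_ball hφ ?_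
    (by rwa [hch])
  intro t ht
  rw [cat_right ht.1]
  exact seg_point_mem (convex_ball _ _)
        (mem_ball_self (pos_of_mem_ball hw)) hw ⟨by linarith [ht.1], by linarith [ht.2]⟩

/-- Every reached germ extends to the full disc. -/
lemma reach_extend {Ω R f} (hf : CP Ω R f) {z φ} (h : Reach Ω R f z φ) :
    ∃ F, AnalyticOnNhd ℂ F (ball z (infDist z Ω)) ∧ F =ᶠ[𝓝 z] φ ∧ Reach Ω R f z F := by
  obtain ⟨γ, hγ, h0, h0', hav, rfl, hc⟩ := h
  have key : ∀ u : ℂ, ∃ F r, u ∈ ball (γ 1) (infDist (γ 1) Ω) → Fam F r (cat γ u) 0 1 ∧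
      F (1/2) =ᶠ[𝓝 (γ 1)] φ := by
    intro u
    by_cases hu : u ∈ ball (γ 1) (infDist (γ 1) Ω)
    · obtain ⟨_, F, r, h1, h2, _⟩ := reach_seg hf hγ h0 h0' hav hc hu
      exact ⟨F, r, fun _ => ⟨h1, h2⟩⟩
    · exact ⟨fun _ => φ, fun _ => 1, fun h => absurd h hu⟩
  choose Fs rs hFs using key
  have hch : ∀ w, cat γ w (1/2) = γ 1 := fun w => by rw [cat_left (by norm_num)]; norm_num
  have hc1 : ∀ w, cat γ w 1 = w := fun w => by rw [cat_right (by norm_num)]; norm_num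
  have hfam : ∀ u ∈ ball (γ 1) (infDist (γ 1) Ω), Fam (Fs u) (rs u) (cat γ u) (1/2) 1 :=
    fun u hu => (hFs u hu).1.mono (by norm_num) le_rfl
  have hcont : ∀ u, ContinuousOn (cat γ u) (Icc (1/2) 1) := fun u =>
    (cat_piecewise hγ).1.mono (Icc_subset_Icc (by norm_num) le_rfl)
  let E : ℂ → ℂ := fun u => Fs u 1 u
  have hloc : ∀ u₀ ∈ ball (γ 1) (infDist (γ 1) Ω), E =ᶠ[𝓝 u₀] Fs u₀ 1 := by
    intro u₀ hu₀
    obtain ⟨ε, hε, hst⟩ := (hfam u₀ hu₀).stable (by norm_num) (hcont u₀)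
    filter_upwards [isOpen_ball.mem_nhds hu₀, ball_mem_nhds u₀ hε] with u hu huε
    have := hst (cat γ u) (Fs u) (rs u) (hcont u) ?_ (hfam u hu) ?_
    · rw [hc1] at this
      exact this.eq_of_nhds
    · intro t ht
      rw [cat_right ht.1, cat_right ht.1, dist_eq_norm]
      have e : γ 1 + ((2 * t - 1 : ℝ) : ℂ) * (u - γ 1) - (γ 1 + ((2 * t - 1 : ℝ) : ℂ) * (u₀ - γ 1))
        = ((2 * t - 1 : ℝ) : ℂ) * (u - u₀) := by ring
      rw [e, norm_mul, Complex.norm_real, Real.norm_eq_abs, abs_of_nonneg (by linarith [ht.1])]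
      have h3 : ‖u - u₀‖ < ε := by rw [← dist_eq_norm]; exact huε
      nlinarith [ht.2, norm_nonneg (u - u₀)]
    · rw [hch]
      exact (hFs u hu).2.trans (hFs u₀ hu₀).2.symm
  have hEan : AnalyticOnNhd ℂ E (ball (γ 1) (infDist (γ 1) Ω)) := by
    intro u hu
    have h1 := ((hFs u hu).1.1 1 (by norm_num))
    rw [hc1] at h1
    exact (h1.2 u (mem_ball_self h1.1)).congr (hloc u hu).symm
  by_cases hpos : 0 < infDist (γ 1) Ω
  · have hEφ : E =ᶠ[𝓝 (γ 1)] φ := by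
      have hz := mem_ball_self (x := γ 1) hpos
      refine (hloc _ hz).trans ?_
      have hcst : ∀ t ∈ Icc (1/2:ℝ) 1, cat γ (γ 1) t = γ 1 := fun t ht => by
        rw [cat_right ht.1]; simp
      have hf1 := (hFs _ hz).1.1 (1/2) (by norm_num)
      have := (hfam _ hz).const (by norm_num) (hcont _) isOpen_ball hf1.2
        (fun t ht => by rw [hcst t ht, hch]; exact mem_ball_self hf1.1) EventuallyEq.rfl
      rw [hc1] at this
      exact this.trans (hFs _ hz).2
    refine ⟨E, hEan, hEφ, γ, hγ, h0, h0', hav, rfl, ?_⟩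
    obtain ⟨F, r, a1, a2, a3, a4⟩ := hc
    exact ⟨F, r, a1, a2, a3, EventuallyEq.trans a4 hEφ.symm⟩
  · refine ⟨φ, ?_, EventuallyEq.rfl, γ, hγ, h0, h0', hav, rfl, hc⟩
    rw [ball_eq_empty.2 (not_lt.1 hpos)]
    exact fun x hx => absurd hx (notMem_empty x)

/-- Full-disc reached elements. -/
def Good (Ω : Set ℂ) (R : ℝ) (f : ℂ → ℂ) (z : ℂ) (F : ℂ → ℂ) : Prop :=
  AnalyticOnNhd ℂ F (ball z (infDist z Ω)) ∧ Reach Ω R f z F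

lemma good_move {Ω R f} (hcl : IsClosed Ω) (hne : Ω.Nonempty) (hf : CP Ω R f) {z F}
    (h : Good Ω R f z F) {w} (hw : w ∈ ball z (infDist z Ω)) :
    ∃ F', Good Ω R f w F' ∧ EqOn F F' (ball z (infDist z Ω) ∩ ball w (infDist w Ω)) := by
  obtain ⟨F', h1, h2, h3⟩ := reach_extend hf (reach_move hf h.2 h.1 hw)
  refine ⟨F', ⟨h1, h3⟩, eqOn_inter h.1 h1 hw (mem_ball_self ?_) h2.symm⟩
  exact (hcl.notMem_iff_infDist_pos hne).1 (ball_infDist_subset_compl hw)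

lemma good_base {Ω R f} (hcl : IsClosed Ω) (hne : Ω.Nonempty) (hR : 0 < R) (hf : CP Ω R f)
    (han : AnalyticOnNhd ℂ f (ball 0 R))
    (hpunct : ∀ ζ ∈ Metric.ball (0:ℂ) R, ζ ≠ 0 → ζ ∉ Ω) {w : ℂ} (hw : w ∈ ball (0:ℂ) R)
    (hwΩ : w ∉ Ω) :
    ∃ F', Good Ω R f w F' ∧ EqOn f F' (ball 0 R ∩ ball w (infDist w Ω)) := by
  have hreach : Reach Ω R f w f := by
    obtain ⟨p, hp, hp0, hseg⟩ : ∃ p ∈ ball (0:ℂ) R, p ≠ 0 ∧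
        ∀ t ∈ Icc (0:ℝ) 1, p + (t:ℂ) * (w - p) ∉ Ω := by
      by_cases h0 : w = 0
      · have hp : ((R / 2 : ℝ) : ℂ) ∈ ball (0:ℂ) R := by
          simp [abs_of_pos hR]; linarith
        refine ⟨((R / 2 : ℝ) : ℂ), hp, by simpa using hR.ne', fun t ht => ?_⟩
        have hm := seg_point_mem (convex_ball (0:ℂ) R) hp hw ht
        by_cases hz : ((R / 2 : ℝ) : ℂ) + (t:ℂ) * (w - ((R / 2 : ℝ) : ℂ)) = 0
        · rw [hz, ← h0]; exact hwΩ
        · exact hpunct _ hm hz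
      · exact ⟨w, hw, h0, fun t _ => by simpa using hwΩ⟩
    refine ⟨fun t => p + (t:ℂ) * (w - p), ⟨by fun_prop, 1, fun i => i, by simp, by simp,
      fun i _ => by simp, fun i _ => ?_⟩, by simpa using hp, by simpa using hp0, hseg, by simp, ?_⟩
    · have : ContDiff ℝ 1 (fun t : ℝ => (t : ℂ)) := Complex.ofRealCLM.contDiff
      exact (contDiff_const.add (this.mul contDiff_const)).contDiffOn
    · refine ⟨fun _ => f, fun t => R - ‖p + (t:ℂ) * (w - p)‖, fun t ht => ⟨?_, ?_⟩,
        fun t ht => ⟨1, one_pos, fun _ _ _ _ _ => rfl⟩, Eventually.of_forall fun _ => rfl,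
        Eventually.of_forall fun _ => rfl⟩
      · have hm := seg_point_mem (convex_ball (0:ℂ) R) hp hw ht
        rw [mem_ball_zero_iff] at hm
        linarith
      · apply han.mono
        apply ball_subset_ball'
        rw [dist_zero_right]; linarith
  obtain ⟨F', h1, h2, h3⟩ := reach_extend hf hreach
  exact ⟨F', ⟨h1, h3⟩, eqOn_inter han h1 hw
    (mem_ball_self ((hcl.notMem_iff_infDist_pos hne).1 hwΩ)) h2.symm⟩

/-- The convolution integrand. -/
def cker (F G : ℂ → ℂ) (ζ : ℂ) : ℂ → ℂ := fun ξ => F ξ * G (ζ - ξ)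

lemma conv_eq_seg (f g : ℂ → ℂ) (ζ : ℂ) : conv f g ζ = seg (cker f g ζ) 0 ζ := by
  unfold conv seg cker
  simp only [sub_zero, zero_add]
  congr 2
  ext t
  congr 2
  ring

lemma ker_analytic {F G : ℂ → ℂ} {z y x ζ : ℂ} {r s ρ : ℝ} (hF : AnalyticOnNhd ℂ F (ball z r))
    (hG : AnalyticOnNhd ℂ G (ball y s)) (h1 : ∀ ξ ∈ ball x ρ, ξ ∈ ball z r)
    (h2 : ∀ ξ ∈ ball x ρ, ζ - ξ ∈ ball y s) : AnalyticOnNhd ℂ (cker F G ζ) (ball x ρ) := by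
  intro ξ hξ
  refine (hF ξ (h1 ξ hξ)).mul ?_
  exact (hG (ζ - ξ) (h2 ξ hξ)).fun_comp (analyticAt_const.sub analyticAt_id)

/-- Broken-line integrals of the convolution integrand. -/
inductive Chain (A B : ℂ → (ℂ → ℂ) → Prop) (c : ℂ) (H δ : ℝ) (F₀ : ℂ → ℂ) :
    ℂ → (ℂ → ℂ) → (ℂ → ℂ) → (ℂ → ℂ) → Prop
  | start (G : ℂ → ℂ) : A 0 F₀ → B (c - 0) G → Chain A B c H δ F₀ 0 F₀ G (fun _ => 0)
  | link (z w : ℂ) (F G I F' G' : ℂ → ℂ) : Chain A B c H δ F₀ z F G I → ‖w - z‖ ≤ δ →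
      A w F' → B (c - w) G' → EqOn F F' (ball z H ∩ ball w H) →
      EqOn G G' (ball (c - z) H ∩ ball (c - w) H) →
      Chain A B c H δ F₀ w F' G' (fun ζ => I ζ + seg (cker F G ζ) z w)

lemma Chain.good {A B : ℂ → (ℂ → ℂ) → Prop} {c H δ F₀ z F G I} (h : Chain A B c H δ F₀ z F G I) :
    A z F ∧ B (c - z) G := by
  cases h with
  | start G h1 h2 => exact ⟨h1, h2⟩
  | link => exact ⟨by assumption, by assumption⟩

lemma seg_analytic {F G : ℂ → ℂ} {c z w : ℂ} {h : ℝ} 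
    (hF : AnalyticOnNhd ℂ F (ball z (10 * h))) (hG : AnalyticOnNhd ℂ G (ball (c - z) (10 * h)))
    (hw : ‖w - z‖ ≤ h) (hh : 0 < h) :
    AnalyticOnNhd ℂ (fun ζ => seg (cker F G ζ) z w) (ball c (3 * h)) := by
  unfold seg cker
  refine analyticOnNhd_const.mul ?_
  have key : ∀ t ∈ Icc (0:ℝ) 1, z + (t:ℂ) * (w - z) ∈ ball z (2 * h) := fun t ht =>
    seg_point_mem (convex_ball _ _) (mem_ball_self (by linarith))
      (by rw [mem_ball, dist_eq_norm]; linarith) ht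
  have := analytic_param hF hG (isOpen_ball (x := c) (ε := 3 * h)) (fun t => z + (t:ℂ) * (w - z))
    (fun _ => 0) (fun t => -(z + (t:ℂ) * (w - z))) (fun _ => 1) (by fun_prop) (by fun_prop)
    (by fun_prop) (by fun_prop) ?_ ?_
  · refine this.congr isOpen_ball ?_
    intro ζ _
    simp only [zero_mul, add_zero, one_mul]
    congr 1
    ext t
    congr 2
    ring
  · intro t ht ζ hζ
    have := key t ht
    rw [mem_ball, dist_eq_norm] at this ⊢
    simp only [zero_mul, add_zero]
    linarith
  · intro t ht ζ hζ
    have := key t ht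
    rw [mem_ball, dist_eq_norm] at this hζ ⊢
    have e : -(z + (t:ℂ) * (w - z)) + 1 * ζ - (c - z) = (ζ - c) - (z + (t:ℂ) * (w - z) - z) := by ring
    rw [e]
    linarith [norm_sub_le (ζ - c) (z + (t:ℂ) * (w - z) - z)]

lemma last_analytic {F G : ℂ → ℂ} {c : ℂ} {r : ℝ} 
    (hF : AnalyticOnNhd ℂ F (ball c r)) (hG : AnalyticOnNhd ℂ G (ball 0 r)) :
    AnalyticOnNhd ℂ (fun ζ => seg (cker F G ζ) c ζ) (ball c r) := by
  unfold seg cker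
  refine (analyticOnNhd_id.sub analyticOnNhd_const).mul ?_
  have := analytic_param hF hG (isOpen_ball (x := c) (ε := r)) (fun t => c - (t:ℂ) * c)
    (fun t => t) (fun t => -(c - (t:ℂ) * c)) (fun t => 1 - t) (by fun_prop) (by fun_prop)
    (by fun_prop) (by fun_prop) ?_ ?_
  · refine this.congr isOpen_ball ?_
    intro ζ _
    simp only
    congr 1
    ext t
    congr 2 <;> ring
  · intro t ht ζ hζ
    have := seg_point_mem (convex_ball c r) (mem_ball_self (pos_of_mem_ball hζ)) hζ ht
    convert this using 1
    ring
  · intro t ht ζ hζ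
    have := seg_point_mem (convex_ball c r) hζ (mem_ball_self (pos_of_mem_ball hζ)) ht
    rw [mem_ball, dist_eq_norm] at this ⊢
    convert this using 2
    ring

lemma Chain.analytic {A B : ℂ → (ℂ → ℂ) → Prop} {c δ h F₀ z F G I}
    (hA : ∀ z F, A z F → AnalyticOnNhd ℂ F (ball z (10 * h)))
    (hB : ∀ z F, B z F → AnalyticOnNhd ℂ F (ball z (10 * h))) (hδ : δ ≤ h) (hh : 0 < h)
    (H : Chain A B c (10 * h) δ F₀ z F G I) : AnalyticOnNhd ℂ I (ball c (3 * h)) := by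
  induction H with
  | start => exact analyticOnNhd_const
  | link z w F G I F' G' hc hd hA' hB' e1 e2 ih =>
    have := hc.good
    exact ih.add (seg_analytic (hA _ _ this.1) (hB _ _ this.2) (hd.trans hδ) hh)

/-- Hypotheses on one deformation step. -/
structure StepData (A B A' B' : ℂ → (ℂ → ℂ) → Prop) (c c' : ℂ) (h δ δ' : ℝ) (Φ : ℂ → ℂ)
    (F₀ G₀ : ℂ → ℂ) : Prop where
  hh : 0 < h
  hδ : δ ≤ h
  hA : ∀ z F, A z F → AnalyticOnNhd ℂ F (ball z (10 * h))
  hB : ∀ z F, B z F → AnalyticOnNhd ℂ F (ball z (10 * h))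
  hA' : ∀ z F, A' z F → AnalyticOnNhd ℂ F (ball z (10 * h))
  hB' : ∀ z F, B' z F → AnalyticOnNhd ℂ F (ball z (10 * h))
  mA : ∀ z F, A z F → ∃ F', A' (Φ z) F' ∧ EqOn F F' (ball z (10 * h) ∩ ball (Φ z) (10 * h))
  mB : ∀ z G, B (c - z) G → ∃ G', B' (c' - Φ z) G' ∧
    EqOn G G' (ball (c - z) (10 * h) ∩ ball (c' - Φ z) (10 * h))
  d1 : ∀ z, ‖Φ z - z‖ ≤ h
  d2 : ∀ z, ‖(c' - Φ z) - (c - z)‖ ≤ h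
  lip : ∀ z w, ‖w - z‖ ≤ δ → ‖Φ w - Φ z‖ ≤ δ'
  A0 : A' 0 F₀
  B0 : B' 0 G₀
  Bc : ∀ G, B c G → ∃ G', B' c' G' ∧ EqOn G G' (ball c (10 * h) ∩ ball c' (10 * h))
  Ac : ∀ F, A c F → ∃ F', A' c' F' ∧ EqOn F F' (ball c (10 * h) ∩ ball c' (10 * h))
  dc : ‖c' - c‖ ≤ h
  e0 : ‖Φ 0 - 0‖ ≤ δ'
  e1 : ‖c' - Φ c‖ ≤ δ'

/-- Transitivity of agreement on balls. -/
lemma glue {F₁ F₂ F₃ : ℂ → ℂ} {x₁ x₂ x₃ : ℂ} {H : ℝ} (h1 : AnalyticOnNhd ℂ F₁ (ball x₁ H))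
    (h3 : AnalyticOnNhd ℂ F₃ (ball x₃ H)) (e12 : EqOn F₁ F₂ (ball x₁ H ∩ ball x₂ H))
    (e23 : EqOn F₂ F₃ (ball x₂ H ∩ ball x₃ H)) {p : ℂ} (p1 : p ∈ ball x₁ H) (p2 : p ∈ ball x₂ H)
    (p3 : p ∈ ball x₃ H) : EqOn F₁ F₃ (ball x₁ H ∩ ball x₃ H) :=
  eqOn_inter h1 h3 p1 p3 ((eventuallyEq_of_inter e12 p1 p2).trans (eventuallyEq_of_inter e23 p2 p3))

lemma EqOn.swap {F G : ℂ → ℂ} {s t : Set ℂ} (h : EqOn F G (s ∩ t)) : EqOn G F (t ∩ s) :=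
  fun x hx => (h ⟨hx.2, hx.1⟩).symm

/-- Agreement of two integrands near `x`. -/
lemma ker_eqOn {F F' G G' : ℂ → ℂ} {z z' y y' x ζ : ℂ} {H ρ : ℝ}
    (e1 : EqOn F F' (ball z H ∩ ball z' H)) (e2 : EqOn G G' (ball y H ∩ ball y' H))
    (h1 : ∀ ξ ∈ ball x ρ, ξ ∈ ball z H) (h2 : ∀ ξ ∈ ball x ρ, ξ ∈ ball z' H)
    (h3 : ∀ ξ ∈ ball x ρ, ζ - ξ ∈ ball y H) (h4 : ∀ ξ ∈ ball x ρ, ζ - ξ ∈ ball y' H) :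
    EqOn (cker F G ζ) (cker F' G' ζ) (ball x ρ) := by
  intro ξ hξ
  unfold cker
  rw [e1 ⟨h1 ξ hξ, h2 ξ hξ⟩, e2 ⟨h3 ξ hξ, h4 ξ hξ⟩]

lemma mem_b {x y p : ℂ} {r s d : ℝ} (hp : p ∈ ball x r) (h : ‖y - x‖ ≤ d) (hs : r + d ≤ s) :
    p ∈ ball y s := by
  rw [mem_ball, dist_eq_norm] at *
  have : p - y = (p - x) - (y - x) := by ring
  rw [this]
  linarith [norm_sub_le (p - x) (y - x)]

/-- If `ζ` is `3h`-close to `c` and `ξ` is `r`-close to `z` then `ζ-ξ` is close to `y ≈ c - z`. -/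
lemma mem_c {c ζ z ξ y : ℂ} {h r s d : ℝ} (hζ : ζ ∈ ball c (3 * h)) (hξ : ξ ∈ ball z r)
    (hy : ‖y - (c - z)‖ ≤ d) (hs : 3 * h + r + d ≤ s) : ζ - ξ ∈ ball y s := by
  rw [mem_ball, dist_eq_norm] at *
  have : ζ - ξ - y = ((ζ - c) - (ξ - z)) - (y - (c - z)) := by ring
  rw [this]
  linarith [norm_sub_le ((ζ - c) - (ξ - z)) (y - (c - z)), norm_sub_le (ζ - c) (ξ - z)]

lemma mem_n {x y : ℂ} {r d : ℝ} (h : ‖y - x‖ ≤ d) (hd : d < r) : y ∈ ball x r := by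
  rw [mem_ball, dist_eq_norm]; linarith

theorem Chain.deform {A B A' B' : ℂ → (ℂ → ℂ) → Prop} {c c' : ℂ} {h δ δ' : ℝ} {Φ : ℂ → ℂ}
    {F₀ G₀ : ℂ → ℂ} (S : StepData A B A' B' c c' h δ δ' Φ F₀ G₀) {z F G I}
    (hC : Chain A B c (10 * h) δ F₀ z F G I) :
    ∃ F' G' I', Chain A' B' c' (10 * h) δ' F₀ (Φ z) F' G' I' ∧
      EqOn F F' (ball z (10 * h) ∩ ball (Φ z) (10 * h)) ∧
      EqOn G G' (ball (c - z) (10 * h) ∩ ball (c' - Φ z) (10 * h)) ∧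
      ∀ ζ ∈ ball c (3 * h), I' ζ - I ζ = seg (cker F G ζ) z (Φ z) := by
  have hh := S.hh
  induction hC with
  | start G hA hB =>
    obtain ⟨F', hF', eF⟩ := S.mA _ _ hA
    obtain ⟨G', hG', eG⟩ := S.mB _ _ hB
    rw [sub_zero] at hB
    obtain ⟨G1, hG1, eG1⟩ := S.Bc _ hB
    have hG1' : B' (c' - 0) G1 := by rwa [sub_zero]
    refine ⟨F', G', _, Chain.link 0 (Φ 0) F₀ G1 _ F' G' (Chain.start G1 S.A0 hG1') S.e0 hF' hG' eF ?_,
      eF, eG, ?_⟩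
    · rw [sub_zero] at *
      have p : c ∈ ball c (8 * h) := mem_ball_self (by linarith)
      have d2 := S.d2 0
      rw [sub_zero] at d2
      refine glue (S.hB' _ _ hG1) (S.hB' _ _ hG') (EqOn.swap eG1) eG (p := c) ?_
        (ball_subset_ball (by linarith) p) ?_
      · exact mem_b p S.dc (by linarith)
      · exact mem_b p d2 (by linarith)
    · intro ζ hζ
      simp only [zero_add, sub_zero]
      refine seg_congr (convex_ball (0:ℂ) (2 * h)) ?_ (mem_ball_self (by linarith))
        (mem_n (S.d1 0) (by linarith))
      refine ker_eqOn (z := 0) (z' := 0) (H := 10 * h) (y := c') (y' := c) (fun _ _ => rfl)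
        (EqOn.swap eG1) ?_ ?_ ?_ ?_
      · exact fun ξ hξ => ball_subset_ball (by linarith) hξ
      · exact fun ξ hξ => ball_subset_ball (by linarith) hξ
      · exact fun ξ hξ => mem_c hζ hξ (d := h) (by rw [sub_zero]; exact S.dc) (by linarith)
      · exact fun ξ hξ => mem_c hζ hξ (d := 0) (by simp) (by linarith)
  | link z w F G I Fw Gw hC hd hAw hBw e1 e2 ih =>
    obtain ⟨F', G', I', hC', eF, eG, hI⟩ := ih
    obtain ⟨Fw', hFw', eFw⟩ := S.mA _ _ hAw
    obtain ⟨Gw', hGw', eGw⟩ := S.mB _ _ hBw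
    have hz := hC.good
    have hz' := hC'.good
    have hwz : ‖w - z‖ ≤ h := hd.trans S.hδ
    have hwz' : ‖(c - w) - (c - z)‖ ≤ h := by
      have : (c - w) - (c - z) = -(w - z) := by ring
      rw [this, norm_neg]; exact hwz
    have hpz : z ∈ ball z (8 * h) := mem_ball_self (by linarith)
    have hpc : c - z ∈ ball (c - z) (8 * h) := mem_ball_self (by linarith)
    have hw8 : z ∈ ball w (9 * h) := mem_b hpz hwz (by linarith)
    have hwc8 : c - z ∈ ball (c - w) (9 * h) := mem_b hpc hwz' (by linarith)
    refine ⟨Fw', Gw', _, Chain.link (Φ z) (Φ w) F' G' I' Fw' Gw' hC' (S.lip z w hd) hFw' hGw' ?_ ?_,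
      eFw, eGw, ?_⟩
    · have e3 : EqOn F Fw' (ball z (10 * h) ∩ ball (Φ w) (10 * h)) :=
        glue (S.hA _ _ hz.1) (S.hA' _ _ hFw') e1 eFw (p := z)
          (ball_subset_ball (by linarith) hpz) (ball_subset_ball (by linarith) hw8)
          (mem_b hw8 (S.d1 w) (by linarith))
      exact glue (S.hA' _ _ hz'.1) (S.hA' _ _ hFw') (EqOn.swap eF) e3 (p := z)
        (mem_b hpz (S.d1 z) (by linarith)) (ball_subset_ball (by linarith) hpz)
        (mem_b hw8 (S.d1 w) (by linarith))
    · have e3 : EqOn G Gw' (ball (c - z) (10 * h) ∩ ball (c' - Φ w) (10 * h)) :=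
        glue (S.hB _ _ hz.2) (S.hB' _ _ hGw') e2 eGw (p := c - z)
          (ball_subset_ball (by linarith) hpc) (ball_subset_ball (by linarith) hwc8)
          (mem_b hwc8 (S.d2 w) (by linarith))
      exact glue (S.hB' _ _ hz'.2) (S.hB' _ _ hGw') (EqOn.swap eG) e3 (p := c - z)
        (mem_b hpc (S.d2 z) (by linarith)) (ball_subset_ball (by linarith) hpc)
        (mem_b hwc8 (S.d2 w) (by linarith))
    · intro ζ hζ
      have hζI := hI ζ hζ
      have m1 : ∀ ξ ∈ ball z (6 * h), ξ ∈ ball z (10 * h) := fun ξ hξ =>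
        ball_subset_ball (by linarith) hξ
      have m2 : ∀ ξ ∈ ball z (6 * h), ξ ∈ ball w (10 * h) := fun ξ hξ => mem_b hξ hwz (by linarith)
      have m3 : ∀ ξ ∈ ball z (6 * h), ξ ∈ ball (Φ z) (10 * h) := fun ξ hξ =>
        mem_b hξ (S.d1 z) (by linarith)
      have n1 : ∀ ξ ∈ ball z (6 * h), ζ - ξ ∈ ball (c - z) (10 * h) := fun ξ hξ =>
        mem_c hζ hξ (d := 0) (by simp) (by linarith)
      have n2 : ∀ ξ ∈ ball z (6 * h), ζ - ξ ∈ ball (c - w) (10 * h) := fun ξ hξ =>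
        mem_c hζ hξ hwz' (by linarith)
      have n3 : ∀ ξ ∈ ball z (6 * h), ζ - ξ ∈ ball (c' - Φ z) (10 * h) := fun ξ hξ =>
        mem_c hζ hξ (S.d2 z) (by linarith)
      obtain ⟨P, hP⟩ := seg_primitive (ker_analytic (S.hA _ _ hz.1) (S.hB _ _ hz.2) m1 n1)
      have k1 := ker_eqOn (EqOn.swap e1) (EqOn.swap e2) m2 m1 n2 n1
      have k2 := ker_eqOn (EqOn.swap eF) (EqOn.swap eG) m3 m1 n3 n1
      have hz6 : z ∈ ball z (6 * h) := mem_ball_self (by linarith)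
      have hw6 : w ∈ ball z (6 * h) := mem_n hwz (by linarith)
      have hΦz6 : Φ z ∈ ball z (6 * h) := mem_n (S.d1 z) (by linarith)
      have hΦw6 : Φ w ∈ ball z (6 * h) := by
        refine mem_n (d := 2 * h) ?_ (by linarith)
        have : Φ w - z = (Φ w - w) + (w - z) := by ring
        rw [this]
        linarith [norm_add_le (Φ w - w) (w - z), S.d1 w]
      beta_reduce
      rw [seg_congr (convex_ball _ _) k1 hw6 hΦw6, seg_congr (convex_ball _ _) k2 hΦz6 hΦw6,
        hP _ hw6 _ hΦw6, hP _ hΦz6 _ hΦw6, hP _ hz6 _ hw6]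
      rw [hP _ hz6 _ hΦz6] at hζI
      linear_combination hζI

/-- A full deformation step. -/
theorem chain_step {A B A' B' : ℂ → (ℂ → ℂ) → Prop} {c c' : ℂ} {h δ δ' : ℝ} {Φ : ℂ → ℂ}
    {F₀ G₀ : ℂ → ℂ} (S : StepData A B A' B' c c' h δ δ' Φ F₀ G₀) {F I}
    (hG₀ : AnalyticOnNhd ℂ G₀ (ball 0 (10 * h)))
    (hC : Chain A B c (10 * h) δ F₀ c F G₀ I) :
    ∃ F' I', Chain A' B' c' (10 * h) δ' F₀ c' F' G₀ I' ∧
      ∀ ζ ∈ ball c (3 * h), I' ζ + seg (cker F' G₀ ζ) c' ζ = I ζ + seg (cker F G₀ ζ) c ζ := by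
  have hh := S.hh
  obtain ⟨F1, G1, I1, hC1, eF, eG, hI⟩ := hC.deform S
  have hz := hC.good
  have hz1 := hC1.good
  obtain ⟨F2, hF2, eF2⟩ := S.Ac _ hz.1
  have hcc := S.dc
  have d1 := S.d1 c
  have d2 := S.d2 c
  rw [sub_self, sub_zero] at d2
  rw [sub_self] at eG
  have pc : c ∈ ball c (8 * h) := mem_ball_self (by linarith)
  have p0 : (0:ℂ) ∈ ball (0:ℂ) (8 * h) := mem_ball_self (by linarith)
  refine ⟨F2, _, Chain.link (Φ c) c' F1 G1 I1 F2 G₀ hC1 S.e1 hF2 (by rw [sub_self]; exact S.B0)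
    ?_ ?_, ?_⟩
  · exact glue (S.hA' _ _ hz1.1) (S.hA' _ _ hF2) (EqOn.swap eF) eF2 (p := c)
      (mem_b pc d1 (by linarith)) (ball_subset_ball (by linarith) pc) (mem_b pc hcc (by linarith))
  · rw [sub_self]; exact EqOn.swap eG
  · intro ζ hζ
    have m1 : ∀ ξ ∈ ball c (6 * h), ξ ∈ ball c (10 * h) := fun ξ hξ =>
      ball_subset_ball (by linarith) hξ
    have m2 : ∀ ξ ∈ ball c (6 * h), ξ ∈ ball (Φ c) (10 * h) := fun ξ hξ => mem_b hξ d1 (by linarith)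
    have m3 : ∀ ξ ∈ ball c (6 * h), ξ ∈ ball c' (10 * h) := fun ξ hξ => mem_b hξ hcc (by linarith)
    have n1 : ∀ ξ ∈ ball c (6 * h), ζ - ξ ∈ ball (0:ℂ) (10 * h) := fun ξ hξ =>
      mem_c hζ hξ (d := 0) (by simp) (by linarith)
    have n2 : ∀ ξ ∈ ball c (6 * h), ζ - ξ ∈ ball (c' - Φ c) (10 * h) := fun ξ hξ =>
      mem_c hζ hξ (d := h) (by simpa using d2) (by linarith)
    obtain ⟨P, hP⟩ := seg_primitive (ker_analytic (S.hA _ _ hz.1) hG₀ m1 n1)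
    have k1 := ker_eqOn (EqOn.swap eF) (EqOn.swap eG) m2 m1 n2 n1
    have k2 := ker_eqOn (G := G₀) (G' := G₀) (EqOn.swap eF2) (fun _ _ => rfl) m3 m1 n1 n1
    have hc6 : c ∈ ball c (6 * h) := mem_ball_self (by linarith)
    have hΦ6 : Φ c ∈ ball c (6 * h) := mem_n d1 (by linarith)
    have hc'6 : c' ∈ ball c (6 * h) := mem_n hcc (by linarith)
    have hζ6 : ζ ∈ ball c (6 * h) := ball_subset_ball (by linarith) hζ
    have hi := hI ζ hζ
    rw [hP _ hc6 _ hΦ6] at hi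
    rw [seg_congr (convex_ball _ _) k1 hΦ6 hc'6, seg_congr (convex_ball _ _) k2 hc'6 hζ6,
      hP _ hΦ6 _ hc'6, hP _ hc'6 _ hζ6, hP _ hc6 _ hζ6]
    linear_combination hi

lemma piecewise_lipschitz {γ : ℝ → ℂ} (h : PiecewiseC1On γ 0 1) :
    ∃ Λ > 0, ∀ s ∈ Icc (0:ℝ) 1, ∀ t ∈ Icc (0:ℝ) 1, s ≤ t → ‖γ t - γ s‖ ≤ Λ * (t - s) := by
  obtain ⟨-, n, u, hu0, hun, hmono, hC⟩ := h
  suffices H : ∀ j ≤ n, ∃ Λ > 0, ∀ s ∈ Icc (u 0) (u j), ∀ t ∈ Icc (u 0) (u j), s ≤ t →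
      ‖γ t - γ s‖ ≤ Λ * (t - s) by
    have := H n le_rfl
    rwa [hu0, hun] at this
  intro j
  induction j with
  | zero =>
    refine fun _ => ⟨1, one_pos, fun s hs t ht hst => ?_⟩
    have h1 : s = u 0 := le_antisymm hs.2 hs.1
    have h2 : t = u 0 := le_antisymm ht.2 ht.1
    simp [h1, h2]
  | succ j ih =>
    intro hj
    obtain ⟨Λ, hΛ, hl⟩ := ih (by omega)
    obtain ⟨K, hK⟩ := (hC j (by omega)).exists_lipschitzOnWith (by norm_num) (convex_Icc _ _)
      isCompact_Icc
    have hK' : ∀ s ∈ Icc (u j) (u (j+1)), ∀ t ∈ Icc (u j) (u (j+1)), s ≤ t →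
        ‖γ t - γ s‖ ≤ K * (t - s) := by
      intro s hs t ht hst
      have := hK.dist_le_mul t ht s hs
      rwa [dist_eq_norm, Real.dist_eq, abs_of_nonneg (by linarith)] at this
    have hK0 : (0:ℝ) ≤ K := K.2
    have hu0j : u 0 ≤ u j := mono_of_steps hmono j (by omega) 0 (by omega)
    refine ⟨Λ + K, by linarith, fun s hs t ht hst => ?_⟩
    rcases le_total t (u j) with h1 | h1
    · have := hl s ⟨hs.1, hst.trans h1⟩ t ⟨ht.1, h1⟩ hst
      nlinarith
    · rcases le_total s (u j) with h2 | h2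
      · have a1 := hl s ⟨hs.1, h2⟩ (u j) ⟨hu0j, le_rfl⟩ h2
        have a2 := hK' (u j) ⟨le_rfl, hmono j (by omega)⟩ t ⟨h1, ht.2⟩ h1
        have e : γ t - γ s = (γ t - γ (u j)) + (γ (u j) - γ s) := by ring
        rw [e]
        have := norm_add_le (γ t - γ (u j)) (γ (u j) - γ s)
        nlinarith
      · have := hK' s ⟨h2, hs.2⟩ t ⟨h1, ht.2⟩ hst
        nlinarith

/-- The deformation map. -/
def theta (Ω : Set ℂ) (c z : ℂ) : ℝ := infDist z Ω / (infDist z Ω + infDist (c - z) Ω)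

def Phi (Ω : Set ℂ) (c c' z : ℂ) : ℂ := z + (theta Ω c z : ℂ) * (c' - c)

section phi

variable {Ω : Set ℂ} {c c' : ℂ} {m x : ℝ}

lemma infDist_sum (hne : Ω.Nonempty) (hcl : IsClosed Ω)
    (hadd : ∀ ω₁ ∈ Ω, ∀ ω₂ ∈ Ω, ω₁ + ω₂ ∈ Ω) (c z : ℂ) :
    infDist c Ω ≤ infDist z Ω + infDist (c - z) Ω := by
  obtain ⟨w1, h1, e1⟩ := hcl.exists_infDist_eq_dist hne z
  obtain ⟨w2, h2, e2⟩ := hcl.exists_infDist_eq_dist hne (c - z)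
  rw [e1, e2]
  refine (infDist_le_dist_of_mem (hadd _ h1 _ h2)).trans ?_
  rw [dist_eq_norm, dist_eq_norm, dist_eq_norm]
  have : c - (w1 + w2) = (z - w1) + (c - z - w2) := by ring
  rw [this]
  exact norm_add_le _ _

lemma theta_nonneg (z : ℂ) : 0 ≤ theta Ω c z :=
  div_nonneg infDist_nonneg (add_nonneg infDist_nonneg infDist_nonneg)

lemma theta_le_one (z : ℂ) : theta Ω c z ≤ 1 :=
  div_le_one_of_le₀ (le_add_of_nonneg_right infDist_nonneg)
    (add_nonneg infDist_nonneg infDist_nonneg)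

lemma theta_le (hm : 0 < m) (hs : ∀ z, m ≤ infDist z Ω + infDist (c - z) Ω) (z : ℂ) :
    theta Ω c z ≤ infDist z Ω / m :=
  div_le_div_of_nonneg_left infDist_nonneg hm (hs z)

lemma theta_symm (hm : 0 < m) (hs : ∀ z, m ≤ infDist z Ω + infDist (c - z) Ω) (z : ℂ) :
    theta Ω c (c - z) = 1 - theta Ω c z := by
  unfold theta
  have := hs z
  rw [sub_sub_cancel]
  have h1 : infDist z Ω + infDist (c - z) Ω ≠ 0 := by linarith
  have h2 : infDist (c - z) Ω + infDist z Ω ≠ 0 := by linarith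
  field_simp
  ring

lemma Phi_symm (hm : 0 < m) (hs : ∀ z, m ≤ infDist z Ω + infDist (c - z) Ω) (z : ℂ) :
    c' - Phi Ω c c' z = Phi Ω c c' (c - z) := by
  unfold Phi
  rw [theta_symm hm hs]
  push_cast
  ring

lemma Phi_sub_norm (z : ℂ) : ‖Phi Ω c c' z - z‖ = theta Ω c z * ‖c' - c‖ := by
  unfold Phi
  rw [add_sub_cancel_left, norm_mul, Complex.norm_real, Real.norm_eq_abs,
    abs_of_nonneg (theta_nonneg z)]

lemma Phi_d (z : ℂ) : ‖Phi Ω c c' z - z‖ ≤ ‖c' - c‖ := by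
  rw [Phi_sub_norm]
  exact mul_le_of_le_one_left (norm_nonneg _) (theta_le_one z)

lemma Phi_d' (hm : 0 < m) (hs : ∀ z, m ≤ infDist z Ω + infDist (c - z) Ω)
    (hv : ‖c' - c‖ ≤ x * m) (z : ℂ) : ‖Phi Ω c c' z - z‖ ≤ x * infDist z Ω := by
  rw [Phi_sub_norm]
  have h1 := theta_le hm hs z
  calc theta Ω c z * ‖c' - c‖ ≤ (infDist z Ω / m) * (x * m) :=
        mul_le_mul h1 hv (norm_nonneg _) (div_nonneg infDist_nonneg hm.le)
    _ = x * infDist z Ω := by field_simp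

lemma infDist_diff (z w : ℂ) : |infDist z Ω - infDist w Ω| ≤ ‖z - w‖ := by
  have h1 := infDist_le_infDist_add_dist (s := Ω) (x := z) (y := w)
  have h2 := infDist_le_infDist_add_dist (s := Ω) (x := w) (y := z)
  rw [dist_comm] at h2
  rw [dist_eq_norm] at h1 h2
  rw [abs_le]; constructor <;> linarith

lemma theta_lip (hm : 0 < m) (hs : ∀ z, m ≤ infDist z Ω + infDist (c - z) Ω) (z w : ℂ) :
    |theta Ω c w - theta Ω c z| ≤ ‖w - z‖ / m := by
  unfold theta
  have ha := infDist_diff (Ω := Ω) w z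
  have hb := infDist_diff (Ω := Ω) (c - w) (c - z)
  have e : c - w - (c - z) = -(w - z) := by ring
  rw [e, norm_neg] at hb
  have a0 : 0 ≤ infDist z Ω := infDist_nonneg
  have b0 : 0 ≤ infDist (c - z) Ω := infDist_nonneg
  have s1 := hs z
  have s2 := hs w
  generalize infDist z Ω = a at *
  generalize infDist (c - z) Ω = b at *
  generalize infDist w Ω = a' at *
  generalize infDist (c - w) Ω = b' at *
  generalize ‖w - z‖ = d at *
  have p1 : 0 < a + b := by linarith
  have p2 : 0 < a' + b' := by linarith
  have hd : 0 ≤ d := (abs_nonneg _).trans ha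
  have e : a' / (a' + b') - a / (a + b) = ((a' - a) * b - a * (b' - b)) / ((a' + b') * (a + b)) := by
    field_simp
    ring
  rw [e, abs_div, abs_of_pos (mul_pos p2 p1), div_le_div_iff₀ (mul_pos p2 p1) hm]
  have h1 : |(a' - a) * b - a * (b' - b)| ≤ d * (a + b) := by
    calc _ ≤ |(a' - a) * b| + |a * (b' - b)| := abs_sub _ _
      _ = |a' - a| * b + a * |b' - b| := by rw [abs_mul, abs_mul, abs_of_nonneg a0, abs_of_nonneg b0]
      _ ≤ d * b + a * d := by gcongr
      _ = _ := by ring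
  calc _ ≤ d * (a + b) * (a' + b') := by gcongr
    _ = _ := by ring

lemma Phi_lip (hm : 0 < m) (hs : ∀ z, m ≤ infDist z Ω + infDist (c - z) Ω)
    (hv : ‖c' - c‖ ≤ x * m) (z w : ℂ) :
    ‖Phi Ω c c' w - Phi Ω c c' z‖ ≤ (1 + x) * ‖w - z‖ := by
  have e : Phi Ω c c' w - Phi Ω c c' z =
      (w - z) + ((theta Ω c w - theta Ω c z : ℝ) : ℂ) * (c' - c) := by
    unfold Phi; push_cast; ring
  rw [e]
  refine (norm_add_le _ _).trans ?_
  rw [norm_mul, Complex.norm_real, Real.norm_eq_abs]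
  have := mul_le_mul (theta_lip hm hs z w) hv (norm_nonneg _)
    (div_nonneg (norm_nonneg _) hm.le)
  have e2 : ‖w - z‖ / m * (x * m) = x * ‖w - z‖ := by field_simp
  linarith

lemma Phi_infDist (hm : 0 < m) (hs : ∀ z, m ≤ infDist z Ω + infDist (c - z) Ω)
    (hv : ‖c' - c‖ ≤ x * m) (z : ℂ) :
    (1 - x) * infDist z Ω ≤ infDist (Phi Ω c c' z) Ω := by
  have h1 := infDist_diff (Ω := Ω) (Phi Ω c c' z) z
  have h2 := Phi_d' hm hs hv z
  rw [abs_le] at h1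
  linarith

lemma Phi_zero (hm : 0 < m) (hs : ∀ z, m ≤ infDist z Ω + infDist (c - z) Ω)
    (hv : ‖c' - c‖ ≤ x * m) (hx : 0 ≤ x) (h0 : (0:ℂ) ∈ Ω) (z : ℂ) :
    ‖Phi Ω c c' z‖ ≤ (1 + x) * ‖z‖ := by
  have h1 : infDist z Ω ≤ ‖z‖ := by simpa using infDist_le_dist_of_mem (x := z) h0
  have h2 := Phi_d' hm hs hv z
  have e : Phi Ω c c' z = z + (Phi Ω c c' z - z) := by ring
  rw [e]
  refine (norm_add_le _ _).trans ?_
  nlinarith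

end phi

/-- Admissible elements. -/
def TT (Ω : Set ℂ) (R : ℝ) (f : ℂ → ℂ) (ε κ : ℝ) (z : ℂ) (F : ℂ → ℂ) : Prop :=
  ((0:ℂ) ∈ Ω ∧ ‖z‖ ≤ ε ∧ F = f) ∨ (κ ≤ infDist z Ω ∧ Good Ω R f z F)

/-- Standing assumptions. -/
structure Base (Ω : Set ℂ) (R : ℝ) (f : ℂ → ℂ) : Prop where
  hne : Ω.Nonempty
  hcl : IsClosed Ω
  hR : 0 < R
  han : AnalyticOnNhd ℂ f (ball 0 R)
  hpunct : ∀ ζ ∈ Metric.ball (0:ℂ) R, ζ ≠ 0 → ζ ∉ Ω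
  hf : CP Ω R f

section tt
variable {Ω : Set ℂ} {R : ℝ} {f : ℂ → ℂ} {ε κ H : ℝ}

lemma sub_ball0 {z : ℂ} (h : ‖z‖ + H ≤ R) : ball z H ⊆ ball 0 R := by
  apply ball_subset_ball'
  rw [dist_zero_right]; linarith

lemma TT.analytic (hb : Base Ω R f) (h1 : ε + H ≤ R) (h2 : H ≤ κ) {z F} (h : TT Ω R f ε κ z F) :
    AnalyticOnNhd ℂ F (ball z H) := by
  rcases h with ⟨_, hz, rfl⟩ | ⟨hz, hg⟩
  · exact hb.han.mono (sub_ball0 (by linarith))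
  · exact hg.1.mono (ball_subset_ball (by linarith))

lemma TT.move (hb : Base Ω R f) (hH : 0 < H) {c c' : ℂ} {m x : ℝ} (hx : 0 ≤ x) (hx1 : x ≤ 1 / 2)
    (hm : 0 < m) (hs : ∀ z, m ≤ infDist z Ω + infDist (c - z) Ω) (hv : ‖c' - c‖ ≤ x * m)
    {ε' κ' : ℝ} (hε : (1 + x) * ε ≤ ε') (hκ : κ' ≤ (1 - x) * κ) (h2 : H ≤ κ) (h3 : H ≤ κ')
    {z F} (h : TT Ω R f ε κ z F) :
    ∃ F', TT Ω R f ε' κ' (Phi Ω c c' z) F' ∧ EqOn F F' (ball z H ∩ ball (Phi Ω c c' z) H) := by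
  rcases h with ⟨h0, hz, rfl⟩ | ⟨hz, hg⟩
  · refine ⟨F, Or.inl ⟨h0, ?_, rfl⟩, fun _ _ => rfl⟩
    refine (Phi_zero hm hs hv hx h0 z).trans (le_trans ?_ hε)
    gcongr
  · have hd := Phi_d' hm hs hv z
    have hi := Phi_infDist hm hs hv z
    have hpos : 0 < infDist z Ω := by linarith
    have hmem : Phi Ω c c' z ∈ ball z (infDist z Ω) := by
      rw [mem_ball, dist_eq_norm]; nlinarith
    have hk : κ' ≤ infDist (Phi Ω c c' z) Ω := by
      refine hκ.trans (le_trans ?_ hi)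
      exact mul_le_mul_of_nonneg_left hz (by linarith)
    obtain ⟨F', hF', e⟩ := good_move hb.hcl hb.hne hb.hf hg hmem
    exact ⟨F', Or.inr ⟨hk, hF'⟩, e.mono (inter_subset_inter (ball_subset_ball (by linarith))
      (ball_subset_ball (by linarith)))⟩

lemma TT.jump (hb : Base Ω R f) (hH : 0 < H) {ε' κ' : ℝ} (h1 : ε + H ≤ R) (h2 : H ≤ κ)
    (h3 : H ≤ κ') {z w F} (hzw : ‖w - z‖ < H) (hw : κ' ≤ infDist w Ω) (h : TT Ω R f ε κ z F) :
    ∃ F', TT Ω R f ε' κ' w F' ∧ EqOn F F' (ball z H ∩ ball w H) := by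
  have hwΩ : w ∉ Ω := (hb.hcl.notMem_iff_infDist_pos hb.hne).2 (by linarith)
  rcases h with ⟨h0, hz, rfl⟩ | ⟨hz, hg⟩
  · have hsub : ball z H ⊆ ball 0 R := sub_ball0 (by linarith)
    have hwR : w ∈ ball (0:ℂ) R := hsub (by rwa [mem_ball, dist_eq_norm])
    obtain ⟨F', hF', e⟩ := good_base hb.hcl hb.hne hb.hR hb.hf hb.han hb.hpunct hwR hwΩ
    exact ⟨F', Or.inr ⟨hw, hF'⟩, e.mono (inter_subset_inter hsub
      (ball_subset_ball (by linarith)))⟩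
  · obtain ⟨F', hF', e⟩ := good_move hb.hcl hb.hne hb.hf hg (w := w)
      (by rw [mem_ball, dist_eq_norm]; linarith)
    exact ⟨F', Or.inr ⟨hw, hF'⟩, e.mono (inter_subset_inter (ball_subset_ball (by linarith))
      (ball_subset_ball (by linarith)))⟩

lemma Base.infDist_ge (hb : Base Ω R f) {z : ℂ} {κ : ℝ} (h1 : ‖z‖ + κ ≤ R)
    (h2 : (0:ℂ) ∈ Ω → κ ≤ ‖z‖) : κ ≤ infDist z Ω := by
  rw [le_infDist hb.hne]
  intro ω hω
  by_cases h0 : ω = 0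
  · subst h0
    simpa using h2 hω
  · have : R ≤ ‖ω‖ := by
      by_contra hcon
      exact hb.hpunct ω (by rw [mem_ball_zero_iff]; linarith) h0 hω
    rw [dist_eq_norm]
    have e : ω = z - (z - ω) := by ring
    have := norm_sub_le z (z - ω)
    rw [← e] at this
    linarith

lemma Base.zero (hb : Base Ω R f) : ∃ F₀, EqOn f F₀ (ball 0 R) ∧
    ∀ ε κ, 0 ≤ ε → κ ≤ R → TT Ω R f ε κ 0 F₀ := by
  by_cases h0 : (0:ℂ) ∈ Ω
  · exact ⟨f, fun _ _ => rfl, fun ε κ hε _ => Or.inl ⟨h0, by simpa using hε, rfl⟩⟩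
  · obtain ⟨F', hF', e⟩ := good_base hb.hcl hb.hne hb.hR hb.hf hb.han hb.hpunct
      (mem_ball_self hb.hR) h0
    have hR' : R ≤ infDist 0 Ω := hb.infDist_ge (by simp) (fun h => absurd h h0)
    exact ⟨F', (fun x hx => e ⟨hx, ball_subset_ball hR' hx⟩),
      fun ε κ _ hκ => Or.inr ⟨hκ.trans hR', hF'⟩⟩

lemma Base.initial (hb : Base Ω R f) (hκ0 : 0 < κ) (h1 : κ ≤ ε) (h2 : κ ≤ R / 2) (h3 : H ≤ κ)
    {z : ℂ} (hz : ‖z‖ ≤ R / 4) : ∃ F, TT Ω R f ε κ z F ∧ EqOn f F (ball z H) := by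
  have hR := hb.hR
  by_cases h0 : (0:ℂ) ∈ Ω ∧ ‖z‖ ≤ ε
  · exact ⟨f, Or.inl ⟨h0.1, h0.2, rfl⟩, fun _ _ => rfl⟩
  · have hk : κ ≤ infDist z Ω := hb.infDist_ge (by linarith) (fun h => by
      by_contra hcon
      exact h0 ⟨h, by linarith⟩)
    have hzΩ : z ∉ Ω := (hb.hcl.notMem_iff_infDist_pos hb.hne).2 (by linarith)
    obtain ⟨F', hF', e⟩ := good_base hb.hcl hb.hne hb.hR hb.hf hb.han hb.hpunct
      (w := z) (by rw [mem_ball_zero_iff]; linarith) hzΩ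
    exact ⟨F', Or.inr ⟨hk, hF'⟩, fun x hx => e ⟨sub_ball0 (H := H) (by linarith) hx,
      ball_subset_ball (by linarith) hx⟩⟩

end tt

/-- The initial chain. -/
lemma init_chain {A B : ℂ → (ℂ → ℂ) → Prop} {c : ℂ} {h δ R : ℝ} {f g F₀ G₀ : ℂ → ℂ}
    (hh : 0 < h) (hδ : 0 < δ) (hδh : δ ≤ h) (hR : 10 * h ≤ R / 4) (hc : ‖c‖ ≤ R / 4)
    (hf : AnalyticOnNhd ℂ f (ball 0 R)) (hg : AnalyticOnNhd ℂ g (ball 0 R))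
    (hA0 : A 0 F₀) (hB0 : B 0 G₀) (eF : EqOn f F₀ (ball 0 R)) (eG : EqOn g G₀ (ball 0 R))
    (hA : ∀ z, ‖z‖ ≤ R / 4 → ∃ F, A z F ∧ EqOn f F (ball z (10 * h)))
    (hB : ∀ z, ‖z‖ ≤ R / 4 → ∃ F, B z F ∧ EqOn g F (ball z (10 * h))) :
    ∃ F I, Chain A B c (10 * h) δ F₀ c F G₀ I ∧
      ∀ ζ ∈ ball c (3 * h), I ζ + seg (cker F G₀ ζ) c ζ = conv f g ζ := by
  obtain ⟨M, hM⟩ := exists_nat_gt (‖c‖ / δ)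
  have hM0 : (0:ℝ) < M := lt_of_le_of_lt (div_nonneg (norm_nonneg _) hδ.le) hM
  have hMd : ‖c‖ / M ≤ δ := by
    rw [div_lt_iff₀ hδ] at hM
    rw [div_le_iff₀ hM0]; linarith
  have hfr : ∀ j : ℕ, j ≤ M → ‖((j / M : ℝ) : ℂ) * c‖ ≤ R / 4 ∧ ‖c - ((j / M : ℝ) : ℂ) * c‖ ≤ R / 4 := by
    intro j hj
    have h1 : (j / M : ℝ) ≤ 1 := by
      rw [div_le_one hM0]; exact_mod_cast hj
    have h0 : (0:ℝ) ≤ j / M := by positivity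
    constructor
    · rw [norm_mul, Complex.norm_real, Real.norm_eq_abs, abs_of_nonneg h0]
      nlinarith [norm_nonneg c]
    · have e : c - ((j / M : ℝ) : ℂ) * c = ((1 - j / M : ℝ) : ℂ) * c := by push_cast; ring
      rw [e, norm_mul, Complex.norm_real, Real.norm_eq_abs, abs_of_nonneg (by linarith)]
      nlinarith [norm_nonneg c]
  have hRpos : 0 < R := by linarith
  have hζR : ∀ ζ ∈ ball c (3 * h), ‖ζ‖ < R / 2 := by
    intro ζ hζ
    rw [mem_ball, dist_eq_norm] at hζ
    have : ζ = (ζ - c) + c := by ring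
    rw [this]
    linarith [norm_add_le (ζ - c) c]
  have hprim : ∀ ζ ∈ ball c (3 * h), AnalyticOnNhd ℂ (cker f g ζ) (ball 0 (R / 2)) := by
    intro ζ hζ
    refine ker_analytic hf hg (fun ξ hξ => ball_subset_ball (by linarith) hξ) ?_
    intro ξ hξ
    rw [mem_ball_zero_iff] at *
    linarith [norm_sub_le ζ ξ, hζR ζ hζ]
  have h0b : (0:ℂ) ∈ ball (0:ℂ) (R / 2) := mem_ball_self (by linarith)
  have main : ∀ j : ℕ, j ≤ M → ∃ F G I, Chain A B c (10 * h) δ F₀ (((j / M : ℝ) : ℂ) * c) F G I ∧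
      EqOn f F (ball (((j / M : ℝ) : ℂ) * c) (10 * h)) ∧
      EqOn g G (ball (c - ((j / M : ℝ) : ℂ) * c) (10 * h)) ∧
      ∀ ζ ∈ ball c (3 * h), I ζ = seg (cker f g ζ) 0 (((j / M : ℝ) : ℂ) * c) := by
    intro j
    induction j with
    | zero =>
      intro _
      obtain ⟨G, hG, e⟩ := hB c hc
      have e0 : (((0:ℕ) / M : ℝ) : ℂ) * c = 0 := by simp
      rw [e0]
      refine ⟨F₀, G, _, Chain.start G hA0 (by rwa [sub_zero]),
        eF.mono (ball_subset_ball (by linarith)), by rwa [sub_zero], fun ζ _ => ?_⟩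
      simp [seg]
    | succ j ih =>
      intro hj
      obtain ⟨F, G, I, hC, e1, e2, hI⟩ := ih (by omega)
      obtain ⟨b1, b2⟩ := hfr j (by omega)
      obtain ⟨b1', b2'⟩ := hfr (j+1) hj
      have hstep : ‖(((j + 1 : ℕ) / M : ℝ) : ℂ) * c - ((j / M : ℝ) : ℂ) * c‖ ≤ δ := by
        have e : (((j + 1 : ℕ) / M : ℝ) : ℂ) * c - ((j / M : ℝ) : ℂ) * c = ((1 / M : ℝ) : ℂ) * c := by
          push_cast; ring
        rw [e, norm_mul, Complex.norm_real, Real.norm_eq_abs, abs_of_nonneg (by positivity)]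
        calc 1 / (M:ℝ) * ‖c‖ = ‖c‖ / M := by ring
          _ ≤ δ := hMd
      generalize ((j / M : ℝ) : ℂ) * c = z at *
      generalize (((j + 1 : ℕ) / M : ℝ) : ℂ) * c = w at *
      obtain ⟨F', hF', e1'⟩ := hA w b1'
      obtain ⟨G', hG', e2'⟩ := hB (c - w) b2'
      refine ⟨F', G', _, Chain.link z w F G I F' G' hC hstep hF' hG' ?_ ?_, e1', e2', ?_⟩
      · exact fun ξ hξ => (e1 hξ.1).symm.trans (e1' hξ.2)
      · exact fun ξ hξ => (e2 hξ.1).symm.trans (e2' hξ.2)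
      · intro ζ hζ
        beta_reduce
        rw [hI ζ hζ]
        obtain ⟨P, hP⟩ := seg_primitive (hprim ζ hζ)
        have hzb : z ∈ ball (0:ℂ) (R / 2) := by rw [mem_ball_zero_iff]; linarith
        have hwb : w ∈ ball (0:ℂ) (R / 2) := by rw [mem_ball_zero_iff]; linarith
        have hcong : seg (cker F G ζ) z w = seg (cker f g ζ) z w := by
          refine seg_congr (convex_ball z (2 * h)) ?_ (mem_ball_self (by linarith))
            (mem_n hstep (by linarith))
          intro ξ hξ
          unfold cker
          rw [e1 (ball_subset_ball (by linarith) hξ),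
            e2 (mem_c hζ hξ (d := 0) (by simp) (by linarith))]
        rw [hcong, hP _ h0b _ hzb, hP _ hzb _ hwb, hP _ h0b _ hwb]
        ring
  obtain ⟨F, G, I, hC, e1, e2, hI⟩ := main M le_rfl
  rw [div_self hM0.ne', Complex.ofReal_one, one_mul] at hC e1 e2 hI
  rw [sub_self] at e2
  have hF := hC.good.1
  refine ⟨F, _, Chain.link c c F G I F G₀ hC (by simpa using hδ.le) hF (by rwa [sub_self])
    (fun _ _ => rfl) ?_, ?_⟩
  · rw [sub_self]
    exact fun ξ hξ => (e2 hξ.1).symm.trans (eG (ball_subset_ball (by linarith) hξ.1))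
  · intro ζ hζ
    have hz : seg (cker F G ζ) c c = 0 := by simp [seg]
    beta_reduce
    rw [hz, add_zero, hI ζ hζ, conv_eq_seg]
    have hcong : seg (cker F G₀ ζ) c ζ = seg (cker f g ζ) c ζ := by
      refine seg_congr (convex_ball c (3 * h)) ?_ (mem_ball_self (by linarith)) hζ
      intro ξ hξ
      unfold cker
      rw [← e1 (ball_subset_ball (by linarith) hξ), ← eG]
      rw [mem_ball, dist_eq_norm] at *
      rw [sub_zero]
      have : ζ - ξ = (ζ - c) - (ξ - c) := by ring
      rw [this]
      linarith [norm_sub_le (ζ - c) (ξ - c)]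
    obtain ⟨P, hP⟩ := seg_primitive (hprim ζ hζ)
    have hcb : c ∈ ball (0:ℂ) (R / 2) := by rw [mem_ball_zero_iff]; linarith
    have hζb : ζ ∈ ball (0:ℂ) (R / 2) := by rw [mem_ball_zero_iff]; exact hζR ζ hζ
    rw [hcong, hP _ h0b _ hcb, hP _ hcb _ hζb, hP _ h0b _ hζb]
    ring

lemma Base.of_le {Ω : Set ℂ} {R R' : ℝ} {f : ℂ → ℂ} (hne : Ω.Nonempty) (hcl : IsClosed Ω)
    (hR : 0 < R) (hle : R ≤ R') (han : AnalyticOnNhd ℂ f (ball 0 R'))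
    (hp : ∀ ζ ∈ Metric.ball (0:ℂ) R', ζ ≠ 0 → ζ ∉ Ω) (hf : CP Ω R' f) : Base Ω R f where
  hne := hne
  hcl := hcl
  hR := hR
  han := han.mono (ball_subset_ball hle)
  hpunct := fun ζ hζ => hp ζ (ball_subset_ball hle hζ)
  hf := fun γ h1 h2 => hf γ h1 (ball_subset_ball hle h2)

/-- Dependent choice up to `N`. -/
lemma seq_choice {α : Type*} (N : ℕ) (P : ℕ → α → Prop) (r : ℕ → α → α → Prop) (a₀ : α)
    (h0 : P 0 a₀) (hs : ∀ k < N, ∀ a, P k a → ∃ b, P (k + 1) b ∧ r k a b) :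
    ∃ u : ℕ → α, u 0 = a₀ ∧ (∀ k ≤ N, P k (u k)) ∧ ∀ k < N, r k (u k) (u (k + 1)) := by
  classical
  have hs' : ∀ k a, ∃ b, k < N → P k a → P (k + 1) b ∧ r k a b := by
    intro k a
    by_cases h : k < N ∧ P k a
    · obtain ⟨b, hb⟩ := hs k h.1 a h.2
      exact ⟨b, fun _ _ => hb⟩
    · exact ⟨a, fun h1 h2 => absurd ⟨h1, h2⟩ h⟩
  choose nx hnx using hs'
  let u : ℕ → α := fun k => Nat.rec a₀ nx k
  have hP : ∀ k ≤ N, P k (u k) := by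
    intro k
    induction k with
    | zero => exact fun _ => h0
    | succ k ih => exact fun hk => (hnx k (u k) (by omega) (ih (by omega))).1
  exact ⟨u, rfl, hP, fun k hk => (hnx k (u k) hk (hP k hk.le)).2⟩

/-- From a finite sequence of elements to an analytic continuation. -/
lemma contAlong_of_seq {γ : ℝ → ℂ} {φ : ℂ → ℂ} {Λ h : ℝ} {N : ℕ} (hN : 0 < N) (hh : 0 < h)
    (hΛ : ∀ s ∈ Icc (0:ℝ) 1, ∀ t ∈ Icc (0:ℝ) 1, s ≤ t → ‖γ t - γ s‖ ≤ Λ * (t - s))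
    (hΛ0 : 0 < Λ) (hΛN : Λ / N ≤ h) (J : ℕ → ℂ → ℂ)
    (hJ : ∀ k ≤ N, AnalyticOnNhd ℂ (J k) (ball (γ (k / N)) (3 * h)))
    (hJJ : ∀ k < N, EqOn (J (k + 1)) (J k) (ball (γ (k / N)) (3 * h)))
    (hJ0 : EqOn (J 0) φ (ball (γ 0) (3 * h))) : ContinuableAlong φ γ 0 1 := by
  have hN' : (0:ℝ) < N := by exact_mod_cast hN
  have hfl : ∀ t ∈ Icc (0:ℝ) 1, ⌊N * t⌋₊ ≤ N := by
    intro t ht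
    apply Nat.floor_le_of_le
    nlinarith [ht.2]
  have hsub : ∀ t ∈ Icc (0:ℝ) 1, ball (γ t) h ⊆ ball (γ ((⌊N * t⌋₊ : ℝ) / N)) (3 * h) := by
    intro t ht
    apply ball_subset_ball'
    have h0 : (0:ℝ) ≤ N * t := mul_nonneg hN'.le ht.1
    have h1 := Nat.floor_le h0
    have h2 := Nat.lt_floor_add_one (N * t)
    have hle : (⌊N * t⌋₊ : ℝ) / N ≤ t := by rw [div_le_iff₀ hN']; linarith
    have := hΛ _ ⟨by positivity, hle.trans ht.2⟩ t ht hle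
    rw [dist_eq_norm]
    have h3 : t - (⌊N * t⌋₊ : ℝ) / N ≤ 1 / N := by
      rw [sub_le_iff_le_add, ← add_div, le_div_iff₀ hN']; linarith
    have h4 : Λ * (t - (⌊N * t⌋₊ : ℝ) / N) ≤ Λ / N := by
      calc _ ≤ Λ * (1 / N) := by gcongr
        _ = _ := by ring
    linarith
  have comp : ∀ s ∈ Icc (0:ℝ) 1, ∀ t ∈ Icc (0:ℝ) 1, s ≤ t → t - s < 1 / N →
      EqOn (J ⌊N * s⌋₊) (J ⌊N * t⌋₊) (ball (γ s) h) := by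
    intro s hs t ht hst hlt
    have h1 : ⌊N * s⌋₊ ≤ ⌊N * t⌋₊ := Nat.floor_mono (by gcongr)
    have h2 : ⌊N * t⌋₊ ≤ ⌊N * s⌋₊ + 1 := by
      apply Nat.le_of_lt_succ
      rw [Nat.floor_lt (mul_nonneg hN'.le ht.1)]
      rw [lt_div_iff₀ hN'] at hlt
      have := Nat.lt_floor_add_one (N * s)
      push_cast
      linarith
    rcases h1.eq_or_lt with e | e
    · rw [e]; exact fun _ _ => rfl
    · have e' : ⌊N * t⌋₊ = ⌊N * s⌋₊ + 1 := by omega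
      rw [e']
      have := hfl t ht
      exact fun x hx => ((hJJ _ (by omega)) (hsub s hs hx)).symm
  refine ⟨J ⌊(N:ℝ) * 1⌋₊, fun t => J ⌊N * t⌋₊, fun _ => h, ?_, ?_, ?_, ?_⟩
  · exact fun t ht => ⟨hh, (hJ _ (hfl t ht)).mono (hsub t ht)⟩
  · intro t ht
    refine ⟨1 / N, by positivity, fun t' ht' hd => ?_⟩
    rw [abs_lt] at hd
    rcases le_total t t' with hle | hle
    · exact (comp t ht t' ht' hle (by linarith)).mono inter_subset_left
    · exact (comp t' ht' t ht hle (by linarith)).symm.mono inter_subset_right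
  · simp only [mul_zero, Nat.floor_zero]
    exact hJ0.eventuallyEq_of_mem (ball_mem_nhds _ (by linarith))
  · exact Eventually.of_forall fun _ => rfl

lemma pow_bounds {a x : ℝ} {N k : ℕ} (hk : k ≤ N) (hx0 : 0 ≤ x) (hx : x * N ≤ a)
    (hx1 : x ≤ 1 / 2) :
    1 ≤ (1 + x) ^ k ∧ (1 + x) ^ k ≤ Real.exp (2 * a) ∧ (1 - x) ^ k ≤ 1 ∧
      1 ≤ (1 - x) ^ k * Real.exp (2 * a) := by
  have hkN : x * k ≤ a := le_trans (by gcongr) hx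
  have hk0 : 0 ≤ x * k := by positivity
  refine ⟨one_le_pow₀ (by linarith), ?_, pow_le_one₀ (by linarith) (by linarith), ?_⟩
  · calc (1 + x) ^ k ≤ (Real.exp x) ^ k := by
          gcongr; linarith [Real.add_one_le_exp x]
      _ = Real.exp (k * x) := by rw [← Real.exp_nat_mul]
      _ ≤ _ := Real.exp_le_exp.2 (by nlinarith)
  · calc (1:ℝ) ≤ ((1 - x) * Real.exp (2 * x)) ^ k := by
          apply one_le_pow₀
          nlinarith [Real.add_one_le_exp (2 * x)]
      _ = (1 - x) ^ k * Real.exp (k * (2 * x)) := by rw [mul_pow, ← Real.exp_nat_mul]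
      _ ≤ _ := by
          have : (0:ℝ) ≤ (1 - x) ^ k := pow_nonneg (by linarith) k
          exact mul_le_mul_of_nonneg_left (Real.exp_le_exp.2 (by linarith)) this

lemma step_data {Ω : Set ℂ} {R : ℝ} {f g F₀ G₀ : ℂ → ℂ} (bf : Base Ω R f) (bg : Base Ω R g)
    (hF0 : ∀ ε κ, 0 ≤ ε → κ ≤ R → TT Ω R f ε κ 0 F₀)
    (hG0 : ∀ ε κ, 0 ≤ ε → κ ≤ R → TT Ω R g ε κ 0 G₀)
    {c c' : ℂ} {h δ m x ε κ : ℝ} (hh : 0 < h) (hδ : δ ≤ h) (hm : 0 < m) (hx : 0 ≤ x)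
    (hx1 : x ≤ 1 / 2) (hs : ∀ z, m ≤ infDist z Ω + infDist (c - z) Ω)
    (hc' : m ≤ infDist c' Ω)
    (hv : ‖c' - c‖ ≤ x * m) (hvδ : ‖c' - c‖ ≤ δ) (hδ0 : 0 ≤ δ)
    (hε0 : 0 ≤ ε) (hε1 : (1 + x) * ε + 10 * h ≤ R)
    (hκm : κ ≤ m) (hκR : κ ≤ R) (hκ0 : 0 ≤ κ) (hκh : 10 * h ≤ (1 - x) * κ) :
    StepData (TT Ω R f ε κ) (TT Ω R g ε κ) (TT Ω R f ((1 + x) * ε) ((1 - x) * κ))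
      (TT Ω R g ((1 + x) * ε) ((1 - x) * κ)) c c' h δ ((1 + x) * δ) (Phi Ω c c') F₀ G₀ := by
  have k1 : (1 - x) * κ ≤ κ := by nlinarith
  have k2 : ε ≤ (1 + x) * ε := by nlinarith
  have k3 : δ ≤ (1 + x) * δ := by nlinarith
  refine ⟨hh, hδ, fun z F hF => hF.analytic bf (by linarith) (by linarith),
    fun z F hF => hF.analytic bg (by linarith) (by linarith),
    fun z F hF => hF.analytic bf (by linarith) (by linarith),
    fun z F hF => hF.analytic bg (by linarith) (by linarith), ?_, ?_, ?_, ?_, ?_, ?_, ?_, ?_, ?_,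
    ?_, ?_, ?_⟩
  · exact fun z F hF => hF.move bf (by linarith) hx hx1 hm hs hv le_rfl le_rfl (by linarith) hκh
  · intro z G hG
    rw [Phi_symm hm hs]
    exact hG.move bg (by linarith) hx hx1 hm hs hv le_rfl le_rfl (by linarith) hκh
  · exact fun z => (Phi_d z).trans (hvδ.trans hδ)
  · intro z
    rw [Phi_symm hm hs]
    exact (Phi_d _).trans (hvδ.trans hδ)
  · intro z w hzw
    exact (Phi_lip hm hs hv z w).trans (by gcongr)
  · exact hF0 _ _ (by linarith) (by linarith)
  · exact hG0 _ _ (by linarith) (by linarith)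
  · exact fun G hG => hG.jump bg (by linarith) (by linarith) (by linarith) hκh (by linarith)
      (by linarith)
  · exact fun G hG => hG.jump bf (by linarith) (by linarith) (by linarith) hκh (by linarith)
      (by linarith)
  · exact hvδ.trans hδ
  · exact (Phi_d 0).trans (hvδ.trans k3)
  · rw [Phi_symm hm hs, sub_self]
    have := Phi_d (Ω := Ω) (c := c) (c' := c') 0
    rw [sub_zero] at this
    exact this.trans (hvδ.trans k3)

theorem main_cont {Ω : Set ℂ} {R : ℝ} {f g : ℂ → ℂ} (bf : Base Ω R f) (bg : Base Ω R g)
    (hadd : ∀ ω₁ ∈ Ω, ∀ ω₂ ∈ Ω, ω₁ + ω₂ ∈ Ω) : CP Ω (R / 4) (conv f g) := by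
  intro γ hγ hγ0 hne0 hγΩ
  have hR := bf.hR
  obtain ⟨Λ, hΛ0, hΛ⟩ := piecewise_lipschitz hγ
  obtain ⟨m, hm, hmγ⟩ : ∃ m > 0, ∀ t ∈ Icc (0:ℝ) 1, m ≤ infDist (γ t) Ω := by
    obtain ⟨t₀, ht₀, hmin⟩ := isCompact_Icc.exists_isMinOn (nonempty_Icc.2 zero_le_one)
      ((continuous_infDist_pt Ω).comp_continuousOn hγ.1)
    exact ⟨_, (bf.hcl.notMem_iff_infDist_pos bf.hne).1 (hγΩ t₀ ht₀), fun t ht => hmin ht⟩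
  have hs : ∀ t ∈ Icc (0:ℝ) 1, ∀ z, m ≤ infDist z Ω + infDist (γ t - z) Ω := fun t ht z =>
    (hmγ t ht).trans (infDist_sum bf.hne bf.hcl hadd _ _)
  set E := Real.exp (2 * (Λ / m)) with hE
  have hE1 : 1 ≤ E := Real.one_le_exp (by positivity)
  have hE0 : 0 < E := by linarith
  obtain ⟨ε, hε⟩ : ∃ ε, ε = R / (4 * E) := ⟨_, rfl⟩
  have hε0 : 0 < ε := by rw [hε]; positivity
  have hεE : ε * E = R / 4 := by rw [hε]; field_simp
  obtain ⟨κ, hκ⟩ : ∃ κ, κ = min ε (min m (R / 4)) := ⟨_, rfl⟩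
  have hκ0 : 0 < κ := by rw [hκ]; exact lt_min hε0 (lt_min hm (by linarith))
  have hκε : κ ≤ ε := by rw [hκ]; exact min_le_left _ _
  have hκm : κ ≤ m := by rw [hκ]; exact (min_le_right _ _).trans (min_le_left _ _)
  have hκR : κ ≤ R / 4 := by rw [hκ]; exact (min_le_right _ _).trans (min_le_right _ _)
  obtain ⟨h, hh⟩ : ∃ h, h = κ / (10 * E) := ⟨_, rfl⟩
  have hh0 : 0 < h := by rw [hh]; positivity
  have hhE : 10 * h * E = κ := by rw [hh]; field_simp
  have hhκ : 10 * h ≤ κ := by nlinarith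
  obtain ⟨δ, hδ⟩ : ∃ δ, δ = h / E := ⟨_, rfl⟩
  have hδ0 : 0 < δ := by rw [hδ]; positivity
  have hδE : δ * E = h := by rw [hδ]; field_simp
  have hδh : δ ≤ h := by nlinarith
  obtain ⟨N, hNgt⟩ := exists_nat_gt (max (Λ / δ) (2 * (Λ / m)))
  have hN1 : Λ / δ < N := lt_of_le_of_lt (le_max_left _ _) hNgt
  have hN2 : 2 * (Λ / m) < N := lt_of_le_of_lt (le_max_right _ _) hNgt
  have hN0 : (0:ℝ) < N := lt_trans (by positivity) hN1
  have hNpos : 0 < N := by exact_mod_cast hN0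
  have hΛδ : Λ / N ≤ δ := by
    rw [div_lt_iff₀ hδ0] at hN1
    rw [div_le_iff₀ hN0]; linarith
  obtain ⟨x, hxd⟩ : ∃ x, x = Λ / m / N := ⟨_, rfl⟩
  have hx0 : 0 ≤ x := by rw [hxd]; positivity
  have hx1 : x ≤ 1 / 2 := by rw [hxd, div_le_iff₀ hN0]; linarith
  have hxN : x * N ≤ Λ / m := by rw [hxd]; field_simp; rfl
  have hxm : x * m = Λ / N := by rw [hxd]; field_simp
  have hpow : ∀ k ≤ N, _ := fun k hk => pow_bounds (k := k) hk hx0 hxN hx1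
  rw [← hE] at hpow
  have hIcc : ∀ k : ℕ, k ≤ N → (k / N : ℝ) ∈ Icc (0:ℝ) 1 := fun k hk =>
    ⟨by positivity, by rw [div_le_one hN0]; exact_mod_cast hk⟩
  have hvk : ∀ k < N, ‖γ ((k + 1 : ℕ) / N) - γ (k / N)‖ ≤ Λ / N := by
    intro k hk
    have e : ((k + 1 : ℕ) / N : ℝ) - k / N = 1 / N := by push_cast; ring
    have := hΛ _ (hIcc k hk.le) _ (hIcc (k + 1) hk) (by
      rw [← sub_nonneg, e]; positivity)
    rw [e] at this
    rwa [mul_one_div] at this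
  obtain ⟨F₀, eF, hF0⟩ := bf.zero
  obtain ⟨G₀, eG, hG0⟩ := bg.zero
  have hG₀an : AnalyticOnNhd ℂ G₀ (ball 0 (10 * h)) :=
    (hG0 0 (R / 4) le_rfl (by linarith)).analytic bg (by linarith) (by linarith)
  have hεk : ∀ k ≤ N, ε * (1 + x) ^ k ≤ R / 4 := by
    intro k hk
    rw [← hεE]
    exact mul_le_mul_of_nonneg_left (hpow k hk).2.1 hε0.le
  have hκk : ∀ k ≤ N, 10 * h ≤ κ * (1 - x) ^ k ∧ κ * (1 - x) ^ k ≤ κ := by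
    intro k hk
    refine ⟨?_, mul_le_of_le_one_right hκ0.le (hpow k hk).2.2.1⟩
    have := (hpow k hk).2.2.2
    calc 10 * h ≤ 10 * h * ((1 - x) ^ k * E) := le_mul_of_one_le_right (by positivity) this
      _ = 10 * h * E * (1 - x) ^ k := by ring
      _ = _ := by rw [hhE]
  have hδk : ∀ k ≤ N, δ ≤ δ * (1 + x) ^ k ∧ δ * (1 + x) ^ k ≤ h := by
    intro k hk
    refine ⟨le_mul_of_one_le_right hδ0.le (hpow k hk).1, ?_⟩
    rw [← hδE]
    exact mul_le_mul_of_nonneg_left (hpow k hk).2.1 hδ0.le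
  let A : ℕ → ℂ → (ℂ → ℂ) → Prop := fun k => TT Ω R f (ε * (1 + x) ^ k) (κ * (1 - x) ^ k)
  let B : ℕ → ℂ → (ℂ → ℂ) → Prop := fun k => TT Ω R g (ε * (1 + x) ^ k) (κ * (1 - x) ^ k)
  have hAan : ∀ k ≤ N, ∀ z F, A k z F → AnalyticOnNhd ℂ F (ball z (10 * h)) := by
    intro k hk z F hF
    exact TT.analytic bf (by linarith [hεk k hk]) (hκk k hk).1 hF
  have hBan : ∀ k ≤ N, ∀ z F, B k z F → AnalyticOnNhd ℂ F (ball z (10 * h)) := by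
    intro k hk z F hF
    exact TT.analytic bg (by linarith [hεk k hk]) (hκk k hk).1 hF
  have hγ0' : ‖γ ((0:ℕ) / N)‖ ≤ R / 4 := by
    simp only [Nat.cast_zero, zero_div]
    rw [mem_ball_zero_iff] at hγ0
    exact hγ0.le
  obtain ⟨Fi, Ii, hCi, hJi⟩ := init_chain (A := A 0) (B := B 0) (c := γ ((0:ℕ) / N)) (h := h)
    (δ := δ * (1 + x) ^ 0) (f := f) (g := g) (F₀ := F₀) (G₀ := G₀) (R := R) hh0
    (by simpa using hδ0) (by simpa using hδh) (by linarith) hγ0' bf.han bg.han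
    (hF0 _ _ (by simpa using hε0.le) (by simp; linarith))
    (hG0 _ _ (by simpa using hε0.le) (by simp; linarith)) eF eG
    (fun z hz => bf.initial (by simpa using hκ0) (by simpa using hκε) (by simp; linarith)
      (by simpa using hhκ) hz)
    (fun z hz => bg.initial (by simpa using hκ0) (by simpa using hκε) (by simp; linarith)
      (by simpa using hhκ) hz)
  obtain ⟨u, hu0, huP, hur⟩ := seq_choice (α := (ℂ → ℂ) × (ℂ → ℂ)) N
    (fun k p => Chain (A k) (B k) (γ (k / N)) (10 * h) (δ * (1 + x) ^ k) F₀ (γ (k / N)) p.1 G₀ p.2)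
    (fun k p q => ∀ ζ ∈ ball (γ (k / N)) (3 * h),
      q.2 ζ + seg (cker q.1 G₀ ζ) (γ ((k + 1 : ℕ) / N)) ζ = p.2 ζ + seg (cker p.1 G₀ ζ) (γ (k / N)) ζ)
    (Fi, Ii) hCi (by
      intro k hk p hp
      have S := step_data bf bg hF0 hG0 (c := γ (k / N)) (c' := γ ((k + 1 : ℕ) / N)) (h := h)
        (δ := δ * (1 + x) ^ k) (m := m) (x := x) (ε := ε * (1 + x) ^ k) (κ := κ * (1 - x) ^ k)
        hh0 (hδk k hk.le).2 hm hx0 hx1 (hs _ (hIcc k hk.le)) (hmγ _ (hIcc (k + 1) hk))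
        ((hvk k hk).trans hxm.ge) ((hvk k hk).trans (hΛδ.trans (hδk k hk.le).1))
        (hδ0.le.trans (hδk k hk.le).1) (by positivity)
        (by
          have := hεk (k + 1) hk
          have e : (1 + x) * (ε * (1 + x) ^ k) = ε * (1 + x) ^ (k + 1) := by ring
          rw [e]; linarith)
        ((hκk k hk.le).2.trans hκm) ((hκk k hk.le).2.trans (by linarith))
        (le_trans (by linarith) (hκk k hk.le).1)
        (by
          have := (hκk (k + 1) hk).1
          have e : (1 - x) * (κ * (1 - x) ^ k) = κ * (1 - x) ^ (k + 1) := by ring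
          rw [e]; exact this)
      have e1 : (1 + x) * (ε * (1 + x) ^ k) = ε * (1 + x) ^ (k + 1) := by ring
      have e2 : (1 - x) * (κ * (1 - x) ^ k) = κ * (1 - x) ^ (k + 1) := by ring
      have e3 : (1 + x) * (δ * (1 + x) ^ k) = δ * (1 + x) ^ (k + 1) := by ring
      rw [e1, e2, e3] at S
      obtain ⟨F', I', h1, h2⟩ := chain_step S hG₀an hp
      exact ⟨(F', I'), h1, h2⟩)
  refine contAlong_of_seq (N := N) hNpos hh0 hΛ hΛ0 (hΛδ.trans hδh)
    (fun k ζ => (u k).2 ζ + seg (cker (u k).1 G₀ ζ) (γ (k / N)) ζ) ?_ ?_ ?_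
  · intro k hk
    have hC := huP k hk
    refine (hC.analytic (hAan k hk) (hBan k hk) (hδk k hk).2 hh0).add ?_
    exact (last_analytic (hAan k hk _ _ hC.good.1) hG₀an).mono (ball_subset_ball (by linarith))
  · exact fun k hk ζ hζ => hur k hk ζ hζ
  · intro ζ hζ
    simp only [Nat.cast_zero, zero_div] at hJi ⊢
    rw [hu0]
    exact hJi ζ hζ

/-- If the non-empty closed discrete set `Ω` is stable under addition, then the
space of `Ω`-continuable germs is stable under convolution. -/
theorem stmt2 (Ω : Set ℂ) (hne : Ω.Nonempty) (hcl : IsClosed Ω)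
    (hdisc : DiscreteTopology Ω)
    (hadd : ∀ ω₁ ∈ Ω, ∀ ω₂ ∈ Ω, ω₁ + ω₂ ∈ Ω)
    (f g : ℂ → ℂ) (hf : OmegaCont Ω f) (hg : OmegaCont Ω g) :
    OmegaCont Ω (conv f g) := by
  obtain ⟨Rf, hRf, haf, hpf, hcf⟩ := hf
  obtain ⟨Rg, hRg, hag, hpg, hcg⟩ := hg
  have hR : 0 < min Rf Rg := lt_min hRf hRg
  have bf : Base Ω (min Rf Rg) f := Base.of_le hne hcl hR (min_le_left _ _) haf hpf hcf
  have bg : Base Ω (min Rf Rg) g := Base.of_le hne hcl hR (min_le_right _ _) hag hpg hcg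
  refine ⟨min Rf Rg / 4, by linarith, ?_, ?_, main_cont bf bg hadd⟩
  · have e : conv f g = fun ζ => seg (cker f g ζ) 0 ζ := funext (conv_eq_seg f g)
    rw [e]
    exact (last_analytic bf.han bg.han).mono (ball_subset_ball (by linarith))
  · exact fun ζ hζ => bf.hpunct ζ (ball_subset_ball (by linarith) hζ)
end
end

section
/- For any holomorphic germs φ̂, ψ̂ at 0 with radii of convergence r₁ and r₂ respectively, the formula (φ̂*ψ̂)(ζ) = ∫₀^ζ φ̂(ξ) ψ̂(ζ−ξ) dξ (integral over the line segment from 0 to ζ) defines a holomorphic function on the disc D_{min(r₁,r₂)}, hence a holomorphic germ at 0 whose disc of convergence contains the intersection of the discs of convergence of φ̂ and ψ̂. Moreover this convolution law is commutative and associative on ℂ{ζ}. -/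
open Set Metric Filter Topology intervalIntegral

noncomputable section

lemma scale_mem {r : ℝ} {ζ : ℂ} (hζ : ζ ∈ Metric.ball (0:ℂ) r) {c : ℝ} (hc : |c| ≤ 1) :
    (c : ℂ) * ζ ∈ Metric.ball (0:ℂ) r := by
  rw [mem_ball_zero_iff] at *
  rw [norm_mul, Complex.norm_real, Real.norm_eq_abs]
  nlinarith [norm_nonneg ζ]

lemma scale_mem_closed {r : ℝ} {ζ : ℂ} (hζ : ζ ∈ Metric.closedBall (0:ℂ) r) {c : ℝ}
    (hc : |c| ≤ 1) : (c : ℂ) * ζ ∈ Metric.closedBall (0:ℂ) r := by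
  rw [mem_closedBall_zero_iff] at *
  rw [norm_mul, Complex.norm_real, Real.norm_eq_abs]
  nlinarith [norm_nonneg ζ]

lemma triangle_swap (Φ : ℝ → ℝ → ℂ)
    (hΦ : ContinuousOn (Function.uncurry Φ) (Icc 0 1 ×ˢ Icc 0 1)) :
    ∫ t in (0:ℝ)..1, ∫ a in (0:ℝ)..t, Φ t a = ∫ a in (0:ℝ)..1, ∫ t in a..1, Φ t a := by
  have h1 : ∀ t ∈ uIcc (0:ℝ) 1, ∫ a in (0:ℝ)..t, Φ t a
      = ∫ a in (0:ℝ)..1, {a | a < t}.indicator (Φ t) a := by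
    intro t ht
    rw [uIcc_of_le zero_le_one] at ht
    rw [integral_of_le ht.1, integral_of_le zero_le_one,
      MeasureTheory.setIntegral_indicator (s := Ioc 0 1) (t := {a | a < t}) measurableSet_Iio,
      MeasureTheory.integral_Ioc_eq_integral_Ioo]
    congr 2
    ext x
    simp only [mem_Ioo, mem_inter_iff, mem_Ioc, mem_setOf_eq]
    constructor
    · rintro ⟨h, h'⟩; exact ⟨⟨h, by linarith [ht.2]⟩, h'⟩
    · rintro ⟨⟨h, _⟩, h'⟩; exact ⟨h, h'⟩
  have h2 : ∀ a ∈ uIcc (0:ℝ) 1, ∫ t in a..1, Φ t a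
      = ∫ t in (0:ℝ)..1, {a | a < t}.indicator (Φ t) a := by
    intro a ha
    rw [uIcc_of_le zero_le_one] at ha
    have : (fun t => {a | a < t}.indicator (Φ t) a)
        = {t | a < t}.indicator (fun t => Φ t a) := by
      ext t; simp [indicator]
    rw [this, integral_of_le ha.2, integral_of_le zero_le_one,
      MeasureTheory.setIntegral_indicator (s := Ioc 0 1) (t := {t | a < t}) measurableSet_Ioi]
    congr 2
    ext x
    simp only [mem_inter_iff, mem_Ioc, mem_setOf_eq]
    constructor
    · rintro ⟨h, h'⟩; exact ⟨⟨by linarith [ha.1], h'⟩, h⟩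
    · rintro ⟨⟨_, h⟩, h'⟩; exact ⟨h', h⟩
  rw [integral_congr h1, integral_congr h2]
  apply MeasureTheory.intervalIntegral_intervalIntegral_swap
  have hi : MeasureTheory.IntegrableOn (Function.uncurry Φ) (Icc 0 1 ×ˢ Icc 0 1)
      (MeasureTheory.volume.prod MeasureTheory.volume) :=
    hΦ.integrableOn_compact (isCompact_Icc.prod isCompact_Icc)
  have hi2 := hi.indicator (s := Icc 0 1 ×ˢ Icc 0 1) (t := {p : ℝ × ℝ | p.2 < p.1})
    (measurableSet_lt measurable_snd measurable_fst)
  rw [uIoc_of_le zero_le_one, MeasureTheory.Measure.volume_eq_prod]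
  refine MeasureTheory.IntegrableOn.mono_set (t := Icc 0 1 ×ˢ Icc 0 1) ?_
    (prod_mono Ioc_subset_Icc_self Ioc_subset_Icc_self)
  refine hi2.congr (Eventually.of_forall ?_)
  rintro ⟨t, a⟩
  simp [indicator, Function.uncurry]

lemma conv_comm_aux (f g : ℂ → ℂ) (ζ : ℂ) : conv f g ζ = conv g f ζ := by
  unfold conv
  congr 1
  have := integral_comp_sub_left (a := 0) (b := 1)
    (fun t : ℝ => g ((t : ℂ) * ζ) * f ((1 - (t : ℂ)) * ζ)) 1
  simp only [sub_self, sub_zero] at this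
  rw [← this]
  apply integral_congr
  intro t _
  simp [mul_comm]

lemma conv_smul_eq (f g : ℂ → ℂ) (c : ℝ) (ζ : ℂ) :
    conv f g (c * ζ) = ζ * ∫ a in (0:ℝ)..c, f ((a : ℂ) * ζ) * g (((c - a : ℝ) : ℂ) * ζ) := by
  have := smul_integral_comp_mul_right (a := 0) (b := 1)
    (fun a : ℝ => f ((a : ℂ) * ζ) * g (((c - a : ℝ) : ℂ) * ζ)) c
  rw [zero_mul, one_mul] at this
  rw [← this, conv, Complex.real_smul, mul_comm (c : ℂ) ζ, mul_assoc]
  congr 2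
  apply integral_congr
  intro t _
  simp only
  push_cast
  congr 2 <;> ring

lemma conv_assoc_aux (f g h : ℂ → ℂ) (r : ℝ) (hf : ContinuousOn f (Metric.ball 0 r))
    (hg : ContinuousOn g (Metric.ball 0 r)) (hh : ContinuousOn h (Metric.ball 0 r))
    (ζ : ℂ) (hζ : ζ ∈ Metric.ball (0:ℂ) r) :
    conv (conv f g) h ζ = conv f (conv g h) ζ := by
  have key := triangle_swap (fun t a => f ((a : ℂ) * ζ) * g (((t - a : ℝ) : ℂ) * ζ)
    * h (((1 - t : ℝ) : ℂ) * ζ)) (by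
      refine ((hf.comp (by fun_prop) ?_).mul (hg.comp (by fun_prop) ?_)).mul
        (hh.comp (by fun_prop) ?_)
      all_goals
        rintro ⟨t, a⟩ ⟨ht, ha⟩
        simp only [mem_Icc] at ht ha
        exact scale_mem hζ (abs_le.2 ⟨by linarith, by linarith⟩))
  have e1 : conv (conv f g) h ζ = ζ * (ζ * ∫ t in (0:ℝ)..1, ∫ a in (0:ℝ)..t,
      f ((a : ℂ) * ζ) * g (((t - a : ℝ) : ℂ) * ζ) * h (((1 - t : ℝ) : ℂ) * ζ)) := by
    rw [conv]
    congr 1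
    rw [← integral_const_mul]
    apply integral_congr
    intro t _
    simp only
    rw [conv_smul_eq, integral_mul_const]
    push_cast
    ring
  have e2 : conv f (conv g h) ζ = ζ * (ζ * ∫ a in (0:ℝ)..1, ∫ t in a..1,
      f ((a : ℂ) * ζ) * g (((t - a : ℝ) : ℂ) * ζ) * h (((1 - t : ℝ) : ℂ) * ζ)) := by
    rw [conv]
    congr 1
    rw [← integral_const_mul]
    apply integral_congr
    intro a _
    simp only
    have e := conv_smul_eq g h (1 - a) ζ
    have s := integral_comp_sub_right (a := a) (b := 1)
      (fun s : ℝ => g ((s : ℂ) * ζ) * h (((1 - a - s : ℝ) : ℂ) * ζ)) a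
    rw [sub_self] at s
    rw [← s] at e
    push_cast at e
    rw [e]
    simp only [mul_assoc]
    rw [integral_const_mul, mul_left_comm]
    congr 3
    funext t
    push_cast
    congr 3
    ring
  rw [e1, e2, key]

lemma conv_differentiableAt (f g : ℂ → ℂ) (r : ℝ) (hf : AnalyticOnNhd ℂ f (Metric.ball 0 r))
    (hg : AnalyticOnNhd ℂ g (Metric.ball 0 r)) (ζ : ℂ) (hζ : ζ ∈ Metric.ball (0:ℂ) r) :
    DifferentiableAt ℂ (conv f g) ζ := by
  obtain ⟨R, hR1, hR2⟩ := exists_between (mem_ball_zero_iff.1 hζ)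
  have hsub : Metric.closedBall (0:ℂ) R ⊆ Metric.ball 0 r := closedBall_subset_ball hR2
  have bd : ∀ k : ℂ → ℂ, ContinuousOn k (Metric.ball 0 r) →
      ∃ C, 0 ≤ C ∧ ∀ z ∈ Metric.closedBall (0:ℂ) R, ‖k z‖ ≤ C := by
    intro k hk
    obtain ⟨C, hC⟩ := (isCompact_closedBall (0:ℂ) R).exists_bound_of_continuousOn (hk.mono hsub)
    exact ⟨max C 0, le_max_right _ _, fun z hz => (hC z hz).trans (le_max_left _ _)⟩
  have cf := hf.continuousOn
  have cg := hg.continuousOn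
  have cf' := hf.deriv.continuousOn
  have cg' := hg.deriv.continuousOn
  obtain ⟨A, hA0, hA⟩ := bd f cf
  obtain ⟨B, hB0, hB⟩ := bd g cg
  obtain ⟨A', hA0', hA'⟩ := bd _ cf'
  obtain ⟨B', hB0', hB'⟩ := bd _ cg'
  have m1 : ∀ t ∈ Icc (0:ℝ) 1, |t| ≤ 1 := fun t ht => abs_le.2 ⟨by linarith [ht.1], ht.2⟩
  have m2 : ∀ t ∈ Icc (0:ℝ) 1, |1 - t| ≤ 1 := fun t ht =>
    abs_le.2 ⟨by linarith [ht.2], by linarith [ht.1]⟩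
  have comp1 : ∀ k : ℂ → ℂ, ContinuousOn k (Metric.ball 0 r) → ∀ z ∈ Metric.ball (0:ℂ) r,
      ContinuousOn (fun t : ℝ => k ((t : ℂ) * z)) (Icc 0 1) := by
    intro k hk z hz
    exact hk.comp (by fun_prop) fun t ht => scale_mem hz (m1 t ht)
  have comp2 : ∀ k : ℂ → ℂ, ContinuousOn k (Metric.ball 0 r) → ∀ z ∈ Metric.ball (0:ℂ) r,
      ContinuousOn (fun t : ℝ => k ((1 - (t : ℂ)) * z)) (Icc 0 1) := by
    intro k hk z hz
    refine hk.comp (by fun_prop) fun t ht => ?_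
    have := scale_mem hz (m2 t ht)
    push_cast at this
    exact this
  have cF : ∀ z ∈ Metric.ball (0:ℂ) r,
      ContinuousOn (fun t : ℝ => f ((t : ℂ) * z) * g ((1 - (t : ℂ)) * z)) (Icc 0 1) :=
    fun z hz => (comp1 f cf z hz).mul (comp2 g cg z hz)
  have hU : uIoc (0:ℝ) 1 ⊆ Icc 0 1 := by
    rw [uIoc_of_le zero_le_one]; exact Ioc_subset_Icc_self
  have main := intervalIntegral.hasDerivAt_integral_of_dominated_loc_of_deriv_le
    (𝕜 := ℂ) (μ := MeasureTheory.volume) (a := 0) (b := 1) (x₀ := ζ) (s := Metric.ball 0 R)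
    (F := fun z t => f ((t : ℂ) * z) * g ((1 - (t : ℂ)) * z))
    (F' := fun z t => (deriv f ((t : ℂ) * z) * t) * g ((1 - (t : ℂ)) * z)
      + f ((t : ℂ) * z) * (deriv g ((1 - (t : ℂ)) * z) * (1 - (t : ℂ))))
    (bound := fun _ => A' * B + A * B')
    (isOpen_ball.mem_nhds (mem_ball_zero_iff.2 hR1))
    (by
      filter_upwards [isOpen_ball.mem_nhds hζ] with z hz
      exact ((cF z hz).mono hU).aestronglyMeasurable measurableSet_uIoc)
    (by
      apply ContinuousOn.intervalIntegrable
      rw [uIcc_of_le zero_le_one]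
      exact cF ζ hζ)
    (by
      refine ContinuousOn.aestronglyMeasurable (ContinuousOn.mono ?_ hU) measurableSet_uIoc
      exact (((comp1 _ cf' ζ hζ).mul (by fun_prop)).mul (comp2 g cg ζ hζ)).add
        ((comp1 f cf ζ hζ).mul ((comp2 _ cg' ζ hζ).mul (by fun_prop))))
    (by
      refine Eventually.of_forall fun t ht z hz => ?_
      have ht' := hU ht
      have z1 := scale_mem_closed (ball_subset_closedBall hz) (m1 t ht')
      have z2 := scale_mem_closed (ball_subset_closedBall hz) (m2 t ht')
      push_cast at z2
      have n1 : ‖(t : ℂ)‖ ≤ 1 := by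
        rw [Complex.norm_real]; exact m1 t ht'
      have n2 : ‖1 - (t : ℂ)‖ ≤ 1 := by
        have := m2 t ht'
        rw [← Real.norm_eq_abs, ← Complex.norm_real] at this
        push_cast at this
        exact this
      refine (norm_add_le _ _).trans ?_
      simp only [norm_mul]
      have b1 : ‖deriv f (t * z)‖ * ‖(t : ℂ)‖ ≤ A' :=
        (mul_le_of_le_one_right (norm_nonneg _) n1).trans (hA' _ z1)
      have b2 : ‖deriv g ((1 - (t : ℂ)) * z)‖ * ‖1 - (t : ℂ)‖ ≤ B' :=
        (mul_le_of_le_one_right (norm_nonneg _) n2).trans (hB' _ z2)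
      exact add_le_add (mul_le_mul b1 (hB _ z2) (norm_nonneg _) hA0')
        (mul_le_mul (hA _ z1) b2 (by positivity) hA0))
    intervalIntegrable_const
    (by
      refine Eventually.of_forall fun t ht z hz => ?_
      have ht' := hU ht
      have hz' := hsub (ball_subset_closedBall hz)
      have z1 := scale_mem hz' (m1 t ht')
      have z2 := scale_mem hz' (m2 t ht')
      push_cast at z2
      have l : ∀ c : ℂ, HasDerivAt (fun z : ℂ => c * z) c z := fun c => by
        simpa using (hasDerivAt_id z).const_mul c
      exact ((hf _ z1).differentiableAt.hasDerivAt.comp z (l _)).mul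
        ((hg _ z2).differentiableAt.hasDerivAt.comp z (l _)))
  exact differentiableAt_id.mul main.2.differentiableAt

/-- The convolution of two holomorphic germs at `0`, with discs of convergence of
radii `r₁` and `r₂`, is holomorphic on the disc of radius `min r₁ r₂`; moreover
convolution is commutative and associative. -/
theorem stmt4 (f g h : ℂ → ℂ) (r₁ r₂ r₃ : ℝ) (hr₁ : 0 < r₁) (hr₂ : 0 < r₂) (hr₃ : 0 < r₃)
    (hf : AnalyticOnNhd ℂ f (Metric.ball 0 r₁))
    (hg : AnalyticOnNhd ℂ g (Metric.ball 0 r₂))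
    (hh : AnalyticOnNhd ℂ h (Metric.ball 0 r₃)) :
    AnalyticOnNhd ℂ (conv f g) (Metric.ball 0 (min r₁ r₂)) ∧
    (∀ ζ ∈ Metric.ball (0:ℂ) (min r₁ r₂), conv f g ζ = conv g f ζ) ∧
    (∀ ζ ∈ Metric.ball (0:ℂ) (min r₁ (min r₂ r₃)),
      conv (conv f g) h ζ = conv f (conv g h) ζ) := by
  have s1 : Metric.ball (0:ℂ) (min r₁ r₂) ⊆ Metric.ball 0 r₁ := ball_subset_ball (min_le_left _ _)
  have s2 : Metric.ball (0:ℂ) (min r₁ r₂) ⊆ Metric.ball 0 r₂ := ball_subset_ball (min_le_right _ _)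
  refine ⟨?_, fun ζ _ => conv_comm_aux f g ζ, fun ζ hζ => ?_⟩
  · refine DifferentiableOn.analyticOnNhd (fun ζ hζ => ?_) isOpen_ball
    exact (conv_differentiableAt f g _ (hf.mono s1) (hg.mono s2) ζ hζ).differentiableWithinAt
  · refine conv_assoc_aux f g h (min r₁ (min r₂ r₃)) (hf.continuousOn.mono ?_)
      (hg.continuousOn.mono ?_) (hh.continuousOn.mono ?_) ζ hζ
    · exact ball_subset_ball (min_le_left _ _)
    · exact ball_subset_ball ((min_le_right _ _).trans (min_le_left _ _))
    · exact ball_subset_ball ((min_le_right _ _).trans (min_le_right _ _))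
end
end

section
/- Let Ω be a non-empty closed discrete subset of ℂ and let Â be an entire function on ℂ. Then for any φ̂ ∈ R̂_Ω, the convolution Â * φ̂ belongs to R̂_Ω. Moreover, for any path γ : [0,1] → ℂ∖Ω along which φ̂ can be continued, starting at a point ζ₀ close enough to 0 and ending at ζ₁, the analytic continuation of Â * φ̂ along γ is given, for ζ close to ζ₁, by cont_γ(Â*φ̂)(ζ) = ∫₀^{ζ₀} Â(ζ−ξ) φ̂(ξ) dξ + ∫₀^1 Â(ζ−γ(s)) (cont_{γ_s}φ̂)(γ(s)) γ′(s) ds + ∫_{ζ₁}^ζ Â(ζ−ξ) (cont_γ φ̂)(ξ) dξ, where γ_s denotes the restriction of γ to [0,s] and cont_{γ_s}φ̂ is the germ obtained by analytic continuation of φ̂ along γ_s. -/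
open Set Metric Filter Topology intervalIntegral

noncomputable section

open MeasureTheory in
lemma param_aux {U : Set ℂ} (hU : IsOpen U) {a b : ℝ} (hab : a ≤ b) (K : ℂ → ℝ → ℂ)
    (hK : ContinuousOn (Function.uncurry K) (U ×ˢ Icc a b))
    (hd : ∀ s ∈ Icc a b, DifferentiableOn ℂ (fun z => K z s) U)
    (h : ℝ → ℂ) (hh : IntervalIntegrable h volume a b) :
    DifferentiableOn ℂ (fun z => ∫ s in a..b, K z s * h s) U := by
  intro x0 hx0
  obtain ⟨e, he, heU⟩ := Metric.isOpen_iff.1 hU x0 hx0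
  set ε := e / 4 with hε
  have hεp : 0 < ε := by positivity
  have hcb : closedBall x0 (2 * ε) ⊆ U :=
    (closedBall_subset_ball (by rw [hε]; linarith)).trans heU
  obtain ⟨M, hM⟩ := ((isCompact_closedBall x0 (2 * ε)).prod isCompact_Icc).exists_bound_of_continuousOn
    (hK.mono (Set.prod_mono hcb (Subset.refl (Icc a b))))
  have hslice : ∀ x ∈ U, ContinuousOn (K x) (Icc a b) := by
    intro x hx
    have : ContinuousOn (fun s : ℝ => (x, s)) (Icc a b) := by fun_prop
    exact hK.comp this (fun s hs => ⟨hx, hs⟩)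
  have hint : ∀ x ∈ U, IntervalIntegrable (fun s => K x s * h s) volume a b := by
    intro x hx
    have := hslice x hx
    rw [← uIcc_of_le hab] at this
    exact hh.continuousOn_mul this
  have hsub : uIoc a b ⊆ Icc a b := by rw [uIoc_of_le hab]; exact Ioc_subset_Icc_self
  have hball : ∀ x ∈ ball x0 ε, closedBall x ε ⊆ closedBall x0 (2 * ε) := by
    intro x hx
    apply closedBall_subset_closedBall'
    have := mem_ball.1 hx
    linarith
  have hdA : ∀ s ∈ Icc a b, ∀ x ∈ U, HasDerivAt (fun z => K z s) (deriv (fun z => K z s) x) x :=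
    fun s hs x hx => ((hd s hs).differentiableAt (hU.mem_nhds hx)).hasDerivAt
  have key := intervalIntegral.hasDerivAt_integral_of_dominated_loc_of_deriv_le (𝕜 := ℂ)
    (μ := volume) (a := a) (b := b)
    (F := fun z s => K z s * h s) (F' := fun z s => deriv (fun z => K z s) z * h s)
    (x₀ := x0) (s := ball x0 ε) (bound := fun s => M / ε * ‖h s‖) (ball_mem_nhds x0 hεp)
    ?_ (hint x0 hx0) ?_ ?_ ?_ ?_
  · exact key.2.differentiableAt.differentiableWithinAt
  · filter_upwards [hU.mem_nhds hx0] with x hx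
    exact (hint x hx).def'.aestronglyMeasurable
  · have hmeas : AEStronglyMeasurable (fun s => deriv (fun z => K z s) x0)
        (volume.restrict (uIoc a b)) := by
      obtain ⟨w, hw⟩ := exists_seq_tendsto (𝓝[≠] (x0 : ℂ))
      have hwU : ∀ᶠ n in atTop, w n ∈ U :=
        (hw.mono_right nhdsWithin_le_nhds).eventually (hU.mem_nhds hx0)
      obtain ⟨N, hN⟩ := eventually_atTop.1 hwU
      refine aestronglyMeasurable_of_tendsto_ae (u := atTop)
        (f := fun n s => slope (fun z => K z s) x0 (w (n + N))) ?_ ?_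
      · intro n
        have h1 : ContinuousOn (fun s => slope (fun z => K z s) x0 (w (n + N))) (Icc a b) := by
          simp only [slope_def_module]
          have q1 := hslice _ (hN (n + N) (by omega))
          have q2 := hslice _ hx0
          fun_prop
        exact (h1.mono hsub).aestronglyMeasurable measurableSet_uIoc
      · rw [ae_restrict_iff' measurableSet_uIoc]
        refine Eventually.of_forall fun s hs => ?_
        have := hasDerivAt_iff_tendsto_slope.1 (hdA s (hsub hs) x0 hx0)
        exact this.comp (hw.comp (tendsto_add_atTop_nat N))
    exact hmeas.mul hh.def'.aestronglyMeasurable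
  · refine Eventually.of_forall fun s hs x hx => ?_
    rw [norm_mul]
    refine mul_le_mul_of_nonneg_right ?_ (norm_nonneg _)
    have hs' := hsub hs
    refine Complex.norm_deriv_le_of_forall_mem_sphere_norm_le hεp ?_ ?_
    · refine ((hd s hs').mono ?_).diffContOnCl
      exact closure_ball_subset_closedBall.trans ((hball x hx).trans hcb)
    · intro z hz
      exact hM (z, s) ⟨hball x hx (sphere_subset_closedBall hz), hs'⟩
  · exact hh.norm.const_mul _
  · refine Eventually.of_forall fun s hs x hx => ?_
    exact (hdA s (hsub hs) x (hcb (hball x hx (mem_closedBall_self hεp.le)))).mul_const _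

open MeasureTheory in
lemma pw_aux {γ : ℝ → ℂ} {a b : ℝ} (hγ : PiecewiseC1On γ a b) :
    (∃ S : Set ℝ, S.Countable ∧ ∀ t ∈ Icc a b, t ∉ S → HasDerivAt γ (deriv γ t) t) ∧
    IntervalIntegrable (deriv γ) volume a b := by
  obtain ⟨hc, n, u, h0, hn, hmono, hC⟩ := hγ
  have hint : ∀ i < n, ∀ t ∈ Ioo (u i) (u (i+1)), HasDerivAt γ (deriv γ t) t := by
    intro i hi t ht
    have := (hC i hi).contDiffAt (Icc_mem_nhds ht.1 ht.2)
    exact (this.differentiableAt (by norm_num)).hasDerivAt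
  constructor
  · refine ⟨range u, countable_range u, ?_⟩
    have : ∀ m ≤ n, ∀ t ∈ Icc (u 0) (u m), t ∉ range u → HasDerivAt γ (deriv γ t) t := by
      intro m
      induction m with
      | zero =>
        intro _ t ht hS
        exact absurd ⟨0, le_antisymm ht.1 ht.2⟩ hS
      | succ k ih =>
        intro hk t ht hS
        rcases le_or_gt t (u k) with h | h
        · exact ih (by omega) t ⟨ht.1, h⟩ hS
        · exact hint k (by omega) t ⟨h, lt_of_le_of_ne ht.2 (fun hh => hS ⟨k+1, hh.symm⟩)⟩
    rw [← h0, ← hn]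
    exact this n le_rfl
  · rw [← h0, ← hn]
    refine IntervalIntegrable.trans_iterate fun i hi => ?_
    rcases (hmono i hi).eq_or_lt with h | h
    · rw [h]
    · have h1 : ContinuousOn (derivWithin γ (Icc (u i) (u (i+1)))) (Icc (u i) (u (i+1))) :=
        (hC i hi).continuousOn_derivWithin (uniqueDiffOn_Icc h) le_rfl
      have h2 := h1.intervalIntegrable_of_Icc (μ := volume) h.le
      refine h2.congr_ae ?_
      rw [uIoc_of_le h.le, ← restrict_Ioo_eq_restrict_Ioc, EventuallyEq,
        ae_restrict_iff' measurableSet_Ioo]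
      refine Eventually.of_forall fun t ht => ?_
      exact derivWithin_of_mem_nhds (Icc_mem_nhds ht.1 ht.2)

lemma seg_mem {U : Set ℂ} (hU : Convex ℝ U) {p q : ℂ} (hp : p ∈ U) (hq : q ∈ U)
    {t : ℝ} (ht : t ∈ Icc (0:ℝ) 1) : p + (t : ℂ) * (q - p) ∈ U := by
  have := hU.add_smul_sub_mem hp hq ht
  simpa using this

lemma seg_aux {U : Set ℂ} (hU : Convex ℝ U) {P f : ℂ → ℂ}
    (hP : ∀ z ∈ U, HasDerivAt P (f z) z) (hf : ContinuousOn f U) {p q : ℂ}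
    (hp : p ∈ U) (hq : q ∈ U) :
    (∫ t in (0:ℝ)..1, f (p + (t : ℂ) * (q - p))) * (q - p) = P q - P p := by
  have hl : ∀ t : ℝ, HasDerivAt (fun t : ℝ => p + (t : ℂ) * (q - p)) (q - p) t := by
    intro t
    have := ((Complex.ofRealCLM.hasDerivAt (x := t)).mul_const (q - p)).const_add p
    simpa using! this
  rw [← intervalIntegral.integral_mul_const]
  have key := intervalIntegral.integral_eq_sub_of_hasDerivAt (a := 0) (b := 1)
    (f := fun t : ℝ => P (p + (t : ℂ) * (q - p)))
    (f' := fun t : ℝ => f (p + (t : ℂ) * (q - p)) * (q - p)) ?_ ?_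
  · rw [key]; simp
  · intro t ht
    rw [uIcc_of_le zero_le_one] at ht
    exact (hP _ (seg_mem hU hp hq ht)).comp_of_eq t (hl t) rfl
  · apply ContinuousOn.intervalIntegrable
    rw [uIcc_of_le zero_le_one]
    refine ContinuousOn.mul ?_ continuousOn_const
    refine hf.comp (by fun_prop) fun t ht => seg_mem hU hp hq ht

/-- analyticity of the segment integral -/
lemma segint_diff {A f : ℂ → ℂ} (hA : Differentiable ℂ A) {c : ℂ} {r : ℝ} 
    (hf : DifferentiableOn ℂ f (ball c r)) :
    DifferentiableOn ℂ (fun ζ => (∫ t in (0:ℝ)..1,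
      A (ζ - (c + (t : ℂ) * (ζ - c))) * f (c + (t : ℂ) * (ζ - c))) * (ζ - c)) (ball c r) := by
  refine DifferentiableOn.mul ?_ (by fun_prop)
  by_cases hr : 0 < r
  swap
  · rw [ball_eq_empty.2 (not_lt.1 hr)]; exact differentiableOn_empty
  have := param_aux (isOpen_ball : IsOpen (ball c r)) zero_le_one
    (fun ζ (t : ℝ) => A (ζ - (c + (t : ℂ) * (ζ - c))) * f (c + (t : ℂ) * (ζ - c))) ?_ ?_
    (fun _ => 1) (by simp)
  · simpa using this
  · refine ContinuousOn.mul ?_ ?_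
    · have := hA.continuous
      apply Continuous.continuousOn
      fun_prop
    · refine hf.continuousOn.comp (by fun_prop) ?_
      rintro ⟨z, t⟩ ⟨hz, ht⟩
      exact seg_mem (convex_ball c r) (mem_ball_self hr) hz ht
  · intro t ht
    refine DifferentiableOn.mul ?_ ?_
    · exact (hA.comp (by fun_prop)).differentiableOn
    · refine hf.comp (by fun_prop) fun z hz => ?_
      exact seg_mem (convex_ball c r) (mem_ball_self hr) hz ht

lemma conv_eq (A φ : ℂ → ℂ) (ζ : ℂ) :
    conv A φ ζ = (∫ t in (0:ℝ)..1,
      A (ζ - (0 + (t : ℂ) * (ζ - 0))) * φ (0 + (t : ℂ) * (ζ - 0))) * (ζ - 0) := by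
  unfold conv
  have := intervalIntegral.integral_comp_sub_left (a := 0) (b := 1)
    (fun t : ℝ => A ((t : ℂ) * ζ) * φ ((1 - (t : ℂ)) * ζ)) 1
  simp only [sub_self, sub_zero] at this
  rw [← this, mul_comm]
  simp only [sub_zero, zero_add]
  congr 1
  refine intervalIntegral.integral_congr fun t _ => ?_
  push_cast
  congr 2 <;> ring

open MeasureTheory in
lemma main_aux {A φ : ℂ → ℂ} (hA : Differentiable ℂ A) {R : ℝ} (hR : 0 < R)
    (hφ : AnalyticOnNhd ℂ φ (Metric.ball 0 R))
    (γ : ℝ → ℂ) (hγ : PiecewiseC1On γ 0 1) (hγ0 : γ 0 ∈ Metric.ball (0:ℂ) R)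
    (F : ℝ → ℂ → ℂ) (r : ℝ → ℝ)
    (hF : ∀ t ∈ Set.Icc (0:ℝ) 1, 0 < r t ∧
            AnalyticOnNhd ℂ (F t) (Metric.ball (γ t) (r t)))
    (hcomp : ∀ t ∈ Set.Icc (0:ℝ) 1, ∃ ε > 0, ∀ t' ∈ Set.Icc (0:ℝ) 1, |t' - t| < ε →
            Set.EqOn (F t) (F t')
              (Metric.ball (γ t) (r t) ∩ Metric.ball (γ t') (r t')))
    (hF0 : ∀ᶠ z in 𝓝 (γ 0), F 0 z = φ z) :
    ContAlong (conv A φ) γ 0 1 (fun ζ =>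
            (∫ t in (0:ℝ)..1, A (ζ - (t : ℂ) * γ 0) * φ ((t : ℂ) * γ 0)) * γ 0
            + (∫ s in (0:ℝ)..1, A (ζ - γ s) * F s (γ s) * deriv γ s)
            + (∫ t in (0:ℝ)..1,
                A (ζ - (γ 1 + (t : ℂ) * (ζ - γ 1))) * F 1 (γ 1 + (t : ℂ) * (ζ - γ 1)))
                * (ζ - γ 1)) := by
  obtain ⟨⟨S, hS, hder⟩, hdint⟩ := pw_aux hγ
  have hcont := hγ.1
  have hAc := hA.continuous
  -- local description of `F s (γ s)`
  have hloc : ∀ t ∈ Icc (0:ℝ) 1, ∃ δ > 0, ∀ s ∈ Icc (0:ℝ) 1, |s - t| < δ →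
      γ s ∈ ball (γ t) (r t) ∧ F s (γ s) = F t (γ s) ∧
      EqOn (F t) (F s) (ball (γ t) (r t) ∩ ball (γ s) (r s)) := by
    intro t ht
    obtain ⟨ε, hε, h⟩ := hcomp t ht
    obtain ⟨δ, hδ, h'⟩ := Metric.continuousOn_iff.1 hcont t ht (r t) (hF t ht).1
    refine ⟨min ε δ, lt_min hε hδ, fun s hs hst => ?_⟩
    have h1 := h' s hs (by rw [Real.dist_eq]; exact hst.trans_le (min_le_right _ _))
    have h2 := h s hs (hst.trans_le (min_le_left _ _))
    exact ⟨h1, (h2 ⟨h1, mem_ball_self (hF s hs).1⟩).symm, h2⟩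
  have hΦ : ContinuousOn (fun s => F s (γ s)) (Icc 0 1) := by
    intro t ht
    obtain ⟨δ, hδ, h⟩ := hloc t ht
    have h1 : ContinuousWithinAt (fun s => F t (γ s)) (Icc 0 1) t :=
      ((hF t ht).2 (γ t) (mem_ball_self (hF t ht).1)).continuousAt.comp_continuousWithinAt
        (hcont t ht)
    refine h1.congr_of_eventuallyEq ?_ rfl
    filter_upwards [self_mem_nhdsWithin, mem_nhdsWithin_of_mem_nhds (ball_mem_nhds t hδ)]
      with s hs hs'
    exact (h s hs (by simpa [Real.dist_eq] using hs')).2.1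
  have hh : IntervalIntegrable (fun s => F s (γ s) * deriv γ s) volume 0 1 :=
    hdint.continuousOn_mul (by rwa [uIcc_of_le zero_le_one])
  have hfull : ∀ ζ : ℂ, IntervalIntegrable (fun s => A (ζ - γ s) * F s (γ s) * deriv γ s)
      volume 0 1 := by
    intro ζ
    have : ContinuousOn (fun s => A (ζ - γ s)) (uIcc 0 1) := by
      rw [uIcc_of_le zero_le_one]; fun_prop
    simpa [mul_assoc] using hh.continuousOn_mul this
  have hfullsub : ∀ ζ : ℂ, ∀ a ∈ Icc (0:ℝ) 1, ∀ b ∈ Icc (0:ℝ) 1,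
      IntervalIntegrable (fun s => A (ζ - γ s) * F s (γ s) * deriv γ s) volume a b := by
    intro ζ a ha b hb
    refine (hfull ζ).mono_set ?_
    rw [uIcc_of_le (zero_le_one' ℝ)]
    exact uIcc_subset_Icc ha hb
  refine ⟨fun τ ζ => (∫ t in (0:ℝ)..1, A (ζ - (t : ℂ) * γ 0) * φ ((t : ℂ) * γ 0)) * γ 0
            + (∫ s in (0:ℝ)..τ, A (ζ - γ s) * F s (γ s) * deriv γ s)
            + (∫ t in (0:ℝ)..1,
                A (ζ - (γ τ + (t : ℂ) * (ζ - γ τ))) * F τ (γ τ + (t : ℂ) * (ζ - γ τ)))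
                * (ζ - γ τ), r, ?_, ?_, ?_, ?_⟩
  · intro τ hτ
    refine ⟨(hF τ hτ).1, ?_⟩
    refine DifferentiableOn.analyticOnNhd ?_ isOpen_ball
    refine DifferentiableOn.add (DifferentiableOn.add ?_ ?_) ?_
    · refine DifferentiableOn.mul_const ?_ _
      refine DifferentiableOn.mono ?_ (subset_univ _)
      refine param_aux isOpen_univ zero_le_one
        (fun ζ (t : ℝ) => A (ζ - (t : ℂ) * γ 0)) ?_ ?_ (fun t : ℝ => φ ((t : ℂ) * γ 0)) ?_
      · apply Continuous.continuousOn
        unfold Function.uncurry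
        fun_prop
      · intro s _
        exact (hA.comp (by fun_prop)).differentiableOn
      · apply ContinuousOn.intervalIntegrable
        rw [uIcc_of_le zero_le_one]
        refine hφ.continuousOn.comp (by fun_prop) fun t ht => ?_
        have := seg_mem (convex_ball (0:ℂ) R) (mem_ball_self hR) hγ0 ht
        simpa using this
    · have := param_aux isOpen_univ hτ.1 (fun ζ (s : ℝ) => A (ζ - γ s)) ?_ ?_
        (fun s => F s (γ s) * deriv γ s) ?_
      · simp only [← mul_assoc] at this
        exact this.mono (subset_univ _)
      · unfold Function.uncurry
        refine hAc.comp_continuousOn (continuousOn_fst.sub ?_)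
        exact hcont.comp continuousOn_snd fun x hx => ⟨hx.2.1, hx.2.2.trans hτ.2⟩
      · intro s _
        exact (hA.comp (by fun_prop)).differentiableOn
      · refine hh.mono_set ?_
        rw [uIcc_of_le (zero_le_one' ℝ)]
        exact uIcc_subset_Icc (by simp) hτ
    · exact segint_diff hA (hF τ hτ).2.differentiableOn
  · intro t ht
    obtain ⟨δ, hδ, h⟩ := hloc t ht
    refine ⟨δ, hδ, fun t' ht' htt' ζ hζ => ?_⟩
    have hbt := fun s (hs : s ∈ uIcc t t') => (h s (uIcc_subset_Icc ht ht' hs) (by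
      have := Set.abs_sub_left_of_mem_uIcc hs
      exact this.trans_lt htt'))
    have hfd : DifferentiableOn ℂ (fun ξ => A (ζ - ξ) * F t ξ) (ball (γ t) (r t)) :=
      (hA.comp (f := fun ξ => ζ - ξ) (by fun_prop)).differentiableOn.mul (hF t ht).2.differentiableOn
    obtain ⟨P, hP⟩ := hfd.isExactOn_ball
    have hγt' := (h t' ht' htt').1
    have e1 : (∫ s in t..t', A (ζ - γ s) * F s (γ s) * deriv γ s) = P (γ t') - P (γ t) := by
      refine MeasureTheory.integral_eq_of_hasDerivAt_off_countable (fun s => P (γ s)) _ hS ?_ ?_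
        (hfullsub ζ t ht t' ht')
      · intro s hs
        exact (hP _ (hbt s hs).1).continuousAt.comp_continuousWithinAt
          ((hcont s (uIcc_subset_Icc ht ht' hs)).mono (uIcc_subset_Icc ht ht'))
      · rintro s ⟨hs, hsS⟩
        have hs' : s ∈ uIcc t t' := ⟨hs.1.le, hs.2.le⟩
        rw [(hbt s hs').2.1]
        exact (hP _ (hbt s hs').1).comp_of_eq s (hder s (uIcc_subset_Icc ht ht' hs') hsS) rfl
    have e2 := seg_aux (convex_ball (γ t) (r t)) hP hfd.continuousOn
      (mem_ball_self (hF t ht).1) hζ.1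
    have e3 := seg_aux (convex_ball (γ t) (r t)) hP hfd.continuousOn hγt' hζ.1
    have e4 : (∫ u in (0:ℝ)..1,
          A (ζ - (γ t' + (u : ℂ) * (ζ - γ t'))) * F t' (γ t' + (u : ℂ) * (ζ - γ t')))
        = ∫ u in (0:ℝ)..1,
          A (ζ - (γ t' + (u : ℂ) * (ζ - γ t'))) * F t (γ t' + (u : ℂ) * (ζ - γ t')) := by
      refine intervalIntegral.integral_congr fun u hu => ?_
      rw [uIcc_of_le zero_le_one] at hu
      have hm := seg_mem ((convex_ball (γ t) (r t)).inter (convex_ball (γ t') (r t')))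
        ⟨hγt', mem_ball_self (hF t' ht').1⟩ hζ hu
      rw [(h t' ht' htt').2.2 hm]
    have e5 := intervalIntegral.integral_add_adjacent_intervals
      (hfullsub ζ 0 (by simp) t ht) (hfullsub ζ t ht t' ht')
    simp only
    rw [e4, e2, e3, ← e5, e1]
    ring
  · obtain ⟨ε, hε, hb⟩ := Metric.eventually_nhds_iff_ball.1 hF0
    filter_upwards [ball_mem_nhds _ hε, isOpen_ball.mem_nhds hγ0] with ζ h1 h2
    have hfd : DifferentiableOn ℂ (fun ξ => A (ζ - ξ) * φ ξ) (ball 0 R) :=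
      (hA.comp (f := fun ξ => ζ - ξ) (by fun_prop)).differentiableOn.mul hφ.differentiableOn
    obtain ⟨P, hP⟩ := hfd.isExactOn_ball
    have e1 := seg_aux (convex_ball 0 R) hP hfd.continuousOn (mem_ball_self hR) h2
    have e2 := seg_aux (convex_ball 0 R) hP hfd.continuousOn (mem_ball_self hR) hγ0
    have e3 := seg_aux (convex_ball 0 R) hP hfd.continuousOn hγ0 h2
    have e4 : (∫ u in (0:ℝ)..1,
          A (ζ - (γ 0 + (u : ℂ) * (ζ - γ 0))) * F 0 (γ 0 + (u : ℂ) * (ζ - γ 0)))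
        = ∫ u in (0:ℝ)..1,
          A (ζ - (γ 0 + (u : ℂ) * (ζ - γ 0))) * φ (γ 0 + (u : ℂ) * (ζ - γ 0)) := by
      refine intervalIntegral.integral_congr fun u hu => ?_
      rw [uIcc_of_le zero_le_one] at hu
      rw [hb _ (seg_mem (convex_ball (γ 0) ε) (mem_ball_self hε) h1 hu)]
    rw [conv_eq, e1, e4, e3, intervalIntegral.integral_same]
    simp only [zero_add, sub_zero] at e2
    rw [e2]
    ring
  · exact Eventually.of_forall fun _ => rfl

/-- If `A` is entire and `φ` is `Ω`-continuable, then `A ⋆ φ` is `Ω`-continuable,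
and its analytic continuation along a path `γ` of `ℂ∖Ω` starting close enough to
`0` is given by the explicit formula
`ζ ↦ ∫₀^{ζ₀} A(ζ-ξ)φ(ξ)dξ + ∫_γ A(ζ-ξ)φ(ξ)dξ + ∫_{ζ₁}^ζ A(ζ-ξ)(cont_γ φ)(ξ)dξ`,
where the middle integral uses the germs `cont_{γ_s} φ` (encoded by a locally
compatible family `F` of analytic elements continuing `φ` along `γ`). -/
theorem stmt5 (Ω : Set ℂ) (hne : Ω.Nonempty) (hcl : IsClosed Ω)
    (hdisc : DiscreteTopology Ω)
    (A : ℂ → ℂ) (hA : Differentiable ℂ A)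
    (φ : ℂ → ℂ) (hφ : OmegaCont Ω φ) :
    OmegaCont Ω (conv A φ) ∧
    ∃ R > 0, AnalyticOnNhd ℂ φ (Metric.ball 0 R) ∧
      (∀ ζ ∈ Metric.ball (0:ℂ) R, ζ ≠ 0 → ζ ∉ Ω) ∧
      ∀ γ : ℝ → ℂ, PiecewiseC1On γ 0 1 → γ 0 ∈ Metric.ball (0:ℂ) R → γ 0 ≠ 0 →
        (∀ t ∈ Set.Icc (0:ℝ) 1, γ t ∉ Ω) →
        ∀ (F : ℝ → ℂ → ℂ) (r : ℝ → ℝ),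
          (∀ t ∈ Set.Icc (0:ℝ) 1, 0 < r t ∧
            AnalyticOnNhd ℂ (F t) (Metric.ball (γ t) (r t))) →
          (∀ t ∈ Set.Icc (0:ℝ) 1, ∃ ε > 0, ∀ t' ∈ Set.Icc (0:ℝ) 1, |t' - t| < ε →
            Set.EqOn (F t) (F t')
              (Metric.ball (γ t) (r t) ∩ Metric.ball (γ t') (r t'))) →
          (∀ᶠ z in 𝓝 (γ 0), F 0 z = φ z) →
          ContAlong (conv A φ) γ 0 1 (fun ζ =>
            (∫ t in (0:ℝ)..1, A (ζ - (t : ℂ) * γ 0) * φ ((t : ℂ) * γ 0)) * γ 0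
            + (∫ s in (0:ℝ)..1, A (ζ - γ s) * F s (γ s) * deriv γ s)
            + (∫ t in (0:ℝ)..1,
                A (ζ - (γ 1 + (t : ℂ) * (ζ - γ 1))) * F 1 (γ 1 + (t : ℂ) * (ζ - γ 1)))
                * (ζ - γ 1)) := by
  obtain ⟨R, hR, han, hΩ, hc⟩ := hφ
  refine ⟨⟨R, hR, ?_, hΩ, ?_⟩, R, hR, han, hΩ, ?_⟩
  · refine DifferentiableOn.analyticOnNhd ?_ isOpen_ball
    have := segint_diff hA han.differentiableOn
    exact this.congr fun ζ _ => conv_eq A φ ζ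
  · intro γ hγ h0 h0' hγΩ
    obtain ⟨_, F, r, h1, h2, h3, _⟩ := hc γ hγ h0 h0' hγΩ
    exact ⟨_, main_aux hA hR han γ hγ h0 F r h1 h2 h3⟩
  · intro γ hγ h0 _ _ F r h1 h2 h3
    exact main_aux hA hR han γ hγ h0 F r h1 h2 h3
end
end

section
/- Let Ω be a non-empty closed discrete subset of ℂ and let H : [0,1] × J → ℂ be a symmetric Ω-homotopy (J a compact interval). Then there exists δ > 0 such that for every Ω-continuable germ φ̂ ∈ R̂_Ω and every (s,t) ∈ [0,1] × J, the holomorphic germ cont_{H_{t|s}} φ̂ at the point H_t(s), obtained by analytic continuation of φ̂ along the truncated path H_{t|s} := (H_t)|_{[0,s]}, has radius of convergence at least δ. -/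
open Set Metric Filter Topology intervalIntegral

noncomputable section

/-- A symmetric `Ω`-homotopy on `[0,1] × [a,b]`: a continuous map such that each
path `H_t = H ( · , t)` is piecewise `C¹`, starts at `0`, avoids `Ω` on `(0,1]`,
and is symmetric with respect to its midpoint: `H_t(1) - H_t(s) = H_t(1-s)`. -/
def SymmOmegaHomotopy (Ω : Set ℂ) (H : ℝ → ℝ → ℂ) (a b : ℝ) : Prop :=
  ContinuousOn (fun p : ℝ × ℝ => H p.1 p.2) (Set.Icc 0 1 ×ˢ Set.Icc a b) ∧
  ∀ t ∈ Set.Icc a b,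
    PiecewiseC1On (fun s => H s t) 0 1 ∧
    H 0 t = 0 ∧
    (∀ s ∈ Set.Ioc (0:ℝ) 1, H s t ∉ Ω) ∧
    (∀ s ∈ Set.Icc (0:ℝ) 1, H 1 t - H s t = H (1 - s) t)

/-- Germ form of an analytic family along a path. -/
def Elem (F : ℝ → ℂ → ℂ) (γ : ℝ → ℂ) (I : Set ℝ) : Prop :=
  (∀ t ∈ I, AnalyticAt ℂ (F t) (γ t)) ∧
    ∀ t ∈ I, ∀ᶠ t' in 𝓝[I] t, F t =ᶠ[𝓝 (γ t')] F t'

theorem Elem.comp {F : ℝ → ℂ → ℂ} {γ : ℝ → ℂ} {I J : Set ℝ} (h : Elem F γ I)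
    {φ : ℝ → ℝ} (hφ : ContinuousOn φ J) (hm : MapsTo φ J I) :
    Elem (fun t => F (φ t)) (fun t => γ (φ t)) J := by
  refine ⟨fun t ht => h.1 _ (hm ht), fun t ht => ?_⟩
  have : Tendsto φ (𝓝[J] t) (𝓝[I] (φ t)) :=
    tendsto_nhdsWithin_iff.2 ⟨hφ t ht, eventually_mem_nhdsWithin.mono fun x hx => hm hx⟩
  exact this.eventually (h.2 _ (hm ht))

theorem Elem.mono {F : ℝ → ℂ → ℂ} {γ : ℝ → ℂ} {I J : Set ℝ} (h : Elem F γ I) (hJ : J ⊆ I) :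
    Elem F γ J := h.comp (φ := fun t => t) continuousOn_id hJ

theorem Elem.congr {F : ℝ → ℂ → ℂ} {γ η : ℝ → ℂ} {I : Set ℝ} (h : Elem F γ I)
    (he : EqOn γ η I) : Elem F η I := by
  refine ⟨fun t ht => he ht ▸ h.1 t ht, fun t ht => ?_⟩
  filter_upwards [h.2 t ht, self_mem_nhdsWithin] with t' h1 h2
  rw [← he h2]; exact h1

theorem Elem.const {f : ℂ → ℂ} {γ : ℝ → ℂ} {I : Set ℝ}
    (h : ∀ t ∈ I, AnalyticAt ℂ f (γ t)) : Elem (fun _ => f) γ I :=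
  ⟨h, fun _ _ => Eventually.of_forall fun _ => EventuallyEq.rfl⟩

theorem Elem.contAlong {F : ℝ → ℂ → ℂ} {γ : ℝ → ℂ} {a b : ℝ} (h : Elem F γ (Icc a b))
    (hγ : ContinuousOn γ (Icc a b)) {f g : ℂ → ℂ} (hf : F a =ᶠ[𝓝 (γ a)] f)
    (hg : F b =ᶠ[𝓝 (γ b)] g) : ContAlong f γ a b g := by
  have h1 : ∀ t, ∃ r : ℝ, t ∈ Icc a b → 0 < r ∧ AnalyticOnNhd ℂ (F t) (ball (γ t) r) := by
    intro t
    by_cases ht : t ∈ Icc a b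
    · obtain ⟨r, hr, hr'⟩ := (h.1 t ht).exists_ball_analyticOnNhd
      exact ⟨r, fun _ => ⟨hr, hr'⟩⟩
    · exact ⟨0, fun h => absurd h ht⟩
  choose r hr using h1
  refine ⟨F, r, hr, fun t ht => ?_, hf, hg⟩
  have h2 : ∀ᶠ t' in 𝓝[Icc a b] t, γ t' ∈ ball (γ t) (r t) :=
    (hγ t ht).eventually (ball_mem_nhds _ (hr t ht).1)
  have h3 := h2.and (h.2 t ht)
  rw [eventually_nhdsWithin_iff, Metric.eventually_nhds_iff] at h3
  obtain ⟨ε, hε, h4⟩ := h3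
  refine ⟨ε, hε, fun t' ht' hd => ?_⟩
  obtain ⟨h5, h6⟩ := h4 (by rwa [Real.dist_eq]) ht'
  refine ((hr t ht).2.mono inter_subset_left).eqOn_of_preconnected_of_eventuallyEq
    ((hr t' ht').2.mono inter_subset_right)
    ((convex_ball _ _).inter (convex_ball _ _)).isPreconnected (z₀ := γ t') ?_ h6
  exact ⟨h5, mem_ball_self (hr t' ht').1⟩

theorem ContAlong.elem {γ : ℝ → ℂ} {a b : ℝ} {f g : ℂ → ℂ} (h : ContAlong f γ a b g)
    (hγ : ContinuousOn γ (Icc a b)) :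
    ∃ F, Elem F γ (Icc a b) ∧ F a =ᶠ[𝓝 (γ a)] f := by
  obtain ⟨F, r, h1, h2, h3, h4⟩ := h
  refine ⟨F, ⟨fun t ht => (h1 t ht).2 _ (mem_ball_self (h1 t ht).1), fun t ht => ?_⟩, h3⟩
  obtain ⟨ε, hε, h5⟩ := h2 t ht
  have h6 : ∀ᶠ t' in 𝓝[Icc a b] t, γ t' ∈ ball (γ t) (r t) :=
    (hγ t ht).eventually (ball_mem_nhds _ (h1 t ht).1)
  filter_upwards [h6, self_mem_nhdsWithin, mem_nhdsWithin_of_mem_nhds (ball_mem_nhds t hε)]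
    with t' ha hb hc
  refine (h5 t' hb (by rwa [mem_ball, Real.dist_eq] at hc)).eventuallyEq_of_mem ?_
  exact inter_mem (isOpen_ball.mem_nhds ha) (ball_mem_nhds _ (h1 t' hb).1)

theorem Elem.unique {F G : ℝ → ℂ → ℂ} {γ : ℝ → ℂ} {I : Set ℝ} (hF : Elem F γ I)
    (hG : Elem G γ I) (hγ : ContinuousOn γ I) (hI : IsPreconnected I) {s t : ℝ} (hs : s ∈ I)
    (ht : t ∈ I) (h : F s =ᶠ[𝓝 (γ s)] G s) : F t =ᶠ[𝓝 (γ t)] G t := by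
  have key := hI.induction₂
    (fun x y => (F x =ᶠ[𝓝 (γ x)] G x) ↔ (F y =ᶠ[𝓝 (γ y)] G y)) ?_
    (fun x y z _ _ _ h1 h2 => h1.trans h2) (fun x y _ _ h => h.symm) hs ht
  · exact key.1 h
  intro x hx
  obtain ⟨r, hr, hr'⟩ := (hF.1 x hx).exists_ball_analyticOnNhd
  obtain ⟨q, hq, hq'⟩ := (hG.1 x hx).exists_ball_analyticOnNhd
  have hb : ∀ᶠ y in 𝓝[I] x, γ y ∈ ball (γ x) (min r q) :=
    (hγ x hx).eventually (ball_mem_nhds _ (lt_min hr hq))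
  filter_upwards [hF.2 x hx, hG.2 x hx, hb] with y h1 h2 h3
  have ident : ∀ w ∈ ball (γ x) (min r q), F x =ᶠ[𝓝 w] G x →
      EqOn (F x) (G x) (ball (γ x) (min r q)) := fun w hw he =>
    (hr'.mono (ball_subset_ball (min_le_left _ _))).eqOn_of_preconnected_of_eventuallyEq
      (hq'.mono (ball_subset_ball (min_le_right _ _))) (convex_ball _ _).isPreconnected hw he
  constructor
  · intro h4
    have h5 := (ident _ (mem_ball_self (lt_min hr hq)) h4).eventuallyEq_of_mem
      (isOpen_ball.mem_nhds h3)
    exact h1.symm.trans (h5.trans h2)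
  · intro h4
    exact (ident _ h3 (h1.trans (h4.trans h2.symm))).eventuallyEq_of_mem
      (ball_mem_nhds _ (lt_min hr hq))

theorem Elem.concat {F G : ℝ → ℂ → ℂ} {γ : ℝ → ℂ} {a b c : ℝ} 
    (hF : Elem F γ (Icc a b)) (hG : Elem G γ (Icc b c)) (hab : a ≤ b) (hbc : b ≤ c)
    (hγ : ContinuousOn γ (Icc a c)) (h : F b =ᶠ[𝓝 (γ b)] G b) :
    Elem (fun t => if t ≤ b then F t else G t) γ (Icc a c) := by
  constructor
  · intro t ht
    by_cases hb : t ≤ b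
    · simp only [hb, if_true]; exact hF.1 t ⟨ht.1, hb⟩
    · simp only [hb, if_false]; exact hG.1 t ⟨(not_le.1 hb).le, ht.2⟩
  · intro t ht
    rcases lt_trichotomy t b with hb | hb | hb
    · have := hF.2 t ⟨ht.1, hb.le⟩
      rw [eventually_nhdsWithin_iff] at this ⊢
      filter_upwards [this, Iio_mem_nhds hb] with t' h1 h2 h3
      have h2' : t' ≤ b := le_of_lt h2
      simp only [hb.le, h2', if_true]
      exact h1 ⟨h3.1, h2'⟩
    · subst hb
      have h1 := hF.2 t ⟨hab, le_rfl⟩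
      have h2 := hG.2 t ⟨le_rfl, hbc⟩
      have h3 : ∀ᶠ t' in 𝓝[Icc a c] t, F t =ᶠ[𝓝 (γ t')] G t :=
        (hγ t ht).eventually (eventually_eventually_nhds.2 h)
      rw [eventually_nhdsWithin_iff] at h1 h2 h3 ⊢
      filter_upwards [h1, h2, h3] with t' h1 h2 h3 h4
      by_cases h5 : t' ≤ t
      · simp only [h5, le_refl, if_true]; exact h1 ⟨h4.1, h5⟩
      · simp only [h5, le_refl, if_true, if_false]
        exact (h3 h4).trans (h2 ⟨(not_le.1 h5).le, h4.2⟩)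
    · have := hG.2 t ⟨hb.le, ht.2⟩
      rw [eventually_nhdsWithin_iff] at this ⊢
      filter_upwards [this, Ioi_mem_nhds hb] with t' h1 h2 h3
      have h2' : ¬ t' ≤ b := not_le.2 h2
      simp only [not_le.2 hb, h2', if_false]
      exact h1 ⟨(not_le.1 h2').le, h3.2⟩

theorem disc_lemma {f : ℂ → ℂ} {c : ℂ} {ρ : ℝ} (hf : AnalyticAt ℂ f c) (hρ : 0 < ρ)
    (h : ∀ z ∈ ball c ρ, z ≠ c → ∃ F, Elem F (fun u : ℝ => c + (u : ℂ) * (z - c)) (Icc 0 1) ∧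
      F 0 =ᶠ[𝓝 c] f) :
    ∃ g, AnalyticOnNhd ℂ g (ball c ρ) ∧ g =ᶠ[𝓝 c] f := by
  obtain ⟨p, hp⟩ := hf
  have hpr : 0 < p.radius := hp.radius_pos
  obtain ⟨Φ, hΦ⟩ : ∃ Φ, HasFPowerSeriesOnBall Φ p c p.radius := by
    have := (p.hasFPowerSeriesOnBall hpr).comp_sub c
    rw [zero_add] at this
    exact ⟨_, this⟩
  have hΦf : Φ =ᶠ[𝓝 c] f := by
    filter_upwards [hΦ.hasFPowerSeriesAt.eventually_hasSum_sub, hp.eventually_hasSum_sub]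
      with z h1 h2 using h1.unique h2
  by_cases hle : ENNReal.ofReal ρ ≤ p.radius
  · refine ⟨Φ, hΦ.analyticOnNhd.mono ?_, hΦf⟩
    rw [← Metric.eball_ofReal]
    exact Metric.eball_subset_eball hle
  exfalso
  rw [not_le] at hle
  obtain ⟨r, hr⟩ : ∃ r : NNReal, (r : ENNReal) = p.radius :=
    ⟨p.radius.toNNReal, ENNReal.coe_toNNReal (ne_top_of_lt hle)⟩
  rw [← hr] at hΦ hle hpr
  have hr0 : (0 : ℝ) < r := by exact_mod_cast hpr
  have hrρ : (r : ℝ) < ρ := by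
    rw [← ENNReal.ofReal_coe_nnreal] at hle
    exact (ENNReal.ofReal_lt_ofReal_iff hρ).1 hle
  have hΦa : AnalyticOnNhd ℂ Φ (ball c r) := by
    have := hΦ.analyticOnNhd
    rwa [Metric.eball_coe] at this
  -- local extensions at boundary points
  have hloc : ∀ z, ∃ (G : ℂ → ℂ) (ε : ℝ), z ∈ sphere c r → 0 < ε ∧
      AnalyticOnNhd ℂ G (ball z ε) ∧ EqOn G Φ (ball z ε ∩ ball c r) := by
    intro z
    by_cases hz : z ∈ sphere c r
    swap
    · exact ⟨0, 0, fun h => absurd h hz⟩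
    have hz' : ‖z - c‖ = r := by rwa [mem_sphere, dist_eq_norm] at hz
    have hzc : z ≠ c := by
      rintro rfl; simp at hz'; exact hr0.ne' (by exact_mod_cast hz'.symm)
    obtain ⟨F, hF, hF0⟩ := h z (by rw [mem_ball, dist_eq_norm, hz']; exact hrρ) hzc
    set γ : ℝ → ℂ := fun u : ℝ => c + (u : ℂ) * (z - c) with hγd
    have hγ : Continuous γ := by fun_prop
    have hγ1 : γ 1 = z := by simp [hγd]
    have hγ0 : γ 0 = c := by simp [hγd]
    have hin : ∀ u ∈ Ico (0:ℝ) 1, γ u ∈ ball c r := by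
      intro u hu
      rw [mem_ball, dist_eq_norm]
      simp only [hγd, add_sub_cancel_left, norm_mul, hz', Complex.norm_real, Real.norm_eq_abs,
        abs_of_nonneg hu.1]
      nlinarith [hu.2]
    obtain ⟨ε, hε, hε'⟩ := (hF.1 1 ⟨zero_le_one, le_rfl⟩).exists_ball_analyticOnNhd
    rw [hγ1] at hε'
    refine ⟨F 1, ε, fun _ => ⟨hε, hε', ?_⟩⟩
    have e1 := hF.2 1 ⟨zero_le_one, le_rfl⟩
    have e2 : ∀ᶠ u in 𝓝[Icc 0 1] (1:ℝ), γ u ∈ ball z ε :=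
      hγ.continuousAt.continuousWithinAt.eventually (by rw [hγ1]; exact ball_mem_nhds _ hε)
    have e3 := e1.and e2
    rw [eventually_nhdsWithin_iff, Metric.eventually_nhds_iff] at e3
    obtain ⟨η, hη, e4⟩ := e3
    obtain ⟨u, hu0, hu1⟩ := exists_between (show max 0 (1 - η) < (1:ℝ) by
      rw [max_lt_iff]; constructor <;> linarith)
    rw [max_lt_iff] at hu0
    obtain ⟨e5, e6⟩ := @e4 u (by rw [Real.dist_eq, abs_lt]; constructor <;> linarith)
      ⟨hu0.1.le, hu1.le⟩
    have e7 : F u =ᶠ[𝓝 (γ u)] Φ := by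
      refine (hF.mono Ico_subset_Icc_self).unique
        (Elem.const (fun t ht => hΦa _ (hin t ht))) hγ.continuousOn isPreconnected_Ico
        (s := 0) ⟨le_rfl, one_pos⟩ ⟨hu0.1.le, hu1⟩ ?_
      rw [hγ0]; exact hF0.trans hΦf.symm
    exact (hε'.mono inter_subset_left).eqOn_of_preconnected_of_eventuallyEq
      (hΦa.mono inter_subset_right) ((convex_ball _ _).inter (convex_ball _ _)).isPreconnected
      ⟨e6, hin u ⟨hu0.1.le, hu1⟩⟩ (e5.trans e7)
  choose G ε hG using hloc
  have hcons : ∀ z ∈ sphere c r, ∀ z' ∈ sphere c r,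
      EqOn (G z) (G z') (ball z (ε z) ∩ ball z' (ε z')) := by
    intro z hz z' hz' w hw
    by_cases hne : z = z'
    · rw [hne]
    obtain ⟨a1, a2, a3⟩ := hG z hz
    obtain ⟨b1, b2, b3⟩ := hG z' hz'
    have hd : dist z z' < ε z + ε z' := by
      have := dist_triangle z w z'
      have h1 := hw.1
      have h2 := hw.2
      rw [mem_ball] at h1 h2
      rw [dist_comm] at h1
      linarith
    have hs : 0 < ε z + ε z' := by linarith
    set A := ε z' / (ε z + ε z') with hA
    set B := ε z / (ε z + ε z') with hB
    have hA0 : 0 < A := by positivity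
    have hB0 : 0 < B := by positivity
    have hAB : A + B = 1 := by rw [hA, hB]; field_simp; ring
    have hq : A • z + B • z' ∈ ball c r :=
      combo_mem_ball_of_ne (sphere_subset_closedBall hz) (sphere_subset_closedBall hz') hne
        hA0 hB0 hAB
    have hA' : (A : ℂ) = 1 - B := by rw [eq_sub_iff_add_eq]; exact_mod_cast hAB
    have hq1 : A • z + B • z' ∈ ball z (ε z) := by
      have : A • z + B • z' - z = B * (z' - z) := by
        simp only [Complex.real_smul, hA']; ring
      rw [mem_ball, dist_eq_norm, this, norm_mul, Complex.norm_real, Real.norm_eq_abs,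
        abs_of_pos hB0, ← dist_eq_norm, dist_comm]
      calc B * dist z z' < B * (ε z + ε z') := by gcongr
        _ = ε z := by rw [hB]; field_simp
    have hB' : (B : ℂ) = 1 - A := by rw [hA']; ring
    have hq2 : A • z + B • z' ∈ ball z' (ε z') := by
      have : A • z + B • z' - z' = A * (z - z') := by
        simp only [Complex.real_smul, hB']; ring
      rw [mem_ball, dist_eq_norm, this, norm_mul, Complex.norm_real, Real.norm_eq_abs,
        abs_of_pos hA0, ← dist_eq_norm]
      calc A * dist z z' < A * (ε z + ε z') := by gcongr
        _ = ε z' := by rw [hA]; field_simp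
    refine (a2.mono inter_subset_left).eqOn_of_preconnected_of_eventuallyEq
      (b2.mono inter_subset_right) ((convex_ball _ _).inter (convex_ball _ _)).isPreconnected
      (z₀ := A • z + B • z') ⟨hq1, hq2⟩ ?_ hw
    have c1 := a3.eventuallyEq_of_mem ((isOpen_ball.inter isOpen_ball).mem_nhds ⟨hq1, hq⟩)
    have c2 := b3.eventuallyEq_of_mem ((isOpen_ball.inter isOpen_ball).mem_nhds ⟨hq2, hq⟩)
    exact c1.trans c2.symm
  classical
  let K : ℂ → ℂ := fun w =>
    if hw : ∃ z, z ∈ sphere c r ∧ w ∈ ball z (ε z) then G hw.choose w else Φ w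
  have hK1 : ∀ z ∈ sphere c r, EqOn K (G z) (ball z (ε z)) := by
    intro z hz w hw
    have hex : ∃ z, z ∈ sphere c r ∧ w ∈ ball z (ε z) := ⟨z, hz, hw⟩
    simp only [K, dif_pos hex]
    exact hcons _ hex.choose_spec.1 z hz ⟨hex.choose_spec.2, hw⟩
  have hK2 : EqOn K Φ (ball c r) := by
    intro w hw
    by_cases hex : ∃ z, z ∈ sphere c r ∧ w ∈ ball z (ε z)
    · obtain ⟨z, hz, hwz⟩ := hex
      rw [hK1 z hz hwz]
      exact (hG z hz).2.2 ⟨hwz, hw⟩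
    · simp only [K, dif_neg hex]
  have hKa : ∀ w ∈ closedBall c (r : ℝ), AnalyticAt ℂ K w := by
    intro w hw
    rcases (mem_closedBall.1 hw).lt_or_eq with h1 | h1
    · exact (hΦa w h1).congr (hK2.eventuallyEq_of_mem (isOpen_ball.mem_nhds h1)).symm
    · obtain ⟨a1, a2, a3⟩ := hG w h1
      exact (a2 w (mem_ball_self a1)).congr
        ((hK1 w h1).eventuallyEq_of_mem (ball_mem_nhds _ a1)).symm
  obtain ⟨δ, hδ, hsub⟩ := (isCompact_closedBall c (r : ℝ)).exists_thickening_subset_open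
    (isOpen_analyticAt ℂ K) hKa
  rw [thickening_closedBall hδ hr0.le] at hsub
  let R : NNReal := ⟨r + δ / 2, by positivity⟩
  have hR : (R : ℝ) = r + δ / 2 := rfl
  have hdiff : DifferentiableOn ℂ K (closedBall c R) := by
    intro w hw
    refine (hsub ?_ : AnalyticAt ℂ K w).differentiableAt.differentiableWithinAt
    rw [mem_closedBall, hR] at hw
    rw [mem_ball]; linarith
  have hps := hdiff.hasFPowerSeriesOnBall (by rw [← NNReal.coe_pos, hR]; positivity)
  have hpe : cauchyPowerSeries K c R = p :=
    hps.hasFPowerSeriesAt.eq_formalMultilinearSeries_of_eventually hΦ.hasFPowerSeriesAt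
      (hK2.eventuallyEq_of_mem (ball_mem_nhds _ hr0))
  have hfin := hps.r_le
  rw [hpe, ← hr] at hfin
  have : (R : ℝ) ≤ r := by exact_mod_cast hfin
  rw [hR] at this
  linarith

theorem part_mem {u : ℕ → ℝ} {n : ℕ} (hu : ∀ i < n, u i ≤ u (i + 1)) :
    ∀ i ≤ n, u 0 ≤ u i ∧ u i ≤ u n := by
  intro i hi
  constructor
  · induction i with
    | zero => exact le_rfl
    | succ k ih => exact (ih (by omega)).trans (hu k (by omega))
  · induction hi using Nat.decreasingInduction with
    | self => exact le_rfl
    | of_succ k hk ih => exact (hu k hk).trans ih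

theorem PiecewiseC1On.congr {γ η : ℝ → ℂ} {a b : ℝ} (h : PiecewiseC1On γ a b)
    (he : EqOn η γ (Icc a b)) : PiecewiseC1On η a b := by
  obtain ⟨hc, n, u, h0, hn, hu, hd⟩ := h
  refine ⟨hc.congr he, n, u, h0, hn, hu, fun i hi => (hd i hi).congr fun x hx => he ?_⟩
  have h1 := (part_mem hu i (by omega)).1
  have h2 := (part_mem hu (i + 1) (by omega)).2
  rw [h0] at h1
  rw [hn] at h2
  exact ⟨h1.trans hx.1, hx.2.trans h2⟩

theorem PiecewiseC1On.restrict {γ : ℝ → ℂ} {a b c d : ℝ} (h : PiecewiseC1On γ a b)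
    (hac : a ≤ c) (hcd : c ≤ d) (hdb : d ≤ b) : PiecewiseC1On γ c d := by
  obtain ⟨hc, n, u, h0, hn, hu, hd⟩ := h
  refine ⟨hc.mono (Icc_subset_Icc hac hdb), n, fun i => max c (min d (u i)), ?_, ?_, ?_, ?_⟩
  · simp only [h0]
    exact max_eq_left ((min_le_right _ _).trans hac)
  · simp only [hn, min_eq_left hdb, max_eq_right hcd]
  · intro i hi
    exact max_le_max le_rfl (min_le_min le_rfl (hu i hi))
  · intro i hi
    by_cases hlt : max c (min d (u i)) < max c (min d (u (i + 1)))
    · refine (hd i hi).mono (Icc_subset_Icc ?_ ?_)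
      · by_contra hcon
        rw [not_le] at hcon
        simp only at hcon
        have h1 : d ≤ u i := by
          by_contra h2
          rw [not_le] at h2
          rw [min_eq_right h2.le] at hcon
          exact absurd (le_max_right c (u i)) (not_le.2 hcon)
        have h2 : d ≤ u (i + 1) := h1.trans (hu i hi)
        rw [min_eq_left h1, min_eq_left h2] at hlt
        exact lt_irrefl _ hlt
      · by_contra hcon
        rw [not_le, lt_max_iff] at hcon
        rcases hcon with h1 | h1
        · have e1 : min d (u (i + 1)) ≤ c := (min_le_right _ _).trans h1.le
          rw [max_eq_left e1] at hlt
          exact absurd (le_max_left c (min d (u i))) (not_le.2 hlt)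
        · exact absurd (min_le_right d (u (i + 1))) (not_le.2 h1)
    · refine (contDiffOn_const (c := γ (max c (min d (u i))))).congr fun x hx => ?_
      simp only at hx
      rw [le_antisymm (hx.2.trans (not_lt.1 hlt)) hx.1]

theorem PiecewiseC1On.affine {γ : ℝ → ℂ} {a b : ℝ} (h : PiecewiseC1On γ a b) (hab : a < b) :
    PiecewiseC1On (fun x => γ (a + x * (b - a))) 0 1 := by
  obtain ⟨hc, n, u, h0, hn, hu, hd⟩ := h
  have hp : 0 < b - a := sub_pos.2 hab
  refine ⟨?_, n, fun i => (u i - a) / (b - a), by simp [h0], by simp [hn, hp.ne'], ?_, ?_⟩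
  · refine hc.comp (by fun_prop) fun x hx => ?_
    constructor <;> nlinarith [hx.1, hx.2]
  · intro i hi
    have := hu i hi
    simp only
    gcongr
  · intro i hi
    refine (hd i hi).comp (by fun_prop) fun x hx => ?_
    simp only [mem_Icc, div_le_iff₀ hp, le_div_iff₀ hp] at hx
    constructor <;> linarith [hx.1, hx.2]

theorem PiecewiseC1On.append {γ : ℝ → ℂ} {a b c : ℝ} (h : PiecewiseC1On γ a b) (hab : a ≤ b)
    (hbc : b ≤ c) (h' : ContDiffOn ℝ 1 γ (Icc b c)) : PiecewiseC1On γ a c := by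
  obtain ⟨hc, n, u, h0, hn, hu, hd⟩ := h
  refine ⟨?_, n + 1, fun i => if i ≤ n then u i else c, by simp [h0], by simp, ?_, ?_⟩
  · rw [← Icc_union_Icc_eq_Icc hab hbc]
    exact hc.union_of_isClosed h'.continuousOn isClosed_Icc isClosed_Icc
  · intro i hi
    rcases Nat.lt_succ_iff_lt_or_eq.1 hi with h1 | h1
    · simp only [h1.le, Nat.succ_le_of_lt h1, if_true]; exact hu i h1
    · subst h1; simp [hn, hbc]
  · intro i hi
    rcases Nat.lt_succ_iff_lt_or_eq.1 hi with h1 | h1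
    · simp only [h1.le, Nat.succ_le_of_lt h1, if_true]; exact hd i h1
    · subst h1; simpa [hn] using h'

/-- `Ω`-continuable germs are continuable along paths starting at `0` that avoid `Ω` afterwards. -/
theorem OmegaCont.elem {Ω : Set ℂ} {f : ℂ → ℂ} (hf : OmegaCont Ω f) {γ : ℝ → ℂ} {b : ℝ}
    (hb : 0 < b) (hγ : PiecewiseC1On γ 0 b) (h0 : γ 0 = 0) (hΩ : ∀ t ∈ Ioc 0 b, γ t ∉ Ω) :
    ∃ F, Elem F γ (Icc 0 b) ∧ F 0 =ᶠ[𝓝 0] f := by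
  obtain ⟨R, hR, hfa, -, hfc⟩ := hf
  by_cases hall : ∀ t ∈ Icc 0 b, γ t ∈ ball (0:ℂ) R
  · exact ⟨fun _ => f, Elem.const fun t ht => hfa _ (hall t ht), EventuallyEq.rfl⟩
  push Not at hall
  obtain ⟨s1, hs1, hs1R⟩ := hall
  rw [mem_ball, dist_zero_right, not_lt] at hs1R
  have hcn : ContinuousOn (fun t => ‖γ t‖) (Icc 0 b) := hγ.1.norm
  have hcomp : IsCompact (Icc 0 b ∩ (fun t => ‖γ t‖) ⁻¹' Ici (R / 2)) :=
    isCompact_Icc.of_isClosed_subset (hcn.preimage_isClosed_of_isClosed isClosed_Icc isClosed_Ici)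
      inter_subset_left
  obtain ⟨s0, ⟨hs0, hs0R⟩, hleast⟩ := hcomp.exists_isLeast
    ⟨s1, hs1, by simp only [mem_preimage, mem_Ici]; linarith⟩
  simp only [mem_preimage, mem_Ici] at hs0R
  have hs0e : ‖γ s0‖ ≤ R / 2 := by
    obtain ⟨x, hx, hxe⟩ := intermediate_value_Icc hs0.1
      (hcn.mono (Icc_subset_Icc le_rfl hs0.2)) (show R / 2 ∈ Icc ‖γ 0‖ ‖γ s0‖ by
        rw [h0, norm_zero]; exact ⟨by positivity, hs0R⟩)
    have : s0 ≤ x := hleast ⟨⟨hx.1, hx.2.trans hs0.2⟩, by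
      simp only [mem_preimage, mem_Ici]; exact hxe.ge⟩
    rw [le_antisymm this hx.2]; exact hxe.le
  have hs0pos : 0 < s0 := by
    rcases hs0.1.lt_or_eq with h | h
    · exact h
    · rw [← h, h0, norm_zero] at hs0R; linarith
  have hs0b : s0 < b := by
    have : s0 ≤ s1 := hleast ⟨hs1, by simp only [mem_preimage, mem_Ici]; linarith⟩
    rcases (this.trans hs1.2).lt_or_eq with h | h
    · exact h
    · have : s1 = s0 := le_antisymm (hs1.2.trans h.ge) this
      rw [this] at hs1R; linarith
  have hp : 0 < b - s0 := sub_pos.2 hs0b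
  have hpc := (hγ.restrict hs0.1 hs0b.le le_rfl).affine hs0b
  obtain ⟨g, hg⟩ := hfc _ hpc (by
      simp only [zero_mul, add_zero, mem_ball, dist_zero_right]; linarith)
    (by simp only [zero_mul, add_zero]; intro h; rw [h, norm_zero] at hs0R; linarith)
    (fun t ht => hΩ _ ⟨by nlinarith [ht.1], by nlinarith [ht.2]⟩)
  obtain ⟨G, hG, hG0⟩ := hg.elem hpc.1
  have hG' := hG.comp (φ := fun t => (t - s0) / (b - s0)) (J := Icc s0 b) (by fun_prop)
    (fun t ht => ⟨div_nonneg (by linarith [ht.1]) hp.le, by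
      rw [div_le_one hp]; linarith [ht.2]⟩)
  replace hG' := hG'.congr (η := γ) (fun t _ => by
    simp only; congr 1; field_simp; ring)
  have hF : Elem (fun _ => f) γ (Icc 0 s0) := Elem.const fun t ht => hfa _ (by
    rw [mem_ball, dist_zero_right]
    by_contra hcon
    rw [not_lt] at hcon
    have : s0 ≤ t := hleast ⟨⟨ht.1, ht.2.trans hs0.2⟩, by
      simp only [mem_preimage, mem_Ici]; linarith⟩
    rw [le_antisymm ht.2 this] at hcon
    linarith)
  refine ⟨_, hF.concat hG' hs0.1 hs0b.le hγ.1 ?_, ?_⟩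
  · simp only [zero_mul, add_zero] at hG0
    simp only [sub_self, zero_div]
    exact hG0.symm
  · simp only [hs0.1, if_true]; exact EventuallyEq.rfl

theorem exists_rho {Ω : Set ℂ} (hcl : IsClosed Ω) (hdisc : DiscreteTopology Ω) :
    ∃ ρ > 0, ∀ z ∈ ball (0:ℂ) ρ, z ≠ 0 → z ∉ Ω := by
  by_cases h0 : (0:ℂ) ∈ Ω
  · obtain ⟨ρ, hρ, h⟩ := exists_ball_inter_eq_singleton_of_mem_discrete
      (isDiscrete_iff_discreteTopology.2 hdisc) h0
    refine ⟨ρ, hρ, fun z hz hz0 hzΩ => hz0 ?_⟩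
    have : z ∈ ball (0:ℂ) ρ ∩ Ω := ⟨hz, hzΩ⟩
    rw [h] at this
    exact this
  · obtain ⟨ρ, hρ, h⟩ := Metric.isOpen_iff.1 hcl.isOpen_compl 0 h0
    exact ⟨ρ, hρ, fun z hz _ => h hz⟩

/-- For a symmetric `Ω`-homotopy `H` on `[0,1] × [a,b]`, there is a `δ > 0` such
that for every `Ω`-continuable germ `f` and every `(s,t)`, the germ of `f`
continued along the truncated path `H_{t|s}` has radius of convergence `≥ δ`. -/
theorem stmt6 (Ω : Set ℂ) (hne : Ω.Nonempty) (hcl : IsClosed Ω)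
    (hdisc : DiscreteTopology Ω)
    (a b : ℝ) (hab : a ≤ b) (H : ℝ → ℝ → ℂ)
    (hH : SymmOmegaHomotopy Ω H a b) :
    ∃ δ > 0, ∀ f : ℂ → ℂ, OmegaCont Ω f →
      ∀ s ∈ Set.Icc (0:ℝ) 1, ∀ t ∈ Set.Icc a b,
        ∃ g : ℂ → ℂ, ContAlong f (fun u => H u t) 0 s g ∧
          AnalyticOnNhd ℂ g (Metric.ball (H s t) δ) := by
  obtain ⟨hHc, hHt⟩ := hH
  obtain ⟨ρ, hρ, hρΩ⟩ := exists_rho hcl hdisc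
  -- small `s`
  have huc := (isCompact_Icc.prod isCompact_Icc).uniformContinuousOn_of_continuous hHc
  rw [Metric.uniformContinuousOn_iff] at huc
  obtain ⟨d, hd, hd'⟩ := huc (ρ / 2) (by positivity)
  have hsmall : ∀ s ∈ Icc (0:ℝ) 1, s < d → ∀ t ∈ Icc a b, ‖H s t‖ < ρ / 2 := by
    intro s hs hsd t ht
    have := hd' (s, t) ⟨hs, ht⟩ (0, t) ⟨⟨le_rfl, zero_le_one⟩, ht⟩ (by
      rw [Prod.dist_eq, dist_self, Real.dist_eq, sub_zero, abs_of_nonneg hs.1]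
      simp [hsd, hd])
    simp only [(hHt t ht).2.1, dist_zero_right] at this
    exact this
  -- large `s`
  have hKc : IsCompact ((fun p : ℝ × ℝ => H p.1 p.2) '' (Icc d 1 ×ˢ Icc a b)) :=
    (isCompact_Icc.prod isCompact_Icc).image_of_continuousOn
      (hHc.mono (prod_mono (Icc_subset_Icc hd.le le_rfl) le_rfl))
  obtain ⟨δ, hδ, hδsub⟩ := hKc.exists_thickening_subset_open hcl.isOpen_compl (by
    rintro _ ⟨⟨s, t⟩, ⟨hs, ht⟩, rfl⟩
    exact (hHt t ht).2.2.1 s ⟨hd.trans_le hs.1, hs.2⟩)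
  refine ⟨min δ (ρ / 2), by positivity, fun f hf s hs t ht => ?_⟩
  obtain ⟨hpc, hH0, hHΩ, -⟩ := hHt t ht
  have hcont : ContinuousOn (fun u => H u t) (Icc 0 s) :=
    hpc.1.mono (Icc_subset_Icc le_rfl hs.2)
  rcases lt_or_ge s d with hsd | hsd
  · -- `f` extends to the disc of radius `ρ`
    have hf0 : AnalyticAt ℂ f 0 := by
      obtain ⟨R, hR, hfa, -⟩ := hf
      exact hfa 0 (mem_ball_self hR)
    obtain ⟨g, hg, hgf⟩ := disc_lemma hf0 hρ (fun z hz hz0 => by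
      refine hf.elem one_pos ?_ (by simp) ?_
      · have hC : ContDiff ℝ 1 (fun u : ℝ => (0:ℂ) + (u : ℂ) * (z - 0)) :=
          contDiff_const.add (Complex.ofRealCLM.contDiff.mul contDiff_const)
        exact ⟨hC.continuous.continuousOn, 1, fun i => i, by simp, by simp,
          fun i _ => by simp, fun i _ => hC.contDiffOn⟩
      · intro u hu
        refine hρΩ _ ?_ ?_
        · simp only [zero_add, sub_zero, mem_ball, dist_zero_right, norm_mul, Complex.norm_real,
            Real.norm_eq_abs, abs_of_pos hu.1] at hz ⊢
          nlinarith [hu.2, norm_nonneg z]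
        · simp only [zero_add, sub_zero]
          exact mul_ne_zero (by exact_mod_cast hu.1.ne') hz0)
    refine ⟨g, Elem.contAlong (F := fun _ => g) (Elem.const fun u hu => hg _ ?_) hcont ?_
      EventuallyEq.rfl, hg.mono ?_⟩
    · rw [mem_ball, dist_zero_right]
      linarith [hsmall u ⟨hu.1, hu.2.trans hs.2⟩ (hu.2.trans_lt hsd) t ht]
    · simp only [hH0]; exact hgf
    · refine ball_subset_ball' ?_
      rw [dist_zero_right]
      linarith [hsmall s hs hsd t ht, min_le_right δ (ρ / 2)]
  · have hs0 : 0 < s := hd.trans_le hsd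
    have hpcs := hpc.restrict le_rfl hs0.le hs.2
    obtain ⟨F, hF, hF0⟩ := hf.elem hs0 hpcs hH0
      (fun u hu => hHΩ u ⟨hu.1, hu.2.trans hs.2⟩)
    have hss : s ∈ Icc 0 s := ⟨hs0.le, le_rfl⟩
    obtain ⟨g, hg, hgF⟩ := disc_lemma (c := H s t) (hF.1 s hss) hδ (fun z hz hzc => by
      let η : ℝ → ℂ := fun u => if u ≤ s then H u t else H s t + ((u - s : ℝ) : ℂ) * (z - H s t)
      have hη1 : EqOn η (fun u => H u t) (Icc 0 s) := fun u hu => by simp [η, hu.2]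
      have hη2 : EqOn η (fun u => H s t + ((u - s : ℝ) : ℂ) * (z - H s t)) (Icc s (s + 1)) := by
        intro u hu
        by_cases hus : u ≤ s
        · have : u = s := le_antisymm hus hu.1
          subst this; simp [η]
        · simp [η, hus]
      have hC : ContDiff ℝ 1 (fun u : ℝ => H s t + ((u - s : ℝ) : ℂ) * (z - H s t)) :=
        contDiff_const.add ((Complex.ofRealCLM.contDiff.comp
          (contDiff_id.sub contDiff_const)).mul contDiff_const)
      have hηp : PiecewiseC1On η 0 (s + 1) :=
        (hpcs.congr hη1).append hs0.le (by linarith) (hC.contDiffOn.congr hη2)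
      obtain ⟨E, hE, hE0⟩ := hf.elem (by linarith) hηp
        (by rw [hη1 ⟨le_rfl, hs0.le⟩]; exact hH0) (fun u hu => by
          by_cases hus : u ≤ s
          · rw [hη1 ⟨hu.1.le, hus⟩]
            exact hHΩ u ⟨hu.1, hus.trans hs.2⟩
          · rw [not_le] at hus
            rw [hη2 ⟨hus.le, hu.2⟩]
            refine hδsub ?_
            rw [mem_thickening_iff]
            refine ⟨H s t, ⟨(s, t), ⟨⟨hsd, hs.2⟩, ht⟩, rfl⟩, ?_⟩
            rw [mem_ball, dist_eq_norm] at hz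
            simp only [dist_eq_norm, add_sub_cancel_left, norm_mul, Complex.norm_real,
              Real.norm_eq_abs]
            rw [abs_of_pos (by linarith)]
            nlinarith [hu.2, norm_nonneg (z - H s t)])
      have hE1 : Elem E (fun u => H u t) (Icc 0 s) :=
        (hE.mono (Icc_subset_Icc le_rfl (by linarith))).congr hη1
      have hEF : E s =ᶠ[𝓝 (H s t)] F s :=
        hE1.unique hF hcont isPreconnected_Icc (s := 0) ⟨le_rfl, hs0.le⟩ hss (by
          simp only [hH0]; exact hE0.trans hF0.symm)
      have hE2 := ((hE.mono (Icc_subset_Icc hs0.le le_rfl)).congr hη2).comp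
        (φ := fun u => s + u) (J := Icc 0 1) (by fun_prop)
        (fun u hu => ⟨by linarith [hu.1], by linarith [hu.2]⟩)
      refine ⟨_, hE2.congr fun u _ => by simp, ?_⟩
      simp only [add_zero]; exact hEF)
    refine ⟨g, hF.contAlong hcont ?_ hgF.symm, hg.mono (ball_subset_ball (min_le_left _ _))⟩
    simp only [hH0]; exact hF0
end
end
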